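/- arXiv:1910.00485 — 2 statements merged into one kernel-verified Lean document; each statement's English description precedes it below -/
import Mathlib

section
/- There is a constant K > 0 such that almost all posets P on N labelled elements satisfy (log 2)/3 ≤ c_⋆(P) ≤ (log 2)/3 + K/log N; that is, letting Π_N denote the set of all partial orders on the set [N], the proportion |{ ≤ ∈ Π_N : (log 2)/3 ≤ c_⋆(([N], ≤)) ≤ (log 2)/3 + K/log N }| / |Π_N| tends to 1 as N → ∞. -/
open Classical in
/-- The finset of all antichains (including the empty antichain) of a finite poset `P`. -/
noncomputable def antichains (P : Type*) [Fintype P] [PartialOrder P] : Finset (Finset P) :=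
  Finset.univ.filter (fun A => IsAntichain (· ≤ ·) (A : Set P))

/-- The upper shadow `∂_Q S` of an antichain `S` of `P` inside a subset `Q ⊆ P`. -/
def upperShadow {P : Type*} [PartialOrder P] (Q : Set P) (S : Set P) : Set P :=
  {y | y ∈ Q ∧ (∃ x ∈ S, x ≤ y) ∧ ∀ z ∈ Q, z < y → ∀ x ∈ S, ¬ x ≤ z}

open Classical in
/-- The antichains of the subposet `Q ⊆ P`, i.e. antichains of `P` contained in `Q`. -/
noncomputable def antichainsIn {P : Type*} [Fintype P] [PartialOrder P] (Q : Set P) :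
    Finset (Finset P) :=
  (antichains P).filter (fun A => (A : Set P) ⊆ Q)

/-- A weighting `α ∈ Δ_{a(P)}`: a nonnegative function on the antichains of `P`
(extended by `0` off the antichains) summing to `1`. -/
def IsWeighting {P : Type*} [Fintype P] [PartialOrder P] (α : Finset P → ℝ) : Prop :=
  (∀ A ∈ antichains P, 0 ≤ α A) ∧ (∀ A ∉ antichains P, α A = 0) ∧
    ∑ A ∈ antichains P, α A = 1

open Classical in
/-- The shadow weighting `∂_Q(α)`: the coordinate of `∂_Q(α)` at an antichain `T` of `Q`
is the sum of `α` over all antichains of `P` whose upper shadow in `Q` is `T`. -/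
noncomputable def shadowWeight {P : Type*} [Fintype P] [PartialOrder P]
    (α : Finset P → ℝ) (Q : Set P) (T : Finset P) : ℝ :=
  ∑ A ∈ (antichains P).filter (fun B : Finset P => upperShadow Q (B : Set P) = (T : Set P)), α A

/-- The critical exponent `c_{α,P}(Q) = H_{a(Q)}(∂_Q(α)) / |Q|` of a subposet `Q` of `P`
with respect to a weighting `α` (natural logarithm; `0 log 0 = 0`). -/
noncomputable def critExp {P : Type*} [Fintype P] [PartialOrder P]
    (α : Finset P → ℝ) (Q : Set P) : ℝ :=
  (∑ T ∈ antichainsIn Q, -(shadowWeight α Q T * Real.log (shadowWeight α Q T))) /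
    (Q.ncard : ℝ)

/-- The critical exponent `c_⋆(P) = max_{α ∈ Δ_{a(P)}} min_{∅ ≠ Q ⊆ P} c_{α,P}(Q)`,
expressed as `sup {c ≥ 0 : ∃ α ∈ Δ_{a(P)}, ∀ ∅ ≠ Q ⊆ P, c ≤ c_{α,P}(Q)}`. -/
noncomputable def critStar (P : Type*) [Fintype P] [PartialOrder P] : ℝ :=
  sSup {c : ℝ | 0 ≤ c ∧ ∃ α : Finset P → ℝ, IsWeighting α ∧
    ∀ Q : Set P, Q.Nonempty → c ≤ critExp α Q}

/-- The partial order structure determined by a partial order relation `r`. -/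
def relPO {α : Type*} (r : α → α → Prop) (h : IsPartialOrder α r) : PartialOrder α where
  le := r
  le_refl := h.refl
  le_trans _ _ _ := h.trans _ _ _
  le_antisymm _ _ := h.antisymm _ _

/-!
The idea is that of Kleitman and Rothschild: almost every poset has a Hasse diagram whose arcs join
consecutive levels of a partition into three levels, with every vertex joined to a positive
proportion of each neighbouring level. To see this, count Hasse-like digraphs: those with no short
directed cycle and no arc bypassing a directed path of two or three arcs. A digraph with a vertex of
small degree, or with a badly expanding set of vertices, is described by a smaller digraph and
little extra information, so such digraphs contribute a lower order to a recursion for the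
total. In what remains, expansion makes the diagram bipartite and then splits each side into an
upper and a lower half, giving at most four levels; four nonempty levels cost a constant factor in
the exponent, and unbalanced or poorly connected levels are rare as well.

Given three levels, the lower bound on `critStar` comes from choosing a random level and then a
uniformly random subset of it: its shadow in `Q` determines the trace on `Q` of the chosen set, and
concavity of the entropy function gives entropy at least `|Q| * log 2 / 3`. For the upper bound, a
Kővári–Sós–Turán count in the rich levels yields sets `S < A < T` of size `m` of order `log N`. The
antichains of `S ∪ A ∪ T` are the subsets of `S`, `A` and `T`, so there are at most `3 * 2 ^ m` of
them, and the entropy of a shadow weighting is at most the logarithm of their number.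
-/

namespace KleitmanRothschild

open Finset
open scoped Classical

section Digraph

variable {V W : Type*} {E : Finset (V × V)}

/-- Adjacency in the underlying undirected graph of the digraph with arc set `E`. -/
def Adj (E : Finset (V × V)) (x y : V) : Prop := (x, y) ∈ E ∨ (y, x) ∈ E

/-- The local properties of Hasse diagrams on which the counting relies. The field `four_cycle` says
that a directed path of length two determines the direction of every other path of length two with
the same endpoints. -/
structure IsHasseLike (E : Finset (V × V)) : Prop where
  asymm : ∀ x y, (x, y) ∈ E → (y, x) ∉ E
  no_triangle : ∀ x y z, Adj E x y → Adj E y z → ¬ Adj E x z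
  four_cycle : ∀ w x u y, (w, x) ∈ E → (x, u) ∈ E → Adj E w y → Adj E y u →
    (w, y) ∈ E ∧ (y, u) ∈ E

/-- The neighbourhood of `v` in the underlying graph of `E`. -/
noncomputable def nbhd [Fintype V] (E : Finset (V × V)) (v : V) : Finset V := {u | Adj E v u}

/-- The union of the neighbourhoods of the vertices in `Q`. -/
noncomputable def nbhdUnion [Fintype V] (E : Finset (V × V)) (Q : Finset V) : Finset V :=
  Q.biUnion (nbhd E)

/-- The digraph `E` with all arcs touching `T` removed, on the same vertex set. -/
noncomputable def deleteVerts (E : Finset (V × V)) (T : Finset V) : Finset (V × V) :=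
  {e ∈ E | e.1 ∉ T ∧ e.2 ∉ T}

/-- The number of Hasse-like digraphs on `n` labelled vertices. -/
noncomputable def hasseLikeCount (n : ℕ) : ℕ := #{E : Finset (Fin n × Fin n) | IsHasseLike E}

/-- The minimum degree condition used throughout: all degrees are at least `|V| / 64`. -/
def HasLargeDegrees [Fintype V] (E : Finset (V × V)) : Prop :=
  ∀ v, Fintype.card V ≤ 64 * #(nbhd E v)

theorem Adj.symm {x y : V} (h : Adj E x y) : Adj E y x := Or.symm h

theorem adj_comm {x y : V} : Adj E x y ↔ Adj E y x := ⟨Adj.symm, Adj.symm⟩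

theorem mem_nbhd [Fintype V] {v u : V} : u ∈ nbhd E v ↔ Adj E v u := by simp [nbhd]

theorem mem_nbhdUnion [Fintype V] {Q : Finset V} {x : V} :
    x ∈ nbhdUnion E Q ↔ ∃ z ∈ Q, Adj E z x := by
  simp [nbhdUnion, mem_nbhd]

theorem mem_deleteVerts {T : Finset V} {x y : V} :
    (x, y) ∈ deleteVerts E T ↔ (x, y) ∈ E ∧ x ∉ T ∧ y ∉ T := by
  simp [deleteVerts]

theorem adj_deleteVerts {T : Finset V} {x y : V} :
    Adj (deleteVerts E T) x y ↔ Adj E x y ∧ x ∉ T ∧ y ∉ T := by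
  simp only [Adj, mem_deleteVerts]
  tauto

namespace IsHasseLike

theorem not_adj_self (h : IsHasseLike E) (x : V) : ¬ Adj E x x := fun hx =>
  have hx : (x, x) ∈ E := or_self_iff.1 hx
  h.asymm x x hx hx

theorem swap_mem_iff (h : IsHasseLike E) {x y : V} (hxy : Adj E x y) : (y, x) ∈ E ↔ (x, y) ∉ E :=
  ⟨h.asymm y x, hxy.resolve_left⟩

theorem of_hom (h : IsHasseLike E) {F : Finset (W × W)} (f : W → V)
    (hf : ∀ x y, (x, y) ∈ F → (f x, f y) ∈ E) : IsHasseLike F := by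
  have hadj : ∀ {x y}, Adj F x y → Adj E (f x) (f y) := fun hxy => hxy.imp (hf _ _) (hf _ _)
  refine ⟨fun x y hxy hyx => h.asymm _ _ (hf _ _ hxy) (hf _ _ hyx),
    fun x y z hxy hyz hxz => h.no_triangle _ _ _ (hadj hxy) (hadj hyz) (hadj hxz), ?_⟩
  intro w x u y hwx hxu hwy hyu
  obtain ⟨hwy', hyu'⟩ := h.four_cycle _ _ _ _ (hf _ _ hwx) (hf _ _ hxu) (hadj hwy) (hadj hyu)
  exact ⟨hwy.resolve_right fun hyw => h.asymm _ _ hwy' (hf _ _ hyw),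
    hyu.resolve_right fun huy => h.asymm _ _ hyu' (hf _ _ huy)⟩

theorem mono (h : IsHasseLike E) {F : Finset (V × V)} (hF : F ⊆ E) : IsHasseLike F :=
  h.of_hom id fun _ _ hxy => hF hxy

theorem mem_iff_mem_iff_of_adj (h : IsHasseLike E) {w x u y : V} (hwx : Adj E w x)
    (hwy : Adj E w y) (hux : Adj E u x) (huy : Adj E u y) :
    ((w, x) ∈ E ↔ (w, y) ∈ E) ↔ ((u, x) ∈ E ↔ (u, y) ∈ E) := by
  have := h.swap_mem_iff hwx
  have := h.swap_mem_iff hwy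
  have := h.swap_mem_iff hux
  have := h.swap_mem_iff huy
  have := h.four_cycle w x u y
  have := h.four_cycle w y u x
  have := h.four_cycle u x w y
  have := h.four_cycle u y w x
  have := h.four_cycle x w y u
  have := h.four_cycle x u y w
  have := h.four_cycle y w x u
  have := h.four_cycle y u x w
  simp only [Adj] at *
  by_cases (w, x) ∈ E <;> by_cases (w, y) ∈ E <;> by_cases (u, x) ∈ E <;>
    by_cases (u, y) ∈ E <;> simp_all

end IsHasseLike

theorem card_image_deleteVerts_le [Fintype V] (T : Finset V) :
    #(image (deleteVerts · T) {E | IsHasseLike E}) ≤ hasseLikeCount (Fintype.card V - #T) := by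
  have hcard : Fintype.card {x // x ∉ T} = Fintype.card V - #T := by
    rw [Fintype.card_subtype_compl (· ∈ T), Fintype.card_coe]
  let e : {x // x ∉ T} ≃ Fin (Fintype.card V - #T) := Fintype.equivFinOfCardEq hcard
  let f : Fin (Fintype.card V - #T) → V := fun a => e.symm a
  let restrict (F : Finset (V × V)) :
      Finset (Fin (Fintype.card V - #T) × Fin (Fintype.card V - #T)) := {p | p.map f f ∈ F}
  have mem_restrict (F) (a b) : (a, b) ∈ restrict F ↔ (f a, f b) ∈ F := by simp [restrict]
  refine card_le_card_of_injOn restrict ?_ ?_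
  · intro F hF
    obtain ⟨E, hE, rfl⟩ := mem_image.1 (mem_coe.1 hF)
    have hdel : IsHasseLike (deleteVerts E T) := (mem_filter.1 hE).2.mono (filter_subset _ _)
    simpa using hdel.of_hom f fun a b => (mem_restrict _ a b).1
  · intro F hF F' hF' heq
    obtain ⟨E, -, rfl⟩ := mem_image.1 (mem_coe.1 hF)
    obtain ⟨E', -, rfl⟩ := mem_image.1 (mem_coe.1 hF')
    ext ⟨x, y⟩
    by_cases hx : x ∈ T
    · simp [mem_deleteVerts, hx]
    by_cases hy : y ∈ T
    · simp [mem_deleteVerts, hy]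
    have hxy := Finset.ext_iff.1 heq (e ⟨x, hx⟩, e ⟨y, hy⟩)
    simpa only [mem_restrict, f, Equiv.symm_apply_apply] using hxy

theorem card_le_mul_hasseLikeCount [Fintype V] {B : Finset (Finset (V × V))} {T : Finset V} {M : ℕ}
    (hB : ∀ E ∈ B, IsHasseLike E) (hM : ∀ E₀, #{E ∈ B | deleteVerts E T = E₀} ≤ M) :
    #B ≤ M * hasseLikeCount (Fintype.card V - #T) := by
  refine (card_le_mul_card_image (f := (deleteVerts · T)) B M fun E₀ _ => hM E₀).trans ?_
  refine Nat.mul_le_mul_left M ((card_le_card (image_subset_image ?_)).trans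
    (card_image_deleteVerts_le T))
  exact fun E hE => by simpa using hB E hE

end Digraph

section OrientationCode

variable {V ι : Type*} [Fintype V] {E E' : Finset (V × V)}

theorem exists_subset_card_le_not_disjoint [Nonempty V] {s : Finset ι} {f : ι → Finset V} {d : ℕ}
    (hf : ∀ x ∈ s, Fintype.card V ≤ d * #(f x)) :
    ∃ t ⊆ s, #t ≤ d ∧ ∀ x ∈ s, ∃ y ∈ t, ¬ Disjoint (f x) (f y) := by
  obtain ⟨t, ht⟩ := Finset.exists_maximal
    (s := s.powerset.filter fun t : Finset ι => (t : Set ι).PairwiseDisjoint f) ⟨∅, by simp⟩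
  obtain ⟨hts, hdisj⟩ : t ⊆ s ∧ (t : Set ι).PairwiseDisjoint f := by simpa using ht.prop
  refine ⟨t, hts, ?_, ?_⟩
  · have hsum : #t * Fintype.card V ≤ d * Fintype.card V := calc
      #t * Fintype.card V ≤ ∑ x ∈ t, d * #(f x) := by
        simpa using card_nsmul_le_sum t _ _ fun x hx => hf x (hts hx)
      _ = d * #(t.biUnion f) := by rw [card_biUnion hdisj, mul_sum]
      _ ≤ d * Fintype.card V := Nat.mul_le_mul_left d (card_le_univ _)
    exact Nat.le_of_mul_le_mul_right hsum Fintype.card_pos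
  · intro x hx
    by_contra! hcon
    have hxt : x ∈ t := by
      refine ht.le_of_ge (y := insert x t) ?_ (subset_insert x t) (mem_insert_self x t)
      rw [mem_filter, mem_powerset, coe_insert]
      exact ⟨insert_subset hx hts, hdisj.insert fun y hy _ => hcon y hy⟩
    have hempty : f x = ∅ := disjoint_self.1 (hcon x hxt)
    have := hf x hx
    simp [hempty, Fintype.card_ne_zero] at this

theorem exists_image_univ_eq {s : Finset ι} {k : ℕ} (hs : s.Nonempty) (hk : #s ≤ k) :
    ∃ f : Fin k → ι, univ.image f = s := by
  have : Nonempty s := hs.to_subtype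
  obtain ⟨emb⟩ : Nonempty (s ↪ Fin k) := by simpa [Function.Embedding.nonempty_iff_card_le] using hk
  refine ⟨fun j => (Function.invFun emb j : s), ?_⟩
  have hsurj := image_univ_of_surjective (Function.invFun_surjective emb.injective)
  simpa [image_image, Function.comp_def] using congrArg (image Subtype.val) hsurj

theorem exists_references [Nonempty V] (hd : HasLargeDegrees E) {T : Finset V}
    (hT : 128 * #T ≤ Fintype.card V) (w : V) :
    ∃ ρ : Fin 128 → V, (∀ j, ρ j ∈ nbhd E w \ T) ∧
      ∀ x ∈ nbhd E w \ T, ∃ j, ¬ Disjoint (nbhd E x \ T) (nbhd E (ρ j) \ T) := by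
  have hlarge : ∀ x, Fintype.card V ≤ 128 * #(nbhd E x \ T) := fun x => by
    have := hd x
    have := le_card_sdiff T (nbhd E x)
    omega
  obtain ⟨S, hS, hcard, hmeet⟩ := exists_subset_card_le_not_disjoint
    (s := nbhd E w \ T) (f := fun x => nbhd E x \ T) fun x _ => hlarge x
  have hne : (nbhd E w \ T).Nonempty := by
    have := Fintype.card_pos (α := V)
    have := hlarge w
    rw [← card_pos]
    omega
  obtain ⟨x, hx⟩ := hne
  obtain ⟨y, hy, -⟩ := hmeet x hx
  obtain ⟨ρ, rfl⟩ := exists_image_univ_eq ⟨y, hy⟩ hcard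
  refine ⟨ρ, fun j => hS (mem_image_of_mem ρ (mem_univ j)), fun x hx => ?_⟩
  simpa using hmeet x hx

variable [Fintype ι] {t : ι → V} {ρ : ι → Fin 128 → V × Bool} {c : ι → ι → Bool}

/-- `(ρ, c)` records enough orientations to recover the directions of all arcs at the vertices `t i`
from their neighbourhoods and the arcs avoiding them: `c` holds the arcs between the `t i`, and
`ρ i` lists neighbours of `t i`, with the direction of their arc to `t i`, such that every other
neighbour of `t i` lies on a four-cycle through `t i` and a listed one. -/
structure IsOrientationCode (E : Finset (V × V)) (t : ι → V) (ρ : ι → Fin 128 → V × Bool)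
    (c : ι → ι → Bool) : Prop where
  ref_mem : ∀ i j, (ρ i j).1 ∈ nbhd E (t i) \ univ.image t
  ref_arc : ∀ i j, (ρ i j).2 ↔ (t i, (ρ i j).1) ∈ E
  ref_meet : ∀ i, ∀ x ∈ nbhd E (t i) \ univ.image t,
    ∃ j, ¬ Disjoint (nbhd E x \ univ.image t) (nbhd E (ρ i j).1 \ univ.image t)
  arc : ∀ i i', c i i' ↔ (t i, t i') ∈ E

theorem exists_isOrientationCode [Nonempty V] (hd : HasLargeDegrees E)
    (ht : 128 * #(univ.image t) ≤ Fintype.card V) :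
    ∃ ρ c, IsOrientationCode E t ρ c := by
  choose ρ hmem hmeet using fun i => exists_references hd ht (t i)
  exact ⟨fun i j => (ρ i j, decide ((t i, ρ i j) ∈ E)), fun i i' => decide ((t i, t i') ∈ E),
    hmem, fun _ _ => decide_eq_true_iff, hmeet, fun _ _ => decide_eq_true_iff⟩

theorem IsOrientationCode.arc_mem_iff (hE : IsHasseLike E) (hE' : IsHasseLike E')
    (h : IsOrientationCode E t ρ c) (h' : IsOrientationCode E' t ρ c)
    (hrow : ∀ i, nbhd E (t i) = nbhd E' (t i))
    (hoff : ∀ x y, x ∉ univ.image t → y ∉ univ.image t → ((x, y) ∈ E ↔ (x, y) ∈ E'))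
    (i : ι) {y : V} (hy : y ∉ univ.image t) : (t i, y) ∈ E ↔ (t i, y) ∈ E' := by
  have hadj (y) : Adj E (t i) y ↔ Adj E' (t i) y := by rw [← mem_nbhd, ← mem_nbhd, hrow]
  by_cases hiy : Adj E (t i) y
  · obtain ⟨j, hj⟩ := h.ref_meet i y (mem_sdiff.2 ⟨mem_nbhd.2 hiy, hy⟩)
    obtain ⟨u, huy, huρ⟩ := not_disjoint_iff.1 hj
    obtain ⟨hρ, hρT⟩ := mem_sdiff.1 (h.ref_mem i j)
    rw [mem_sdiff, mem_nbhd, adj_comm] at huy huρ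
    rw [mem_nbhd] at hρ
    have hadjoff (x) (hx : x ∉ univ.image t) : Adj E u x ↔ Adj E' u x := by
      simp only [Adj, hoff u x huy.2 hx, hoff x u hx huy.2]
    have hcycle := hE.mem_iff_mem_iff_of_adj hiy hρ huy.1 huρ.1
    have hcycle' := hE'.mem_iff_mem_iff_of_adj ((hadj y).1 hiy) ((hadj _).1 hρ)
      ((hadjoff y hy).1 huy.1) ((hadjoff _ hρT).1 huρ.1)
    rw [← h.ref_arc i j, hoff u y huy.2 hy, hoff u _ huy.2 hρT] at hcycle
    rw [← h'.ref_arc i j] at hcycle'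
    tauto
  · have hiy' := mt (hadj y).2 hiy
    exact iff_of_false (fun hmem => hiy (.inl hmem)) fun hmem => hiy' (.inl hmem)

theorem IsOrientationCode.eq (hE : IsHasseLike E) (hE' : IsHasseLike E')
    (h : IsOrientationCode E t ρ c) (h' : IsOrientationCode E' t ρ c)
    (hrow : ∀ i, nbhd E (t i) = nbhd E' (t i))
    (hdel : deleteVerts E (univ.image t) = deleteVerts E' (univ.image t)) : E = E' := by
  have hoff (x y) (hx : x ∉ univ.image t) (hy : y ∉ univ.image t) :
      (x, y) ∈ E ↔ (x, y) ∈ E' := by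
    simpa [mem_deleteVerts, hx, hy] using Finset.ext_iff.1 hdel (x, y)
  have hout (i) {y} (hy : y ∉ univ.image t) : (t i, y) ∈ E ↔ (t i, y) ∈ E' :=
    h.arc_mem_iff hE hE' h' hrow hoff i hy
  ext ⟨x, y⟩
  by_cases hx : x ∈ univ.image t <;> by_cases hy : y ∈ univ.image t
  · obtain ⟨i, -, rfl⟩ := mem_image.1 hx
    obtain ⟨i', -, rfl⟩ := mem_image.1 hy
    rw [← h.arc, ← h'.arc]
  · obtain ⟨i, -, rfl⟩ := mem_image.1 hx
    exact hout i hy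
  · obtain ⟨i, -, rfl⟩ := mem_image.1 hy
    have hadj : Adj E (t i) x ↔ Adj E' (t i) x := by rw [← mem_nbhd, ← mem_nbhd, hrow]
    by_cases hix : Adj E (t i) x
    · rw [hE.swap_mem_iff hix, hE'.swap_mem_iff (hadj.1 hix), hout i hx]
    · exact iff_of_false (fun hmem => hix (.inr hmem)) fun hmem => mt hadj.2 hix (.inr hmem)
  · exact hoff x y hx hy

/-- A bound for the number of ways to choose `k` vertices and an orientation code for them. -/
def codeCount (n k : ℕ) : ℕ := n ^ k * (((n * 2) ^ 128) ^ k * (2 ^ k) ^ k)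

/-- The basic counting lemma: every digraph in `B` has `k` vertices whose neighbourhoods are
restricted, given some data in `D` and the remaining arcs, to a list of at most `M` tuples. -/
theorem card_le_codeCount_mul {D : Type*} [Fintype D] [Nonempty V] {B : Finset (Finset (V × V))}
    {k M : ℕ} (hB : ∀ E ∈ B, IsHasseLike E ∧ HasLargeDegrees E) (hk : 128 * k ≤ Fintype.card V)
    (S : (Fin k → V) → D → Finset (V × V) → Finset (Fin k → Finset V))
    (hM : ∀ t d E₀, #(S t d E₀) ≤ M)
    (hS : ∀ E ∈ B, ∃ t : Fin k → V, t.Injective ∧ ∃ d,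
      (fun i => nbhd E (t i)) ∈ S t d (deleteVerts E (univ.image t))) :
    #B ≤ codeCount (Fintype.card V) k *
      (Fintype.card D * M * hasseLikeCount (Fintype.card V - k)) := by
  let Code := (Fin k → V) × D × (Fin k → Fin 128 → V × Bool) × (Fin k → Fin k → Bool)
  have card_code : Fintype.card Code =
      codeCount (Fintype.card V) k * Fintype.card D := by
    simp only [Code, codeCount, Fintype.card_prod, Fintype.card_pi, prod_const, card_univ,
      Fintype.card_fin, Fintype.card_bool]
    ring
  have card_image {t : Fin k → V} (ht : t.Injective) : #(univ.image t) = k := by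
    simp [card_image_of_injective _ ht]
  let codeClass (γ : Code) : Finset (Finset (V × V)) := {E ∈ B | γ.1.Injective ∧
    (fun i => nbhd E (γ.1 i)) ∈ S γ.1 γ.2.1 (deleteVerts E (univ.image γ.1)) ∧
    IsOrientationCode E γ.1 γ.2.2.1 γ.2.2.2}
  have hcover : B ⊆ univ.biUnion codeClass := by
    intro E hE
    obtain ⟨t, ht, d, hd⟩ := hS E hE
    obtain ⟨ρ, c, hcode⟩ :=
      exists_isOrientationCode (hB E hE).2 (t := t) (by rwa [card_image ht])
    exact mem_biUnion.2 ⟨(t, d, ρ, c), mem_univ _, mem_filter.2 ⟨hE, ht, hd, hcode⟩⟩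
  have hclass (γ : Code) : #(codeClass γ) ≤ M * hasseLikeCount (Fintype.card V - k) := by
    obtain hempty | ⟨E₁, hE₁⟩ := (codeClass γ).eq_empty_or_nonempty
    · simp [hempty]
    rw [← card_image (mem_filter.1 hE₁).2.1]
    refine card_le_mul_hasseLikeCount (fun E hE => (hB E (mem_filter.1 hE).1).1) fun E₀ => ?_
    refine (card_le_card_of_injOn (fun E i => nbhd E (γ.1 i)) ?_ ?_).trans (hM γ.1 γ.2.1 E₀)
    · intro E hE
      obtain ⟨hE, hdel⟩ := mem_filter.1 (mem_coe.1 hE)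
      exact hdel ▸ (mem_filter.1 hE).2.2.1
    · intro E hE E' hE' hrow
      obtain ⟨hE, hdel⟩ := mem_filter.1 (mem_coe.1 hE)
      obtain ⟨hE', hdel'⟩ := mem_filter.1 (mem_coe.1 hE')
      obtain ⟨hEB, -, -, hcode⟩ := mem_filter.1 hE
      obtain ⟨hEB', -, -, hcode'⟩ := mem_filter.1 hE'
      exact hcode.eq (hB E hEB).1 (hB E' hEB').1 hcode' (congrFun hrow) (hdel.trans hdel'.symm)
  calc #B ≤ #(univ.biUnion codeClass) := card_le_card hcover
    _ ≤ Fintype.card Code * (M * hasseLikeCount (Fintype.card V - k)) :=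
      card_biUnion_le_card_mul _ _ _ fun γ _ => hclass γ
    _ = _ := by rw [card_code]; ring

end OrientationCode

section Levelling

variable {V : Type*} {E : Finset (V × V)} {A B : Set V}

/-- `l` assigns levels so that every arc of `E` goes up by exactly one level. -/
def IsLevelling {m : ℕ} (E : Finset (V × V)) (l : V → Fin m) : Prop :=
  ∀ x y, (x, y) ∈ E → (l y : ℕ) = l x + 1

theorem IsLevelling.adj_iff {m : ℕ} {l : V → Fin m} (h : IsLevelling E l) {v x : V} :
    Adj E v x ↔ (if (l x : ℕ) = l v + 1 then (v, x) else (x, v)) ∈ E := by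
  split_ifs with hx
  · exact or_iff_left fun hxv => by have := h x v hxv; omega
  · exact or_iff_right fun hvx => hx (h v x hvx)

/-- `A` and `B` are complementary, and every arc joins `A` to `B` in one of the two directions. -/
structure IsBipartition (E : Finset (V × V)) (A B : Set V) : Prop where
  mem_right_iff : ∀ v, v ∈ B ↔ v ∉ A
  mem_iff_of_adj : ∀ v w, Adj E v w → (v ∈ A ↔ w ∈ B)

/-- No vertex has both an arc to `B` and an arc from `B`. -/
def IsUnmixed (E : Finset (V × V)) (B : Set V) : Prop :=
  ∀ b ∈ B, ∀ b' ∈ B, ∀ z, Adj E z b → Adj E z b' → ((z, b) ∈ E ↔ (z, b') ∈ E)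

/-- Any three vertices of `B` have a common neighbour. -/
def HasCommonNeighbors (E : Finset (V × V)) (B : Set V) : Prop :=
  ∀ u ∈ B, ∀ v ∈ B, ∀ w ∈ B, ∃ x, Adj E x u ∧ Adj E x v ∧ Adj E x w

/-- A division of `B` into a lower part `L` and an upper part `B \ L`: a common neighbour of a lower
and an upper vertex lies between them, and one of two vertices in the same part does not. -/
structure IsSplitting (E : Finset (V × V)) (B L : Set V) : Prop where
  between : ∀ b ∈ B, ∀ b' ∈ B, b ∈ L → b' ∉ L → ∀ z, Adj E z b → Adj E z b' →
    (b, z) ∈ E ∧ (z, b') ∈ E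
  mem_iff : ∀ b ∈ B, ∀ b' ∈ B, (b ∈ L ↔ b' ∈ L) → ∀ z, Adj E z b → Adj E z b' →
    ((z, b) ∈ E ↔ (z, b') ∈ E)

/-- The vertices with an arc to some common neighbour of `b₁` and `b₃`. When `b₁` and `b₃` are the
ends of a directed path these form the lower part of a splitting. -/
def lowerPart (E : Finset (V × V)) (b₁ b₃ : V) : Set V :=
  {b | ∃ w, Adj E w b₁ ∧ Adj E w b₃ ∧ (b, w) ∈ E}

namespace IsBipartition

theorem symm (h : IsBipartition E A B) : IsBipartition E B A := by
  refine ⟨fun v => ?_, fun v w hvw => ?_⟩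
  · have := h.mem_right_iff v
    tauto
  · exact (h.mem_iff_of_adj w v hvw.symm).symm

theorem mem_right (h : IsBipartition E A B) {v w : V} (hvw : Adj E v w) (hv : v ∈ A) : w ∈ B :=
  (h.mem_iff_of_adj v w hvw).1 hv

theorem mem_left (h : IsBipartition E A B) {v w : V} (hvw : Adj E v w) (hv : v ∈ B) : w ∈ A :=
  h.symm.mem_right hvw hv

theorem notMem_left (h : IsBipartition E A B) {v : V} (hv : v ∈ B) : v ∉ A :=
  (h.mem_right_iff v).1 hv

theorem exists_levelling_three (h : IsBipartition E A B) (hE : IsHasseLike E)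
    (hB : IsUnmixed E B) : ∃ l : V → Fin 3, IsLevelling E l := by
  refine ⟨fun v => if v ∈ B then 1 else if ∃ b, (v, b) ∈ E then 0 else 2, fun x y hxy => ?_⟩
  by_cases hx : x ∈ B
  · have hyA : y ∈ A := h.mem_left (.inl hxy) hx
    have hy : y ∉ B := h.symm.notMem_left hyA
    have hmax : ¬ ∃ b, (y, b) ∈ E := by
      rintro ⟨b, hyb⟩
      exact hE.asymm x y hxy
        ((hB x hx b (h.mem_right (.inl hyb) hyA) y (.inr hxy) (.inl hyb)).2 hyb)
    simp [hx, hy, hmax]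
  · have hy : y ∈ B := h.mem_right (.inl hxy) (by simpa [h.mem_right_iff] using hx)
    have hout : ∃ b, (x, b) ∈ E := ⟨y, hxy⟩
    simp [hx, hy, hout]

end IsBipartition

theorem exists_path_of_not_isUnmixed (hB : ¬ IsUnmixed E B) :
    ∃ b₁ ∈ B, ∃ x, ∃ b₃ ∈ B, (b₁, x) ∈ E ∧ (x, b₃) ∈ E := by
  unfold IsUnmixed at hB
  push Not at hB
  obtain ⟨b, hb, b', hb', z, hzb, hzb', h | h⟩ := hB
  · exact ⟨b', hb', z, b, hb, hzb'.resolve_left h.2, h.1⟩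
  · exact ⟨b, hb, z, b', hb', hzb.resolve_left h.1, h.2⟩

section Splitting

variable {b₁ x b₃ : V}

theorem mem_lowerPart_iff (hE : IsHasseLike E) (h₁ : (b₁, x) ∈ E) (h₃ : (x, b₃) ∈ E) {b w : V}
    (hwb : Adj E w b) (hw₁ : Adj E w b₁) (hw₃ : Adj E w b₃) :
    b ∈ lowerPart E b₁ b₃ ↔ (b, w) ∈ E := by
  refine ⟨?_, fun hbw => ⟨w, hw₁, hw₃, hbw⟩⟩
  rintro ⟨w', hw'₁, hw'₃, hbw'⟩
  have hb₁w := (hE.four_cycle b₁ x b₃ w h₁ h₃ hw₁.symm hw₃).1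
  have hb₁w' := (hE.four_cycle b₁ x b₃ w' h₁ h₃ hw'₁.symm hw'₃).1
  have hcycle := hE.mem_iff_mem_iff_of_adj hwb hw₁ (.inr hbw') hw'₁
  have hagree : (w', b) ∈ E ↔ (w', b₁) ∈ E :=
    iff_of_false (hE.asymm _ _ hbw') (hE.asymm _ _ hb₁w')
  exact (hE.swap_mem_iff hwb).2 fun hwb => hE.asymm _ _ hb₁w ((hcycle.2 hagree).1 hwb)

theorem mem_iff_of_mem_lowerPart (hE : IsHasseLike E) (hcommon : HasCommonNeighbors E B)
    (hb₁ : b₁ ∈ B) (hb₃ : b₃ ∈ B) (h₁ : (b₁, x) ∈ E) (h₃ : (x, b₃) ∈ E) {b z : V} (hb : b ∈ B)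
    (hlow : b ∈ lowerPart E b₁ b₃) (hzb : Adj E z b) (hz₁ : Adj E z b₁) :
    (z, b) ∈ E ↔ (z, b₁) ∈ E := by
  obtain ⟨w, hwb, hw₁, hw₃⟩ := hcommon b hb b₁ hb₁ b₃ hb₃
  have hbw := (mem_lowerPart_iff hE h₁ h₃ hwb hw₁ hw₃).1 hlow
  have hb₁w := (hE.four_cycle b₁ x b₃ w h₁ h₃ hw₁.symm hw₃).1
  exact (hE.mem_iff_mem_iff_of_adj hzb hz₁ hwb hw₁).2
    (iff_of_false (hE.asymm _ _ hbw) (hE.asymm _ _ hb₁w))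

theorem mem_iff_of_notMem_lowerPart (hE : IsHasseLike E) (hcommon : HasCommonNeighbors E B)
    (hb₁ : b₁ ∈ B) (hb₃ : b₃ ∈ B) (h₁ : (b₁, x) ∈ E) (h₃ : (x, b₃) ∈ E) {b z : V} (hb : b ∈ B)
    (hlow : b ∉ lowerPart E b₁ b₃) (hzb : Adj E z b) (hz₃ : Adj E z b₃) :
    (z, b) ∈ E ↔ (z, b₃) ∈ E := by
  obtain ⟨w, hwb, hw₁, hw₃⟩ := hcommon b hb b₁ hb₁ b₃ hb₃
  have hbw := mt (mem_lowerPart_iff hE h₁ h₃ hwb hw₁ hw₃).2 hlow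
  have hwb₃ := (hE.four_cycle b₁ x b₃ w h₁ h₃ hw₁.symm hw₃).2
  exact (hE.mem_iff_mem_iff_of_adj hzb hz₃ hwb hw₃).2 (iff_of_true (hwb.resolve_right hbw) hwb₃)

theorem isSplitting_lowerPart (hE : IsHasseLike E) (hcommon : HasCommonNeighbors E B)
    (hb₁ : b₁ ∈ B) (hb₃ : b₃ ∈ B) (h₁ : (b₁, x) ∈ E) (h₃ : (x, b₃) ∈ E) :
    IsSplitting E B (lowerPart E b₁ b₃) := by
  constructor
  · intro b hb b' hb' hlow hlow' z hzb hzb'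
    obtain ⟨w, hwb, hw₁, hw₃⟩ := hcommon b hb b₁ hb₁ b₃ hb₃
    have hbw := (mem_lowerPart_iff hE h₁ h₃ hwb hw₁ hw₃).1 hlow
    have hwb₃ := (hE.four_cycle b₁ x b₃ w h₁ h₃ hw₁.symm hw₃).2
    obtain ⟨w', hw'b, hw'₃, hw'b'⟩ := hcommon b hb b₃ hb₃ b' hb'
    obtain ⟨hbw', hw'b₃⟩ := hE.four_cycle b w b₃ w' hbw hwb₃ hw'b.symm hw'₃
    have hw'b'_mem := (mem_iff_of_notMem_lowerPart hE hcommon hb₁ hb₃ h₁ h₃ hb' hlow'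
      hw'b' hw'₃).2 hw'b₃
    exact hE.four_cycle b w' b' z hbw' hw'b'_mem hzb.symm hzb'
  · intro b hb b' hb' hiff z hzb hzb'
    by_cases hlow : b ∈ lowerPart E b₁ b₃
    · obtain ⟨w, hwb, hwb', hw₁⟩ := hcommon b hb b' hb' b₁ hb₁
      exact (hE.mem_iff_mem_iff_of_adj hzb hzb' hwb hwb').2 <|
        (mem_iff_of_mem_lowerPart hE hcommon hb₁ hb₃ h₁ h₃ hb hlow hwb hw₁).trans
          (mem_iff_of_mem_lowerPart hE hcommon hb₁ hb₃ h₁ h₃ hb' (hiff.1 hlow) hwb' hw₁).symm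
    · obtain ⟨w, hwb, hwb', hw₃⟩ := hcommon b hb b' hb' b₃ hb₃
      exact (hE.mem_iff_mem_iff_of_adj hzb hzb' hwb hwb').2 <|
        (mem_iff_of_notMem_lowerPart hE hcommon hb₁ hb₃ h₁ h₃ hb hlow hwb hw₃).trans
          (mem_iff_of_notMem_lowerPart hE hcommon hb₁ hb₃ h₁ h₃ hb' (mt hiff.2 hlow) hwb'
            hw₃).symm

theorem exists_isSplitting (hE : IsHasseLike E) (hcommon : HasCommonNeighbors E B)
    (hB : ¬ IsUnmixed E B) :
    ∃ L, IsSplitting E B L ∧ ∃ b₁ ∈ B, ∃ b₃ ∈ B, b₁ ∈ L ∧ b₃ ∉ L ∧ ∃ x, (b₁, x) ∈ E := by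
  obtain ⟨b₁, hb₁, x, b₃, hb₃, h₁, h₃⟩ := exists_path_of_not_isUnmixed hB
  have hlow {b} (hxb : Adj E x b) : b ∈ lowerPart E b₁ b₃ ↔ (b, x) ∈ E :=
    mem_lowerPart_iff hE h₁ h₃ hxb (.inr h₁) (.inl h₃)
  exact ⟨lowerPart E b₁ b₃, isSplitting_lowerPart hE hcommon hb₁ hb₃ h₁ h₃, b₁, hb₁, b₃, hb₃,
    (hlow (.inr h₁)).2 h₁, mt (hlow (.inl h₃)).1 (hE.asymm _ _ h₃), x, h₁⟩

end Splitting

section FourLevels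

variable {L L' : Set V}

theorem IsSplitting.mem_iff_of_mem_iff (hs : IsSplitting E B L) (hE : IsHasseLike E) {a z b : V}
    (hz : z ∈ B) (hb : b ∈ B) (haz : Adj E a z) (hab : Adj E a b) (hza : (z, a) ∈ E ↔ z ∈ L) :
    (b, a) ∈ E ↔ b ∈ L := by
  have hnaz := hE.swap_mem_iff haz
  have hnab := hE.swap_mem_iff hab
  by_cases hzL : z ∈ L <;> by_cases hbL : b ∈ L
  · have := hs.mem_iff z hz b hb (by tauto) a haz hab
    tauto
  · have := hs.between z hz b hb hzL hbL a haz hab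
    tauto
  · have := hs.between b hb z hz hbL hzL a hab haz
    tauto
  · have := hs.mem_iff z hz b hb (by tauto) a haz hab
    tauto

variable {x : V}

theorem IsBipartition.mem_iff_of_notMem_splitting (h : IsBipartition E A B) (hE : IsHasseLike E)
    (hcommon : HasCommonNeighbors E A) (hA : IsSplitting E A L') (hB : IsSplitting E B L)
    (hx : x ∈ A) (hxL' : x ∉ L') (hxL : ∀ z, Adj E x z → ((z, x) ∈ E ↔ z ∈ L)) {a b : V}
    (ha : a ∈ A) (haL' : a ∉ L') (hab : Adj E a b) : (b, a) ∈ E ↔ b ∈ L := by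
  obtain ⟨z, hza, hzx, -⟩ := hcommon a ha x hx x hx
  refine hB.mem_iff_of_mem_iff hE (h.mem_right hza.symm ha) (h.mem_right hab ha) hza.symm hab ?_
  rw [hA.mem_iff a ha x hx (iff_of_false haL' hxL') z hza hzx, hxL z hzx.symm]

theorem IsBipartition.mem_of_mem_splitting (h : IsBipartition E A B) (hE : IsHasseLike E)
    (hcommon : HasCommonNeighbors E A) (hA : IsSplitting E A L') (hB : IsSplitting E B L)
    (hx : x ∈ A) (hxL' : x ∉ L') (hxL : ∀ z, Adj E x z → ((z, x) ∈ E ↔ z ∈ L)) {a b : V}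
    (ha : a ∈ A) (haL' : a ∈ L') (hab : Adj E a b) : b ∈ L ∧ (a, b) ∈ E := by
  obtain ⟨z, hza, hzx, -⟩ := hcommon a ha x hx x hx
  obtain ⟨haz, hzx'⟩ := hA.between a ha x hx haL' hxL' z hza hzx
  have hzL : z ∈ L := (hxL z hzx.symm).1 hzx'
  have hz : z ∈ B := h.mem_right hza.symm ha
  have hb : b ∈ B := h.mem_right hab ha
  have hbL : b ∈ L := by
    by_contra hbL
    exact hE.asymm _ _ haz (hB.between z hz b hb hzL hbL a hza.symm hab).1
  exact ⟨hbL, (hB.mem_iff z hz b hb (iff_of_true hzL hbL) a hza.symm hab).1 haz⟩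

-- From bottom to top the levels are `A ∩ L'`, `B ∩ L`, `A \ L'`, `B \ L`.
theorem IsBipartition.exists_levelling_four (h : IsBipartition E A B) (hE : IsHasseLike E)
    (hcommon : HasCommonNeighbors E A) (hA : IsSplitting E A L') (hB : IsSplitting E B L)
    (hx : x ∈ A) (hxL' : x ∉ L') (hxL : ∀ z, Adj E x z → ((z, x) ∈ E ↔ z ∈ L)) {a b : V}
    (ha : a ∈ A) (haL' : a ∈ L') (hb : b ∈ B) (hbL : b ∉ L) :
    ∃ l : V → Fin 4, IsLevelling E l ∧ (∃ v, l v = 0) ∧ ∃ v, l v = 3 := by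
  have haB : a ∉ B := h.symm.notMem_left ha
  refine ⟨fun v => if v ∈ B then (if v ∈ L then 1 else 3) else (if v ∈ L' then 0 else 2), ?_,
    ⟨a, by simp [haB, haL']⟩, ⟨b, by simp [hb, hbL]⟩⟩
  intro p r hpr
  have hlow {u v} (hu : u ∈ A) (huL' : u ∈ L') (huv : Adj E u v) : v ∈ L ∧ (u, v) ∈ E :=
    h.mem_of_mem_splitting hE hcommon hA hB hx hxL' hxL hu huL' huv
  have hhigh {u v} (hu : u ∈ A) (huL' : u ∉ L') (huv : Adj E u v) : (v, u) ∈ E ↔ v ∈ L :=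
    h.mem_iff_of_notMem_splitting hE hcommon hA hB hx hxL' hxL hu huL' huv
  by_cases hp : p ∈ B
  · have hrA : r ∈ A := h.mem_left (.inl hpr) hp
    have hr : r ∉ B := h.symm.notMem_left hrA
    have hrL' : r ∉ L' := fun hrL' => hE.asymm _ _ hpr (hlow hrA hrL' (.inr hpr)).2
    have hpL : p ∈ L := (hhigh hrA hrL' (.inr hpr)).1 hpr
    simp [hp, hr, hrL', hpL]
  · have hpA : p ∈ A := by simpa [h.mem_right_iff] using hp
    have hr : r ∈ B := h.mem_right (.inl hpr) hpA
    by_cases hpL' : p ∈ L'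
    · have hrL : r ∈ L := (hlow hpA hpL' (.inl hpr)).1
      simp [hp, hr, hpL', hrL]
    · have hrL : r ∉ L := mt (hhigh hpA hpL' (.inl hpr)).2 (hE.asymm _ _ hpr)
      simp [hp, hr, hpL', hrL]

theorem IsBipartition.notMem_or_notMem_splitting (h : IsBipartition E A B) (hE : IsHasseLike E)
    (hcommon : HasCommonNeighbors E A) (hA : IsSplitting E A L') (hB : IsSplitting E B L)
    {a y : V} (hx : x ∈ A) (hxL : ∀ z, Adj E x z → ((z, x) ∈ E ↔ z ∈ L))
    (ha : a ∈ A) (haL' : a ∈ L') (hay : (a, y) ∈ E) : x ∉ L' ∨ y ∉ L := by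
  by_contra! ⟨hxL', hyL⟩
  obtain ⟨z, hzx, hza, -⟩ := hcommon x hx a ha a ha
  have hz : z ∈ B := h.mem_right hzx.symm hx
  have hy : y ∈ B := h.mem_right (.inl hay) ha
  by_cases hzL : z ∈ L
  · have hza' : (z, a) ∈ E :=
      (hA.mem_iff x hx a ha (iff_of_true hxL' haL') z hzx hza).1 ((hxL z hzx.symm).2 hzL)
    have haz : (a, z) ∈ E :=
      (hB.mem_iff z hz y hy (iff_of_true hzL hyL) a hza.symm (.inl hay)).2 hay
    exact hE.asymm _ _ hza' haz
  · exact hE.asymm _ _ hay (hB.between y hy z hz hyL hzL a (.inl hay) hza.symm).1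

end FourLevels

theorem IsBipartition.exists_levelling (h : IsBipartition E A B) (hE : IsHasseLike E)
    (hcommonA : HasCommonNeighbors E A) (hcommonB : HasCommonNeighbors E B) :
    (∃ l : V → Fin 3, IsLevelling E l) ∨
      ∃ l : V → Fin 4, IsLevelling E l ∧ (∃ v, l v = 0) ∧ ∃ v, l v = 3 := by
  by_cases hB : IsUnmixed E B
  · exact .inl (h.exists_levelling_three hE hB)
  by_cases hA : IsUnmixed E A
  · exact .inl (h.symm.exists_levelling_three hE hA)
  right
  obtain ⟨L, hB, b₁, hb₁, b₃, hb₃, hb₁L, hb₃L, x, hb₁x⟩ := exists_isSplitting hE hcommonB hB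
  obtain ⟨L', hA, a₁, ha₁, a₃, ha₃, ha₁L', ha₃L', y, ha₁y⟩ := exists_isSplitting hE hcommonA hA
  have hx : x ∈ A := h.mem_left (.inl hb₁x) hb₁
  have hy : y ∈ B := h.mem_right (.inl ha₁y) ha₁
  have hxL (z) (hxz : Adj E x z) : (z, x) ∈ E ↔ z ∈ L :=
    hB.mem_iff_of_mem_iff hE hb₁ (h.mem_right hxz hx) (.inr hb₁x) hxz (iff_of_true hb₁x hb₁L)
  have hyL' (z) (hyz : Adj E y z) : (z, y) ∈ E ↔ z ∈ L' :=
    hA.mem_iff_of_mem_iff hE ha₁ (h.mem_left hyz hy) (.inr ha₁y) hyz (iff_of_true ha₁y ha₁L')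
  rcases h.notMem_or_notMem_splitting hE hcommonA hA hB hx hxL ha₁ ha₁L' ha₁y with hxL' | hyL
  · exact h.exists_levelling_four hE hcommonA hA hB hx hxL' hxL ha₁ ha₁L' hb₃ hb₃L
  · exact h.symm.exists_levelling_four hE hcommonB hB hA hy hyL hyL' hb₁ hb₁L ha₃ ha₃L'

end Levelling

section Expansion

open scoped symmDiff

variable {V : Type*} [Fintype V] {E : Finset (V × V)} {q : ℕ}

/-- Every set of `q` vertices has nearly half of the vertices as neighbours. -/
def LargeExpansion (E : Finset (V × V)) (q : ℕ) : Prop :=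
  ∀ Q : Finset V, #Q = q → 9999 * Fintype.card V ≤ 20000 * #(nbhdUnion E Q)

/-- Every set of `q` vertices with a common neighbour has at most slightly more than half of the
vertices as neighbours. -/
def SmallNbhdExpansion (E : Finset (V × V)) (q : ℕ) : Prop :=
  ∀ v, ∀ Q ⊆ nbhd E v, #Q = q → 20000 * #(nbhdUnion E Q) ≤ 10001 * Fintype.card V

/-- Whenever `j` vertices have no common neighbour, any sets of `q` neighbours of each of them
jointly have almost all vertices as neighbours. -/
def JointExpansion (E : Finset (V × V)) (q j : ℕ) : Prop :=
  ∀ T : Finset V, #T = j → (¬ ∃ x, ∀ v ∈ T, Adj E v x) →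
    ∀ Q : V → Finset V, (∀ v ∈ T, Q v ⊆ nbhd E v ∧ #(Q v) = q ∧ Disjoint (Q v) T) →
      1000 * #{x | ∀ v ∈ T, x ∉ nbhdUnion E (Q v)} < Fintype.card V

/-- The typical local structure of a Hasse-like digraph, which forces it to be a levelled digraph on
three or four levels. -/
structure IsExpanding (E : Finset (V × V)) (q : ℕ) : Prop where
  isHasseLike : IsHasseLike E
  hasLargeDegrees : HasLargeDegrees E
  largeExpansion : LargeExpansion E q
  smallNbhdExpansion : SmallNbhdExpansion E q
  jointExpansion_two : JointExpansion E q 2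
  jointExpansion_three : JointExpansion E q 3

theorem card_symmDiff_le_add {α : Type*} (A B C : Finset α) :
    #(A ∆ C) ≤ #(A ∆ B) + #(B ∆ C) :=
  (card_le_card (symmDiff_triangle A B C)).trans (card_union_le _ _)

theorem card_symmDiff_add_card_add_card (A B : Finset V) :
    #(A ∆ B) + #A + #B + 2 * #(A ∪ B)ᶜ = 2 * Fintype.card V := by
  have hunion : #(A ∪ B) = #(A ∆ B) + #(A ∩ B) := by
    rw [← sup_eq_union, ← inf_eq_inter, ← card_union_of_disjoint (disjoint_symmDiff_inf A B),
      ← sup_eq_union, symmDiff_sup_inf]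
  have := card_union_add_card_inter A B
  have := card_add_card_compl (A ∪ B)
  omega

theorem card_symmDiff_add_add_le (A B C : Finset V) :
    #(A ∆ B) + #(B ∆ C) + #(A ∆ C) ≤ 2 * Fintype.card V := by
  have hsub : A ∆ C ⊆ ((A ∆ B) ∩ (B ∆ C))ᶜ := by
    intro x
    simp only [mem_symmDiff, mem_compl, mem_inter]
    tauto
  have := card_le_card hsub
  have := card_add_card_compl ((A ∆ B) ∩ (B ∆ C))
  have := card_union_add_card_inter (A ∆ B) (B ∆ C)
  have := card_le_univ (A ∆ B ∪ B ∆ C)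
  omega

theorem HasLargeDegrees.exists_subset_nbhd (hd : HasLargeDegrees E) {T : Finset V}
    (hn : 64 * (q + #T) ≤ Fintype.card V) (v : V) : ∃ Q ⊆ nbhd E v, #Q = q ∧ Disjoint Q T := by
  have hle : q ≤ #(nbhd E v \ T) := by
    have := hd v
    have := le_card_sdiff T (nbhd E v)
    omega
  obtain ⟨Q, hQ, hcard⟩ := exists_subset_card_eq hle
  exact ⟨Q, hQ.trans sdiff_subset, hcard, disjoint_of_subset_left hQ sdiff_disjoint⟩

theorem card_le_add_sum_card_sdiff (N : V → Finset V) (T B : Finset V) :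
    Fintype.card V ≤ #B + (#{x | ∀ v ∈ T, x ∉ N v} + ∑ v ∈ T, #(N v \ B)) := by
  have hcover : (univ : Finset V) ⊆
      B ∪ (({x | ∀ v ∈ T, x ∉ N v} : Finset V) ∪ T.biUnion fun v => N v \ B) := by
    intro x _
    simp only [mem_union, mem_filter_univ, mem_biUnion, mem_sdiff]
    grind
  rw [← card_univ]
  refine (card_le_card hcover).trans ((card_union_le _ _).trans (Nat.add_le_add_left ?_ _))
  exact (card_union_le _ _).trans (Nat.add_le_add_left card_biUnion_le _)

namespace IsExpanding

variable {v w : V} {P Q : Finset V}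

theorem le_card_symmDiff_of_adj_of_notMem (h : IsExpanding E q) (hvw : Adj E v w)
    (hQ : Q ⊆ nbhd E v) (hP : P ⊆ nbhd E w) (hQq : #Q = q) (hPq : #P = q) (hw : w ∉ Q)
    (hv : v ∉ P) :
    19958 * Fintype.card V ≤ 20000 * #(nbhdUnion E Q ∆ nbhdUnion E P) := by
  have hne : w ≠ v := by
    rintro rfl
    exact h.isHasseLike.not_adj_self _ hvw
  have hvQ : v ∉ Q := fun hv => h.isHasseLike.not_adj_self _ (mem_nbhd.1 (hQ hv))
  have hwP : w ∉ P := fun hw => h.isHasseLike.not_adj_self _ (mem_nbhd.1 (hP hw))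
  have hjoint := h.jointExpansion_two {v, w} (card_pair hne.symm)
    (fun ⟨x, hx⟩ => h.isHasseLike.no_triangle _ _ _ hvw (hx w (by simp)) (hx v (by simp)))
    (fun u => if u = v then Q else P) (by simp [*])
  have hcompl : ({x | ∀ u ∈ ({v, w} : Finset V), x ∉ nbhdUnion E (if u = v then Q else P)} :
      Finset V) = (nbhdUnion E Q ∪ nbhdUnion E P)ᶜ := by
    ext x
    simp [hne]
  rw [hcompl] at hjoint
  have := h.smallNbhdExpansion v Q hQ hQq
  have := h.smallNbhdExpansion w P hP hPq
  have := card_symmDiff_add_card_add_card (nbhdUnion E Q) (nbhdUnion E P)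
  omega

theorem card_symmDiff_le_of_subset_nbhd (h : IsExpanding E q)
    (hn : 64 * (2 * q + 4) ≤ Fintype.card V) (hQ : Q ⊆ nbhd E v) (hP : P ⊆ nbhd E v)
    (hQq : #Q = q) (hPq : #P = q) :
    20000 * #(nbhdUnion E Q ∆ nbhdUnion E P) ≤ 84 * Fintype.card V := by
  obtain ⟨W, hW, hcard, hdisj⟩ := h.hasLargeDegrees.exists_subset_nbhd (q := 1) (T := Q ∪ P)
    (by have := card_union_le Q P; omega) v
  obtain ⟨w, rfl⟩ := card_eq_one.1 hcard
  obtain ⟨hwQ, hwP⟩ : w ∉ Q ∧ w ∉ P := by simpa using hdisj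
  have hvw : Adj E v w := mem_nbhd.1 (hW (mem_singleton_self w))
  obtain ⟨S, hS, hSq, hvS⟩ := h.hasLargeDegrees.exists_subset_nbhd (q := q) (T := {v})
    (by rw [card_singleton]; omega) w
  rw [disjoint_singleton_right] at hvS
  have hQS := h.le_card_symmDiff_of_adj_of_notMem hvw hQ hS hQq hSq hwQ hvS
  have hPS := h.le_card_symmDiff_of_adj_of_notMem hvw hP hS hPq hSq hwP hvS
  rw [symmDiff_comm] at hPS
  have := card_symmDiff_add_add_le (nbhdUnion E Q) (nbhdUnion E S) (nbhdUnion E P)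
  omega

theorem le_card_symmDiff_of_adj (h : IsExpanding E q)
    (hn : 64 * (2 * q + 4) ≤ Fintype.card V) (hvw : Adj E v w) (hQ : Q ⊆ nbhd E v)
    (hP : P ⊆ nbhd E w) (hQq : #Q = q) (hPq : #P = q) :
    19790 * Fintype.card V ≤ 20000 * #(nbhdUnion E Q ∆ nbhdUnion E P) := by
  obtain ⟨S, hS, hSq, hwS⟩ := h.hasLargeDegrees.exists_subset_nbhd (q := q) (T := {w})
    (by rw [card_singleton]; omega) v
  obtain ⟨T, hT, hTq, hvT⟩ := h.hasLargeDegrees.exists_subset_nbhd (q := q) (T := {v})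
    (by rw [card_singleton]; omega) w
  rw [disjoint_singleton_right] at hwS hvT
  have hST := h.le_card_symmDiff_of_adj_of_notMem hvw hS hT hSq hTq hwS hvT
  have hSQ := h.card_symmDiff_le_of_subset_nbhd hn hS hQ hSq hQq
  have hPT := h.card_symmDiff_le_of_subset_nbhd hn hP hT hPq hTq
  have := card_symmDiff_le_add (nbhdUnion E S) (nbhdUnion E Q) (nbhdUnion E T)
  have := card_symmDiff_le_add (nbhdUnion E Q) (nbhdUnion E P) (nbhdUnion E T)
  omega

theorem exists_forall_adj_of_card_symmDiff_le (h : IsExpanding E q)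
    (hn : 64 * (2 * q + 4) ≤ Fintype.card V) {Q : V → Finset V}
    (hQ : ∀ v, Q v ⊆ nbhd E v ∧ #(Q v) = q) {T : Finset V} (hT : T.Nonempty) (hT3 : #T ≤ 3)
    (hclose : ∀ v ∈ T, ∀ w ∈ T,
      20000 * #(nbhdUnion E (Q v) ∆ nbhdUnion E (Q w)) ≤ 1680 * Fintype.card V) :
    ∃ x, ∀ v ∈ T, Adj E v x := by
  by_contra hcon
  obtain ⟨w, hw⟩ := hT
  have hne : #T ≠ 1 := by
    intro hT1
    obtain ⟨u, rfl⟩ := card_eq_one.1 hT1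
    obtain ⟨x, hx⟩ : (nbhd E u).Nonempty := card_pos.1 (by have := h.hasLargeDegrees u; omega)
    exact hcon ⟨x, by simpa using mem_nbhd.1 hx⟩
  choose P hP hPq hPT using
    h.hasLargeDegrees.exists_subset_nbhd (q := q) (T := T) (by omega)
  have hjoint : 1000 * #{x | ∀ v ∈ T, x ∉ nbhdUnion E (P v)} < Fintype.card V := by
    obtain hT2 | hT3 : #T = 2 ∨ #T = 3 := by
      have := card_pos.2 ⟨w, hw⟩
      omega
    · exact h.jointExpansion_two T hT2 hcon P fun v _ => ⟨hP v, hPq v, hPT v⟩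
    · exact h.jointExpansion_three T hT3 hcon P fun v _ => ⟨hP v, hPq v, hPT v⟩
  have hdist (v) (hv : v ∈ T) :
      20000 * #(nbhdUnion E (P v) \ nbhdUnion E (Q w)) ≤ 1764 * Fintype.card V := by
    have := h.card_symmDiff_le_of_subset_nbhd hn (hP v) (hQ v).1 (hPq v) (hQ v).2
    have := hclose v hv w hw
    have := card_symmDiff_le_add (nbhdUnion E (P v)) (nbhdUnion E (Q v)) (nbhdUnion E (Q w))
    have := card_le_card (subset_union_left.trans_eq (symmDiff_def _ _).symm :
      nbhdUnion E (P v) \ nbhdUnion E (Q w) ⊆ nbhdUnion E (P v) ∆ nbhdUnion E (Q w))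
    omega
  have hsum : 20000 * ∑ v ∈ T, #(nbhdUnion E (P v) \ nbhdUnion E (Q w)) ≤
      3 * (1764 * Fintype.card V) := calc
    _ ≤ #T * (1764 * Fintype.card V) := by
      rw [mul_sum]
      exact sum_le_card_nsmul T _ _ hdist
    _ ≤ 3 * (1764 * Fintype.card V) := by gcongr
  have := h.smallNbhdExpansion w _ (hQ w).1 (hQ w).2
  have := card_le_add_sum_card_sdiff (fun v => nbhdUnion E (P v)) T (nbhdUnion E (Q w))
  omega

theorem hasCommonNeighbors (h : IsExpanding E q)
    (hn : 64 * (2 * q + 4) ≤ Fintype.card V) {Q : V → Finset V}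
    (hQ : ∀ v, Q v ⊆ nbhd E v ∧ #(Q v) = q) {A : Set V}
    (hclose : ∀ v ∈ A, ∀ w ∈ A,
      20000 * #(nbhdUnion E (Q v) ∆ nbhdUnion E (Q w)) ≤ 1680 * Fintype.card V) :
    HasCommonNeighbors E A := by
  intro u hu v hv w hw
  have hsub : ∀ x ∈ ({u, v, w} : Finset V), x ∈ A := by simp [hu, hv, hw]
  obtain ⟨x, hx⟩ := h.exists_forall_adj_of_card_symmDiff_le hn hQ (insert_nonempty _ _)
    card_le_three fun a ha b hb => hclose a (hsub a ha) b (hsub b hb)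
  exact ⟨x, (hx u (by simp)).symm, (hx v (by simp)).symm, (hx w (by simp)).symm⟩

theorem card_symmDiff_le_or_le (h : IsExpanding E q) (hq : q ≠ 0)
    (hn : 64 * (2 * q + 4) ≤ Fintype.card V) {Q : V → Finset V}
    (hQ : ∀ v, Q v ⊆ nbhd E v ∧ #(Q v) = q) (v w : V) :
    20000 * #(nbhdUnion E (Q v) ∆ nbhdUnion E (Q w)) ≤ 840 * Fintype.card V ∨
      19160 * Fintype.card V ≤ 20000 * #(nbhdUnion E (Q v) ∆ nbhdUnion E (Q w)) := by
  set R : V → Finset V := fun v => nbhdUnion E (Q v)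
  change 20000 * #(R v ∆ R w) ≤ _ ∨ _ ≤ 20000 * #(R v ∆ R w)
  have hadj {x y} (hxy : Adj E x y) : 19790 * Fintype.card V ≤ 20000 * #(R x ∆ R y) :=
    h.le_card_symmDiff_of_adj hn hxy (hQ x).1 (hQ y).1 (hQ x).2 (hQ y).2
  have htwo {x u} (hu : u ∈ R x) : 20000 * #(R u ∆ R x) ≤ 420 * Fintype.card V := by
    obtain ⟨z, hz, hzu⟩ := mem_nbhdUnion.1 hu
    have := hadj hzu.symm
    have := hadj (mem_nbhd.1 ((hQ x).1 hz)).symm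
    have := card_symmDiff_add_add_le (R u) (R z) (R x)
    omega
  obtain ⟨z, hz⟩ : (Q w).Nonempty := card_pos.1 (by have := (hQ w).2; omega)
  have hwz := hadj (mem_nbhd.1 ((hQ w).1 hz))
  obtain ⟨u, hvu, hu⟩ : ∃ u ∈ nbhd E v, u ∈ R w ∪ R z := by
    by_contra! hcon
    have := card_le_card (show nbhd E v ⊆ (R w ∪ R z)ᶜ from fun u hu => mem_compl.2 (hcon u hu))
    have := h.hasLargeDegrees v
    have : _ ≤ 20000 * #(R w) := h.largeExpansion (Q w) (hQ w).2
    have : _ ≤ 20000 * #(R z) := h.largeExpansion (Q z) (hQ z).2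
    have := card_symmDiff_add_card_add_card (R w) (R z)
    omega
  have hvu := hadj (mem_nbhd.1 hvu)
  obtain hu | hu := mem_union.1 hu
  · right
    have := htwo hu
    have := card_symmDiff_le_add (R v) (R w) (R u)
    rw [symmDiff_comm (R w)] at this
    omega
  · left
    have := htwo hu
    have := card_symmDiff_le_add (R v) (R z) (R u)
    have := card_symmDiff_add_add_le (R v) (R z) (R w)
    rw [symmDiff_comm] at hwz
    rw [symmDiff_comm (R z) (R u)] at *
    omega

theorem exists_levelling (h : IsExpanding E q) (hq : q ≠ 0)
    (hn : 64 * (2 * q + 4) ≤ Fintype.card V) :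
    (∃ l : V → Fin 3, IsLevelling E l) ∨
      ∃ l : V → Fin 4, IsLevelling E l ∧ (∃ v, l v = 0) ∧ ∃ v, l v = 3 := by
  choose Q hQs hQq _ using h.hasLargeDegrees.exists_subset_nbhd (q := q) (T := ∅)
    (by rw [card_empty]; omega)
  have hQ (v) : Q v ⊆ nbhd E v ∧ #(Q v) = q := ⟨hQs v, hQq v⟩
  set R : V → Finset V := fun v => nbhdUnion E (Q v)
  obtain ⟨z⟩ : Nonempty V := Fintype.card_pos_iff.1 (by omega)
  let A : Set V := {v | 20000 * #(R v ∆ R z) ≤ 840 * Fintype.card V}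
  have hfar {v} (hv : v ∉ A) : 19160 * Fintype.card V ≤ 20000 * #(R v ∆ R z) :=
    (h.card_symmDiff_le_or_le hq hn hQ v z).resolve_left hv
  have hA : ∀ v ∈ A, ∀ w ∈ A, 20000 * #(R v ∆ R w) ≤ 1680 * Fintype.card V := by
    intro v hv w hw
    have hv : 20000 * #(R v ∆ R z) ≤ _ := hv
    have hw : 20000 * #(R w ∆ R z) ≤ _ := hw
    have := card_symmDiff_le_add (R v) (R z) (R w)
    rw [symmDiff_comm] at hw
    omega
  have hAc : ∀ v ∈ Aᶜ, ∀ w ∈ Aᶜ, 20000 * #(R v ∆ R w) ≤ 1680 * Fintype.card V := by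
    intro v hv w hw
    have hv := hfar hv
    have hw := hfar hw
    have := card_symmDiff_add_add_le (R v) (R z) (R w)
    rw [symmDiff_comm] at hw
    omega
  refine IsBipartition.exists_levelling (A := A) (B := Aᶜ) ⟨fun _ => Iff.rfl, ?_⟩ h.isHasseLike
    (h.hasCommonNeighbors hn hQ hA) (h.hasCommonNeighbors hn hQ hAc)
  intro v w hvw
  have hvw : _ ≤ 20000 * #(R v ∆ R w) :=
    h.le_card_symmDiff_of_adj hn hvw (hQs v) (hQs w) (hQq v) (hQq w)
  refine ⟨fun hv hw => ?_, fun hw => by_contra fun hv => ?_⟩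
  · have := hA v hv w hw
    omega
  · have := hAc v hv w hw
    omega

end IsExpanding

end Expansion

section Exceptional

variable {V : Type*} [Fintype V] {E : Finset (V × V)}

theorem nbhdUnion_deleteVerts_subset (E : Finset (V × V)) (T Q : Finset V) :
    nbhdUnion (deleteVerts E T) Q ⊆ nbhdUnion E Q := by
  intro x
  simp only [mem_nbhdUnion, adj_deleteVerts]
  exact fun ⟨z, hz, hzx, _⟩ => ⟨z, hz, hzx⟩

theorem nbhdUnion_subset_union {T Q : Finset V} (h : Disjoint Q T) :
    nbhdUnion E Q ⊆ nbhdUnion (deleteVerts E T) Q ∪ T := by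
  intro x
  simp only [mem_nbhdUnion, adj_deleteVerts, mem_union]
  rintro ⟨z, hz, hzx⟩
  by_cases hxT : x ∈ T
  · exact .inr hxT
  · exact .inl ⟨z, hz, hzx, disjoint_left.1 h hz, hxT⟩

theorem card_compl_nbhdUnion_deleteVerts_le {T Q : Finset V} (h : Disjoint Q T) :
    #(nbhdUnion (deleteVerts E T) Q)ᶜ + #(nbhdUnion E Q) ≤ Fintype.card V + #T := by
  have := card_le_card (nbhdUnion_subset_union (E := E) h)
  have := card_union_le (nbhdUnion (deleteVerts E T) Q) T
  have := card_add_card_compl (nbhdUnion (deleteVerts E T) Q)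
  omega

theorem IsHasseLike.nbhd_subset_compl (hE : IsHasseLike E) {v : V} {Q : Finset V} (T : Finset V)
    (hQ : Q ⊆ nbhd E v) : nbhd E v ⊆ (nbhdUnion (deleteVerts E T) Q)ᶜ := by
  intro x hx
  rw [mem_compl]
  intro hxQ
  obtain ⟨z, hz, hzx⟩ := mem_nbhdUnion.1 (nbhdUnion_deleteVerts_subset E T Q hxQ)
  exact hE.no_triangle v z x (mem_nbhd.1 (hQ hz)) hzx (mem_nbhd.1 hx)

theorem card_not_largeExpansion_le [Nonempty V] {q : ℕ} (hq : 128 * q ≤ Fintype.card V) :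
    #{E : Finset (V × V) | IsHasseLike E ∧ HasLargeDegrees E ∧ ¬ LargeExpansion E q} ≤
      codeCount (Fintype.card V) q * (2 ^ Fintype.card V *
        (2 ^ (9999 * Fintype.card V / 20000)) ^ q * hasseLikeCount (Fintype.card V - q)) := by
  rw [← Fintype.card_finset]
  refine card_le_codeCount_mul (D := Finset V) (fun E hE => ?_) hq
    (fun _ R _ => if 20000 * #R < 9999 * Fintype.card V then
      Fintype.piFinset fun _ => R.powerset else ∅) (fun _ R _ => ?_) fun E hE => ?_
  · rw [mem_filter_univ] at hE
    exact ⟨hE.1, hE.2.1⟩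
  · split_ifs with hR
    · simp only [Fintype.card_piFinset, card_powerset, prod_const, card_univ, Fintype.card_fin]
      exact Nat.pow_le_pow_left (Nat.pow_le_pow_right two_pos (by omega)) _
    · simp
  · simp only [mem_filter_univ, LargeExpansion, not_forall, not_le] at hE
    obtain ⟨-, -, Q, hQ, hsmall⟩ := hE
    refine ⟨fun i => (Q.equivFinOfCardEq hQ).symm i, Subtype.val_injective.comp
      (Equiv.injective _), nbhdUnion E Q, ?_⟩
    rw [if_pos hsmall, Fintype.mem_piFinset]
    exact fun i => mem_powerset.2 (subset_biUnion_of_mem (nbhd E) (Subtype.coe_prop _))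

theorem card_not_smallNbhdExpansion_le (q : ℕ) (hV : 128 ≤ Fintype.card V) :
    #{E : Finset (V × V) | IsHasseLike E ∧ HasLargeDegrees E ∧ ¬ SmallNbhdExpansion E q} ≤
      codeCount (Fintype.card V) 1 * ((Fintype.card V).choose q *
        2 ^ (9999 * Fintype.card V / 20000 + 1) * hasseLikeCount (Fintype.card V - 1)) := by
  have : Nonempty V := Fintype.card_pos_iff.1 (by omega)
  rw [← Fintype.card_finset_len]
  refine card_le_codeCount_mul (D := {Q : Finset V // #Q = q}) (fun E hE => ?_) (by omega)
    (fun _ Q E₀ => if 20000 * #(nbhdUnion E₀ Q)ᶜ ≤ 9999 * Fintype.card V + 20000 then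
      Fintype.piFinset fun _ => (nbhdUnion E₀ Q)ᶜ.powerset else ∅) (fun _ Q E₀ => ?_) fun E hE => ?_
  · rw [mem_filter_univ] at hE
    exact ⟨hE.1, hE.2.1⟩
  · split_ifs with hQ
    · simp only [Fintype.card_piFinset, card_powerset, prod_const, card_univ, Fintype.card_fin,
        pow_one]
      exact Nat.pow_le_pow_right two_pos (by omega)
    · simp
  · simp only [mem_filter_univ, SmallNbhdExpansion, not_forall, not_le] at hE
    obtain ⟨hE, -, v, Q, hQv, hQq, hlarge⟩ := hE
    refine ⟨fun _ => v, fun _ _ _ => Subsingleton.elim _ _, ⟨Q, hQq⟩, ?_⟩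
    have hcard := card_compl_nbhdUnion_deleteVerts_le (E := E) (Q := Q) (T := {v})
      (disjoint_singleton_right.2 fun hv => hE.not_adj_self _ (mem_nbhd.1 (hQv hv)))
    rw [card_singleton] at hcard
    rw [univ_unique, image_singleton, if_pos (by dsimp only; omega), Fintype.mem_piFinset]
    exact fun i => mem_powerset.2 (hE.nbhd_subset_compl _ hQv)

/-- The families of subsets `S i ⊆ C i` with no element common to all of them: the candidates for
the neighbourhoods of vertices without a common neighbour. -/
noncomputable def independentRows {ι : Type*} [Fintype ι] (C : ι → Finset V) :
    Finset (ι → Finset V) :=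
  {S ∈ Fintype.piFinset fun i => (C i).powerset | ¬ ∃ x, ∀ i, x ∈ S i}

theorem mem_independentRows {ι : Type*} [Fintype ι] {C S : ι → Finset V} :
    S ∈ independentRows C ↔ (∀ i, S i ⊆ C i) ∧ ¬ ∃ x, ∀ i, x ∈ S i := by
  simp [independentRows]

/-- A bound for the number of families in `independentRows C` when `C` consists of `j` subsets of an
`n`-element set that are at most slightly larger than `n / 2` and have `n / 1000` common
elements. -/
noncomputable def jointBound (n j : ℕ) : ℕ :=
  ⌊(2 : ℝ) ^ (j * (10001 * n / 20000 + j) : ℝ) * (1 - 1 / 2 ^ j : ℝ) ^ (n / 1000 : ℝ)⌋₊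

theorem card_independentRows_le {ι : Type*} [Fintype ι] (C : ι → Finset V) :
    (#(independentRows C) : ℝ) ≤
      2 ^ (∑ i, #(C i)) * (1 - 1 / 2 ^ Fintype.card ι) ^ #{x | ∀ i, x ∈ C i} := by
  let F (x : V) : Finset (Finset ι) := (powerset {i | x ∈ C i}).erase univ
  have hF : #(independentRows C) ≤ #(Fintype.piFinset F) := by
    refine card_le_card_of_injOn (fun S x => {i | x ∈ S i}) (fun S hS => ?_) fun S _ S' _ heq => ?_
    · rw [mem_coe, mem_independentRows, not_exists] at hS
      simp only [mem_coe, Fintype.mem_piFinset, F, mem_erase, mem_powerset, ne_eq,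
        eq_univ_iff_forall]
      exact fun x => ⟨by simpa using hS.2 x, fun i hi => by simpa using hS.1 i (by simpa using hi)⟩
    · ext i x
      simpa using Finset.ext_iff.1 (congrFun heq x) i
  have hFx (x : V) : (#(F x) : ℝ) = 2 ^ #{i | x ∈ C i} *
      if ∀ i, x ∈ C i then (1 - 1 / 2 ^ Fintype.card ι : ℝ) else 1 := by
    dsimp only [F]
    split_ifs with hx
    · rw [filter_true_of_mem fun i _ => hx i, card_erase_of_mem (by simp), card_powerset,
        card_univ, Nat.cast_sub Nat.one_le_two_pow]
      push_cast
      field_simp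
    · rw [erase_eq_of_notMem, card_powerset, mul_one, Nat.cast_pow, Nat.cast_ofNat]
      simpa only [mem_powerset, univ_subset_iff, eq_univ_iff_forall, mem_filter_univ] using hx
  have hsum : ∑ i, #(C i) = ∑ x, #{i | x ∈ C i} := by
    simp only [card_filter]
    rw [sum_comm]
    simp
  calc
    _ ≤ (∏ x, #(F x) : ℝ) := by exact_mod_cast hF.trans_eq (Fintype.card_piFinset F)
    _ = _ := by simp only [hFx, prod_mul_distrib, hsum, prod_pow_eq_pow_sum, prod_ite, prod_const,
        one_pow, mul_one]

theorem card_independentRows_le_jointBound {ι : Type*} [Fintype ι] [Nonempty ι] {C : ι → Finset V}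
    (hC : ∀ i, 20000 * #(C i) ≤ 10001 * Fintype.card V + 20000 * Fintype.card ι)
    (hcommon : Fintype.card V ≤ 1000 * #{x | ∀ i, x ∈ C i}) :
    #(independentRows C) ≤ jointBound (Fintype.card V) (Fintype.card ι) := by
  have hpow : (1 : ℝ) < 2 ^ Fintype.card ι := one_lt_pow₀ one_lt_two Fintype.card_ne_zero
  have hbase : (1 : ℝ) / 2 ^ Fintype.card ι < 1 := (div_lt_one (by positivity)).2 hpow
  have hsum : ((∑ i, #(C i) : ℕ) : ℝ) ≤
      Fintype.card ι * (10001 * Fintype.card V / 20000 + Fintype.card ι) := by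
    rw [Nat.cast_sum, ← nsmul_eq_mul]
    refine sum_le_card_nsmul _ _ _ fun i _ => ?_
    have : (20000 * #(C i) : ℝ) ≤ 10001 * Fintype.card V + 20000 * Fintype.card ι := by
      exact_mod_cast hC i
    linarith
  have hcommon' : (Fintype.card V / 1000 : ℝ) ≤ #{x | ∀ i, x ∈ C i} := by
    rw [div_le_iff₀' (by norm_num)]
    exact_mod_cast hcommon
  refine Nat.le_floor ((card_independentRows_le C).trans ?_)
  rw [← Real.rpow_natCast 2, ← Real.rpow_natCast (1 - _)]
  exact mul_le_mul (Real.rpow_le_rpow_of_exponent_le one_le_two hsum)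
    (Real.rpow_le_rpow_of_exponent_ge (sub_pos.2 hbase) (sub_le_self _ (by positivity)) hcommon')
    (Real.rpow_nonneg (sub_pos.2 hbase).le _) (by positivity)

theorem card_not_jointExpansion_le {q j : ℕ} (hj : j ≠ 0) (hV : 128 * j ≤ Fintype.card V) :
    #{E : Finset (V × V) | IsHasseLike E ∧ HasLargeDegrees E ∧ LargeExpansion E q ∧
        ¬ JointExpansion E q j} ≤
      codeCount (Fintype.card V) j * ((Fintype.card V).choose q ^ j *
        jointBound (Fintype.card V) j * hasseLikeCount (Fintype.card V - j)) := by
  have : Nonempty V := Fintype.card_pos_iff.1 (by omega)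
  have : NeZero j := ⟨hj⟩
  have hD : (Fintype.card V).choose q ^ j = Fintype.card (Fin j → {Q : Finset V // #Q = q}) := by
    simp only [Fintype.card_pi, prod_const, card_univ, Fintype.card_fin, Fintype.card_finset_len]
  rw [hD]
  refine card_le_codeCount_mul (fun E hE => ?_) hV (fun _ Q E₀ =>
    if (∀ i, 20000 * #(nbhdUnion E₀ (Q i))ᶜ ≤ 10001 * Fintype.card V + 20000 * j) ∧
        Fintype.card V ≤ 1000 * #{x | ∀ i, x ∈ (nbhdUnion E₀ (Q i))ᶜ} then
      independentRows fun i => (nbhdUnion E₀ (Q i))ᶜ else ∅) (fun _ Q E₀ => ?_) fun E hE => ?_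
  · rw [mem_filter_univ] at hE
    exact ⟨hE.1, hE.2.1⟩
  · split_ifs with hQ
    · have hrows := card_independentRows_le_jointBound (C := fun i => (nbhdUnion E₀ (Q i))ᶜ)
        (by simpa only [Fintype.card_fin] using hQ.1) (by convert hQ.2)
      rwa [Fintype.card_fin] at hrows
    · simp
  · simp only [mem_filter_univ, JointExpansion, not_forall, not_lt] at hE
    obtain ⟨hE, -, hlarge, T, hT, hcommon, Q, hQ, hjoint⟩ := hE
    let e := (T.equivFinOfCardEq hT).symm
    have himage : univ.image (fun i => (e i : V)) = T := by
      ext v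
      simpa using ⟨fun ⟨i, hi⟩ => hi ▸ (e i).2, fun hv => ⟨e.symm ⟨v, hv⟩, by simp⟩⟩
    have hforall (p : V → Prop) : (∀ i, p (e i)) ↔ ∀ v ∈ T, p v :=
      (e.forall_congr_right (q := fun v : T => p v)).trans Subtype.forall
    refine ⟨fun i => e i, Subtype.val_injective.comp e.injective,
      fun i => ⟨Q (e i), (hQ _ (e i).2).2.1⟩, ?_⟩
    rw [himage, if_pos]
    · refine mem_independentRows.2 ⟨fun i => hE.nbhd_subset_compl T (hQ _ (e i).2).1, ?_⟩
      rintro ⟨x, hx⟩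
      exact hcommon ⟨x, (hforall fun v => Adj E v x).1 fun i => mem_nbhd.1 (hx i)⟩
    · refine ⟨fun i => ?_, ?_⟩
      · obtain ⟨-, hQq, hQT⟩ := hQ _ (e i).2
        have hcard := card_compl_nbhdUnion_deleteVerts_le (E := E) hQT
        have := hlarge _ hQq
        dsimp only
        omega
      · refine hjoint.trans (Nat.mul_le_mul_left _ (card_le_card fun x => ?_))
        simp only [mem_filter_univ, mem_compl]
        exact fun hx i hxi => hx _ (e i).2 (nbhdUnion_deleteVerts_subset E T _ hxi)

theorem card_filter_powerset_le {α : Type*} (s : Finset α) {c : ℝ} (hc : 1 ≤ c) (t : ℝ) :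
    (#{S ∈ s.powerset | (#S : ℝ) ≤ t} : ℝ) ≤ c ^ t * (1 + c⁻¹) ^ #s := by
  have : 0 < c := one_pos.trans_le hc
  calc (#{S ∈ s.powerset | (#S : ℝ) ≤ t} : ℝ)
      = ∑ S ∈ s.powerset with (#S : ℝ) ≤ t, 1 := by simp
    _ ≤ ∑ S ∈ s.powerset with (#S : ℝ) ≤ t, c ^ t * c⁻¹ ^ #S := by
        refine sum_le_sum fun S hS => ?_
        rw [inv_pow, ← div_eq_mul_inv, one_le_div₀ (by positivity), ← Real.rpow_natCast]
        exact Real.rpow_le_rpow_of_exponent_le hc (mem_filter.1 hS).2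
    _ ≤ ∑ S ∈ s.powerset, c ^ t * c⁻¹ ^ #S :=
        sum_le_sum_of_subset_of_nonneg (filter_subset _ _) fun _ _ _ => by positivity
    _ = c ^ t * (1 + c⁻¹) ^ #s := by
        rw [← mul_sum, add_comm, ← sum_pow_mul_eq_add_pow]
        simp only [one_pow, mul_one]

theorem card_smallDegree_le (v : V) :
    #{E : Finset (V × V) | IsHasseLike E ∧ 64 * #(nbhd E v) < Fintype.card V} ≤
      #{S : Finset V | 64 * #S ≤ Fintype.card V} ^ 2 * hasseLikeCount (Fintype.card V - 1) := by
  rw [← card_singleton v]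
  refine card_le_mul_hasseLikeCount (fun E hE => (mem_filter.1 hE).2.1) fun E₀ => ?_
  rw [sq, ← card_product]
  refine card_le_card_of_injOn (fun E => (({x | (v, x) ∈ E} : Finset V),
      ({x | (x, v) ∈ E} : Finset V))) (fun E hE => ?_) fun E hE E' hE' heq => ?_
  · simp only [coe_filter, mem_filter_univ, Set.mem_ofPred_eq] at hE
    have hsmall {S : Finset V} (hS : S ⊆ nbhd E v) : 64 * #S ≤ Fintype.card V :=
      (Nat.mul_le_mul_left _ (card_le_card hS)).trans hE.1.2.le
    rw [mem_coe, mem_product, mem_filter_univ, mem_filter_univ]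
    refine ⟨hsmall fun x => ?_, hsmall fun x => ?_⟩
    · simpa only [mem_filter_univ, mem_nbhd, Adj] using Or.inl
    · simpa only [mem_filter_univ, mem_nbhd, Adj] using Or.inr
  · simp only [coe_filter, mem_filter_univ, Set.mem_ofPred_eq] at hE hE'
    simp only [Prod.mk.injEq, Finset.ext_iff, mem_filter_univ] at heq
    ext ⟨x, y⟩
    by_cases hx : x = v
    · exact hx ▸ heq.1 y
    by_cases hy : y = v
    · exact hy ▸ heq.2 x
    have hdel := Finset.ext_iff.1 (hE.2.trans hE'.2.symm) (x, y)
    simpa [mem_deleteVerts, hx, hy] using hdel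

theorem card_not_hasLargeDegrees_le :
    #{E : Finset (V × V) | IsHasseLike E ∧ ¬ HasLargeDegrees E} ≤
      Fintype.card V * (#{S : Finset V | 64 * #S ≤ Fintype.card V} ^ 2 *
        hasseLikeCount (Fintype.card V - 1)) := by
  have hsub : ({E | IsHasseLike E ∧ ¬ HasLargeDegrees E} : Finset (Finset (V × V))) ⊆
      univ.biUnion fun v => {E | IsHasseLike E ∧ 64 * #(nbhd E v) < Fintype.card V} := by
    intro E
    simp [HasLargeDegrees]
  exact (card_le_card hsub).trans (card_biUnion_le_card_mul _ _ _ fun v _ => card_smallDegree_le v)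

end Exceptional

section Levelled

variable {V : Type*} [Fintype V] {E : Finset (V × V)} {m : ℕ}

/-- The set of vertices on level `i`. -/
noncomputable def level (l : V → Fin m) (i : Fin m) : Finset V := {v | l v = i}

/-- The arcs leading from some level to the next one. -/
noncomputable def levelArcs (l : V → Fin m) : Finset (V × V) := {e | (l e.2 : ℕ) = l e.1 + 1}

/-- A levelling in which each vertex is joined to at least one hundredth of all vertices on each
level next to its own. -/
structure IsRichLevelling (E : Finset (V × V)) (l : V → Fin m) : Prop where
  isLevelling : IsLevelling E l
  le_card : ∀ v i, (SimpleGraph.pathGraph m).Adj (l v) i →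
    Fintype.card V ≤ 100 * #{x ∈ level l i | Adj E v x}

/-- The digraphs with a rich levelling on three levels. -/
noncomputable def richDigraphs (V : Type*) [Fintype V] : Finset (Finset (V × V)) :=
  {E | ∃ l : V → Fin 3, IsRichLevelling E l}

/-- The Hasse-like digraphs with no rich levelling on three levels. -/
noncomputable def poorDigraphs (V : Type*) [Fintype V] : Finset (Finset (V × V)) :=
  {E | IsHasseLike E ∧ E ∉ richDigraphs V}

/-- The digraphs with a levelling on four levels whose first and last levels are nonempty. -/
noncomputable def fourLevelDigraphs (V : Type*) [Fintype V] : Finset (Finset (V × V)) :=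
  {E | ∃ l : V → Fin 4, IsLevelling E l ∧ (∃ v, l v = 0) ∧ ∃ v, l v = 3}

/-- The number of levellings on three levels, counted over all digraphs on `V`. -/
noncomputable def levellingCount (V : Type*) [Fintype V] : ℕ :=
  ∑ l : V → Fin 3, #{E : Finset (V × V) | IsLevelling E l}

/-- The number of levellings on three levels that are not rich, counted over all digraphs on `V`. -/
noncomputable def poorLevellingCount (V : Type*) [Fintype V] : ℕ :=
  ∑ l : V → Fin 3, #{E : Finset (V × V) | IsLevelling E l ∧ ¬ IsRichLevelling E l}

/-- The order of magnitude of the number of digraphs that have a levelling with three levels. -/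
noncomputable def mainTerm (n : ℕ) : ℝ := 2 ^ ((n : ℝ) + ((n : ℝ) + 1) ^ 2 / 4)

theorem mem_level {l : V → Fin m} {i : Fin m} {v : V} : v ∈ level l i ↔ l v = i := by simp [level]

theorem mem_levelArcs {l : V → Fin m} {x y : V} : (x, y) ∈ levelArcs l ↔ (l y : ℕ) = l x + 1 := by
  simp [levelArcs]

theorem mem_richDigraphs : E ∈ richDigraphs V ↔ ∃ l : V → Fin 3, IsRichLevelling E l := by
  simp [richDigraphs]

theorem mem_poorDigraphs : E ∈ poorDigraphs V ↔ IsHasseLike E ∧ E ∉ richDigraphs V := by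
  simp [poorDigraphs]

theorem mem_fourLevelDigraphs : E ∈ fourLevelDigraphs V ↔
    ∃ l : V → Fin 4, IsLevelling E l ∧ (∃ v, l v = 0) ∧ ∃ v, l v = 3 := by
  simp [fourLevelDigraphs]

theorem isLevelling_iff_subset {l : V → Fin m} : IsLevelling E l ↔ E ⊆ levelArcs l := by
  simp only [IsLevelling, subset_iff, Prod.forall, mem_levelArcs]

theorem filter_isLevelling (l : V → Fin m) :
    ({E | IsLevelling E l} : Finset (Finset (V × V))) = (levelArcs l).powerset := by
  ext E
  simp [isLevelling_iff_subset]

theorem sum_card_level (l : V → Fin m) : ∑ i, #(level l i) = Fintype.card V :=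
  (card_eq_sum_card_fiberwise fun _ _ => mem_univ _).symm

theorem sum_prod_pow_card_level (w : Fin m → ℝ) :
    ∑ l : V → Fin m, ∏ i, w i ^ #(level l i) = (∑ i, w i) ^ Fintype.card V := by
  have hexpand := prod_univ_sum (fun _ : V => (univ : Finset (Fin m))) fun _ i => w i
  rw [prod_const, card_univ, Fintype.piFinset_univ] at hexpand
  refine hexpand ▸ sum_congr rfl fun l _ => ?_
  rw [← prod_fiberwise_of_maps_to (t := univ) (g := l) fun _ _ => mem_univ _]
  refine prod_congr rfl fun i _ => ?_
  rw [prod_congr rfl fun v hv => congrArg w (mem_filter.1 hv).2, prod_const, level]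

theorem card_levelArcs_three (l : V → Fin 3) :
    #(levelArcs l) = #(level l 1) * (#(level l 0) + #(level l 2)) := by
  have hunion : levelArcs l = level l 0 ×ˢ level l 1 ∪ level l 1 ×ˢ level l 2 := by
    ext ⟨x, y⟩
    simp only [mem_levelArcs, mem_union, mem_product, mem_level]
    generalize l x = a, l y = b
    decide +revert
  have hdisj : Disjoint (level l 0 ×ˢ level l 1) (level l 1 ×ˢ level l 2) :=
    disjoint_product.2 (.inl (disjoint_left.2 fun v h₀ h₁ => by simp_all [mem_level]))
  rw [hunion, card_union_of_disjoint hdisj, card_product, card_product]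
  ring

theorem four_mul_card_levelArcs_three_le (l : V → Fin 3) :
    4 * #(levelArcs l) ≤ Fintype.card V ^ 2 := by
  rw [card_levelArcs_three, ← sum_card_level l, Fin.sum_univ_three]
  zify
  nlinarith [sq_nonneg ((#(level l 0) : ℤ) - #(level l 1) + #(level l 2))]

theorem four_mul_card_levelArcs_four_le (l : V → Fin 4) :
    4 * (#(levelArcs l) + #(level l 0) * #(level l 3)) ≤ Fintype.card V ^ 2 := by
  have hsub : levelArcs l ⊆
      level l 0 ×ˢ level l 1 ∪ level l 1 ×ˢ level l 2 ∪ level l 2 ×ˢ level l 3 := by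
    rintro ⟨x, y⟩
    simp only [mem_levelArcs, mem_union, mem_product, mem_level]
    generalize l x = a, l y = b
    decide +revert
  have hcard := (card_le_card hsub).trans
    ((card_union_le _ _).trans (Nat.add_le_add_right (card_union_le _ _) _))
  simp only [card_product] at hcard
  rw [← sum_card_level l, Fin.sum_univ_four]
  zify at hcard ⊢
  nlinarith [sq_nonneg ((#(level l 0) : ℤ) - #(level l 1) + #(level l 2) - #(level l 3))]

theorem two_pow_le_of_four_mul_le_sq {u n : ℕ} (h : 4 * u ≤ n ^ 2) :
    (2 : ℝ) ^ u ≤ 2 ^ ((n : ℝ) ^ 2 / 4) := by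
  rw [← Real.rpow_natCast]
  refine Real.rpow_le_rpow_of_exponent_le one_le_two ?_
  rw [le_div_iff₀' (by norm_num)]
  exact_mod_cast h

theorem half_pow_mul_le {p r : ℕ} (hp : p ≠ 0) (hr : r ≠ 0) :
    (1 / 2 : ℝ) ^ (p * r) ≤
      4 * ((1 / 4) ^ p * (1 / 2) ^ r) + 4 * ((1 / 2) ^ p * (1 / 4) ^ r) := by
  have hquarter (k : ℕ) : (1 / 4 : ℝ) ^ k = (1 / 2) ^ (2 * k) := by
    rw [pow_mul]
    norm_num
  have hfour : (4 : ℝ) = ((1 / 2) ^ 2)⁻¹ := by norm_num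
  have hle {e : ℕ} (he : e ≤ p * r + 2) : (1 / 2 : ℝ) ^ (p * r) ≤ 4 * (1 / 2) ^ e := by
    rw [hfour, le_inv_mul_iff₀ (by positivity), ← pow_add, add_comm]
    exact pow_le_pow_of_le_one (by norm_num) (by norm_num) he
  rw [hquarter, hquarter, ← pow_add, ← pow_add]
  rcases (show r = 1 ∨ 2 ≤ r by omega) with rfl | hr₂
  · exact (hle (by omega)).trans (le_add_of_nonneg_left (by positivity))
  · refine (hle ?_).trans (le_add_of_nonneg_right (by positivity))
    obtain ⟨p, rfl⟩ := Nat.exists_eq_succ_of_ne_zero hp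
    obtain ⟨r, rfl⟩ := Nat.exists_eq_add_of_le hr₂
    nlinarith [Nat.zero_le (p * r)]

theorem card_fourLevelDigraphs_le :
    (#(fourLevelDigraphs V) : ℝ) ≤
      8 * (11 / 4) ^ Fintype.card V * 2 ^ ((Fintype.card V : ℝ) ^ 2 / 4) := by
  let weight (l : V → Fin 4) : ℝ :=
    4 * ((1 / 4) ^ #(level l 0) * (1 / 2) ^ #(level l 3)) +
      4 * ((1 / 2) ^ #(level l 0) * (1 / 4) ^ #(level l 3))
  let q : ℝ := 2 ^ ((Fintype.card V : ℝ) ^ 2 / 4)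
  have hq : 0 < q := by positivity
  let L : Finset (V → Fin 4) := {l | (∃ v, l v = 0) ∧ ∃ v, l v = 3}
  have hcover : fourLevelDigraphs V ⊆ L.biUnion fun l => (levelArcs l).powerset := by
    intro E
    simp only [mem_fourLevelDigraphs, mem_filter_univ, mem_biUnion, mem_powerset,
      isLevelling_iff_subset, L]
    exact fun ⟨l, hl, hL⟩ => ⟨l, hL, hl⟩
  have hone (l) (hl : l ∈ L) : (2 : ℝ) ^ #(levelArcs l) ≤ q * weight l := by
    obtain ⟨⟨v, hv⟩, w, hw⟩ := (mem_filter_univ l).1 hl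
    have h₀ : #(level l 0) ≠ 0 := card_ne_zero_of_mem (mem_level.2 hv)
    have h₃ : #(level l 3) ≠ 0 := card_ne_zero_of_mem (mem_level.2 hw)
    calc (2 : ℝ) ^ #(levelArcs l) ≤ q * (1 / 2) ^ (#(level l 0) * #(level l 3)) := by
          rw [one_div, inv_pow, ← div_eq_mul_inv, le_div_iff₀ (by positivity), ← pow_add]
          exact two_pow_le_of_four_mul_le_sq (four_mul_card_levelArcs_four_le l)
      _ ≤ q * weight l := mul_le_mul_of_nonneg_left (half_pow_mul_le h₀ h₃) hq.le
  have hsum : ∑ l, weight l = 8 * (11 / 4) ^ Fintype.card V := by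
    have h₁ := sum_prod_pow_card_level (V := V) ![1 / 4, 1, 1, 1 / 2]
    have h₂ := sum_prod_pow_card_level (V := V) ![1 / 2, 1, 1, 1 / 4]
    simp only [Fin.prod_univ_four, Fin.sum_univ_four, Matrix.cons_val, one_pow, mul_one] at h₁ h₂
    rw [sum_add_distrib, ← mul_sum, ← mul_sum, h₁, h₂]
    norm_num
    ring
  calc _ ≤ ∑ l ∈ L, (2 : ℝ) ^ #(levelArcs l) := by
        have hcard := (card_le_card hcover).trans card_biUnion_le
        simp only [card_powerset] at hcard
        exact_mod_cast hcard
    _ ≤ ∑ l ∈ L, q * weight l := sum_le_sum hone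
    _ ≤ ∑ l, q * weight l := sum_le_univ_sum_of_nonneg fun l => by positivity
    _ = 8 * (11 / 4) ^ Fintype.card V * q := by rw [← mul_sum, hsum, mul_comm]

theorem card_powerset_filter_le {α β : Type*} [DecidableEq β] (U : Finset β) {s : Finset α}
    {g : α → β} (hg : g.Injective) (hgU : ∀ x ∈ s, g x ∈ U) {c : ℝ} (hc : 1 ≤ c) (t : ℝ) :
    (#{F ∈ U.powerset | (#{x ∈ s | g x ∈ F} : ℝ) ≤ t} : ℝ) ≤
      2 ^ #U * (c ^ t * ((1 + c⁻¹) / 2) ^ #s) := by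
  have himage : s.image g ⊆ U := image_subset_iff.2 hgU
  have hsplit : #(U \ s.image g) + #s = #U := by
    rw [← card_image_of_injective s hg, card_sdiff_add_card_eq_card himage]
  have hle : #{F ∈ U.powerset | (#{x ∈ s | g x ∈ F} : ℝ) ≤ t} ≤
      #((U \ s.image g).powerset ×ˢ {S ∈ s.powerset | (#S : ℝ) ≤ t}) := by
    refine card_le_card_of_injOn (fun F => (F \ s.image g, {x ∈ s | g x ∈ F})) (fun F hF => ?_)
      fun F _ F' _ heq => ?_
    · simp only [coe_filter, mem_powerset, Set.mem_ofPred_eq] at hF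
      simp only [coe_product, Set.mem_prod, mem_coe, mem_powerset, mem_filter]
      exact ⟨sdiff_subset_sdiff hF.1 subset_rfl, filter_subset _ _, hF.2⟩
    · rw [Prod.mk.injEq] at heq
      ext e
      by_cases he : e ∈ s.image g
      · obtain ⟨x, hx, rfl⟩ := mem_image.1 he
        simpa [hx] using Finset.ext_iff.1 heq.2 x
      · simpa [he] using Finset.ext_iff.1 heq.1 e
  have hsmall := card_filter_powerset_le s hc t
  calc (#{F ∈ U.powerset | (#{x ∈ s | g x ∈ F} : ℝ) ≤ t} : ℝ)
      ≤ 2 ^ #(U \ s.image g) * #{S ∈ s.powerset | (#S : ℝ) ≤ t} := by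
        rw [card_product, card_powerset] at hle
        exact_mod_cast hle
    _ ≤ 2 ^ #(U \ s.image g) * (c ^ t * (1 + c⁻¹) ^ #s) := by gcongr
    _ = 2 ^ #U * (c ^ t * ((1 + c⁻¹) / 2) ^ #s) := by
        rw [← hsplit, pow_add, div_pow]
        field_simp

theorem card_fewArcs_le {l : V → Fin 3} {v : V} {i : Fin 3}
    (hi : (SimpleGraph.pathGraph 3).Adj (l v) i) :
    (#{E : Finset (V × V) | IsLevelling E l ∧
        100 * #{x ∈ level l i | Adj E v x} < Fintype.card V} : ℝ) ≤
      2 ^ ((Fintype.card V : ℝ) ^ 2 / 4) *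
        (5 ^ ((Fintype.card V : ℝ) / 100) * (3 / 5) ^ #(level l i)) := by
  let arc (x : V) : V × V := if (i : ℕ) = l v + 1 then (v, x) else (x, v)
  have harc : arc.Injective := fun x y hxy => by
    simp only [arc] at hxy
    split_ifs at hxy <;> simpa using hxy
  have hmem (x) (hx : x ∈ level l i) : arc x ∈ levelArcs l := by
    rw [mem_level] at hx
    rw [SimpleGraph.pathGraph_adj] at hi
    simp only [arc]
    split_ifs <;> rw [mem_levelArcs, hx] <;> omega
  have hfew := card_powerset_filter_le (levelArcs l) harc hmem (show (1 : ℝ) ≤ 5 by norm_num)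
    ((Fintype.card V : ℝ) / 100)
  rw [show ((1 : ℝ) + 5⁻¹) / 2 = 3 / 5 by norm_num] at hfew
  refine (Nat.cast_le.2 (card_le_card fun E hE => ?_)).trans (hfew.trans ?_)
  · obtain ⟨hE, hlt⟩ := (mem_filter_univ E).1 hE
    rw [mem_filter, mem_powerset, ← isLevelling_iff_subset, le_div_iff₀' (by norm_num)]
    have hfilter : {x ∈ level l i | arc x ∈ E} = {x ∈ level l i | Adj E v x} :=
      filter_congr fun x hx => by rw [IsLevelling.adj_iff hE, mem_level.1 hx]
    rw [hfilter]
    exact ⟨hE, mod_cast hlt.le⟩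
  · gcongr
    exact two_pow_le_of_four_mul_le_sq (four_mul_card_levelArcs_three_le l)

theorem card_isLevelling_not_isRichLevelling_le (l : V → Fin 3) :
    (#{E : Finset (V × V) | IsLevelling E l ∧ ¬ IsRichLevelling E l} : ℝ) ≤
      Fintype.card V * ∑ i, 2 ^ ((Fintype.card V : ℝ) ^ 2 / 4) *
        (5 ^ ((Fintype.card V : ℝ) / 100) * (3 / 5) ^ #(level l i)) := by
  have hcover : ({E | IsLevelling E l ∧ ¬ IsRichLevelling E l} : Finset (Finset (V × V))) ⊆
      univ.biUnion fun v => ({i | (SimpleGraph.pathGraph 3).Adj (l v) i} : Finset _).biUnion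
        fun i => {E | IsLevelling E l ∧ 100 * #{x ∈ level l i | Adj E v x} < Fintype.card V} := by
    intro E hE
    obtain ⟨hE, hrich⟩ := (mem_filter_univ E).1 hE
    by_contra hcon
    simp only [mem_biUnion, mem_univ, mem_filter_univ, true_and, not_exists, not_and, not_lt]
      at hcon
    exact hrich ⟨hE, fun v i hi => hcon v i hi hE⟩
  have hcard := (card_le_card hcover).trans
    (card_biUnion_le.trans (sum_le_sum fun v _ => card_biUnion_le))
  refine (Nat.cast_le.2 hcard).trans ?_
  rw [← nsmul_eq_mul, ← card_univ]
  push_cast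
  refine sum_le_card_nsmul _ _ _ fun v _ => ?_
  exact (sum_le_sum fun i hi => card_fewArcs_le ((mem_filter_univ i).1 hi)).trans
    (sum_le_univ_sum_of_nonneg fun i => by positivity)

theorem five_rpow_le (n : ℕ) : (5 : ℝ) ^ ((n : ℝ) / 100) ≤ (102 / 100) ^ n := by
  have hroot : (5 : ℝ) ^ (1 / 100 : ℝ) ≤ 102 / 100 := by
    rw [one_div, Real.rpow_inv_le_iff_of_pos (by norm_num) (by norm_num) (by norm_num)]
    norm_num
  rw [div_eq_mul_one_div, mul_comm, Real.rpow_mul (by norm_num), Real.rpow_natCast]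
  gcongr

theorem poorLevellingCount_le :
    (poorLevellingCount V : ℝ) ≤
      3 * Fintype.card V * (11 / 4) ^ Fintype.card V * 2 ^ ((Fintype.card V : ℝ) ^ 2 / 4) := by
  have hlevel (i : Fin 3) :
      ∑ l : V → Fin 3, (3 / 5 : ℝ) ^ #(level l i) = (13 / 5) ^ Fintype.card V := by
    have hsum := sum_prod_pow_card_level (V := V) (Pi.mulSingle i (3 / 5 : ℝ))
    have hweight : ∑ j, Pi.mulSingle i (3 / 5 : ℝ) j = 13 / 5 := by
      fin_cases i <;> simp [Fin.sum_univ_three, Pi.mulSingle_apply] <;> norm_num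
    rw [← hweight, ← hsum]
    refine sum_congr rfl fun l _ => ?_
    rw [Fintype.prod_eq_single i fun j hj => by simp [hj], Pi.mulSingle_eq_same]
  rw [poorLevellingCount, Nat.cast_sum]
  refine (sum_le_sum fun l _ => card_isLevelling_not_isRichLevelling_le l).trans ?_
  rw [← mul_sum, sum_comm]
  simp only [← mul_sum, hlevel]
  rw [sum_const, card_univ, Fintype.card_fin, nsmul_eq_mul]
  have hbase : (5 : ℝ) ^ ((Fintype.card V : ℝ) / 100) * (13 / 5) ^ Fintype.card V ≤
      (11 / 4) ^ Fintype.card V :=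
    calc _ ≤ (102 / 100 : ℝ) ^ Fintype.card V * (13 / 5) ^ Fintype.card V := by
          gcongr
          exact five_rpow_le _
      _ = (102 / 100 * (13 / 5)) ^ Fintype.card V := by rw [mul_pow]
      _ ≤ _ := by gcongr; norm_num
  calc _ = 3 * Fintype.card V * (5 ^ ((Fintype.card V : ℝ) / 100) * (13 / 5) ^ Fintype.card V) *
        (2 : ℝ) ^ ((Fintype.card V : ℝ) ^ 2 / 4) := by
          push_cast
          ring
    _ ≤ _ := by gcongr

theorem card_filter_level_one_eq (S : Finset V) :
    #{l : V → Fin 3 | level l 1 = S} = 2 ^ (Fintype.card V - #S) := by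
  have hpi : ({l | level l 1 = S} : Finset (V → Fin 3)) =
      Fintype.piFinset fun v => if v ∈ S then {1} else {0, 2} := by
    ext l
    simp only [mem_filter_univ, Fintype.mem_piFinset, Finset.ext_iff, mem_level]
    refine forall_congr' fun v => ?_
    generalize l v = i
    by_cases hv : v ∈ S <;> fin_cases i <;> simp [hv]
  rw [hpi, Fintype.card_piFinset]
  simp only [apply_ite card, card_singleton]
  rw [card_pair (by decide), prod_ite, prod_const_one, one_mul, prod_const, filter_notMem_eq_sdiff,
    card_univ_sdiff]

theorem levellingCount_eq_sum :
    levellingCount V = ∑ S : Finset V, 2 ^ ((#S + 1) * (Fintype.card V - #S)) := by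
  simp only [levellingCount, filter_isLevelling, card_powerset]
  rw [← sum_fiberwise univ fun l => level l 1]
  refine sum_congr rfl fun S _ => ?_
  have harcs (l : V → Fin 3) (hl : l ∈ ({l | level l 1 = S} : Finset (V → Fin 3))) :
      2 ^ #(levelArcs l) = 2 ^ (#S * (Fintype.card V - #S)) := by
    obtain rfl := (mem_filter_univ l).1 hl
    rw [card_levelArcs_three, ← sum_card_level l, Fin.sum_univ_three]
    congr 2
    omega
  rw [sum_congr rfl harcs, sum_const, card_filter_level_one_eq, smul_eq_mul, ← pow_add]
  ring_nf

theorem levellingCount_le_mainTerm :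
    (levellingCount V : ℝ) ≤ mainTerm (Fintype.card V) := by
  rw [mainTerm, levellingCount_eq_sum, Real.rpow_add two_pos, Real.rpow_natCast]
  push_cast
  have hcard : ((2 : ℝ) ^ Fintype.card V) = #(univ : Finset (Finset V)) := by
    rw [card_univ, Fintype.card_finset]
    push_cast
    rfl
  rw [hcard, ← nsmul_eq_mul]
  refine sum_le_card_nsmul _ _ _ fun S _ => ?_
  obtain ⟨k, hk⟩ := Nat.exists_eq_add_of_le (card_le_univ S)
  refine (two_pow_le_of_four_mul_le_sq (n := Fintype.card V + 1) ?_).trans_eq (by push_cast; rfl)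
  rw [hk, Nat.add_sub_cancel_left]
  zify
  nlinarith [sq_nonneg ((#S : ℤ) + 1 - k)]

theorem mainTerm_le_levellingCount :
    mainTerm (Fintype.card V) ≤ 2 * (Fintype.card V + 1) * levellingCount V := by
  rw [mainTerm, levellingCount_eq_sum]
  set n := Fintype.card V
  have hchoose : 2 ^ n ≤ (n + 1) * n.choose (n / 2) := by
    have hsum := sum_le_card_nsmul (range (n + 1)) _ _ fun r _ => Nat.choose_le_middle r n
    rwa [Nat.sum_range_choose, card_range, smul_eq_mul] at hsum
  have hmiddle : n.choose (n / 2) * 2 ^ ((n / 2 + 1) * (n - n / 2)) ≤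
      ∑ S : Finset V, 2 ^ ((#S + 1) * (n - #S)) := by
    calc _ = ∑ S ∈ powersetCard (n / 2) (univ : Finset V), 2 ^ ((#S + 1) * (n - #S)) := by
          rw [sum_congr rfl fun S hS => by rw [(mem_powersetCard.1 hS).2], sum_const,
            card_powersetCard, card_univ, smul_eq_mul]
      _ ≤ _ := sum_le_univ_sum_of_nonneg fun _ => Nat.zero_le _
  have hexp : ((n : ℝ) + 1) ^ 2 / 4 ≤ ((1 + (n / 2 + 1) * (n - n / 2) : ℕ) : ℝ) := by
    have hnat : (n + 1) ^ 2 ≤ 4 * (1 + (n / 2 + 1) * (n - n / 2)) := by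
      obtain ⟨k, hk | hk⟩ := Nat.even_or_odd' n
      · rw [show n / 2 = k by omega, show n - k = k by omega, hk]
        nlinarith
      · rw [show n / 2 = k by omega, show n - k = k + 1 by omega, hk]
        nlinarith
    rw [div_le_iff₀' (by norm_num)]
    exact_mod_cast hnat
  calc (2 : ℝ) ^ ((n : ℝ) + ((n : ℝ) + 1) ^ 2 / 4)
      ≤ 2 ^ n * 2 ^ (1 + (n / 2 + 1) * (n - n / 2)) := by
        rw [Real.rpow_add two_pos, Real.rpow_natCast, ← Real.rpow_natCast _ (1 + _)]
        gcongr
        exact one_le_two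
    _ ≤ ((n + 1) * n.choose (n / 2) : ℕ) * 2 ^ (1 + (n / 2 + 1) * (n - n / 2)) := by
        gcongr
        exact_mod_cast hchoose
    _ = 2 * (n + 1) * (n.choose (n / 2) * 2 ^ ((n / 2 + 1) * (n - n / 2)) : ℕ) := by
        push_cast
        ring
    _ ≤ _ := by gcongr

theorem IsRichLevelling.exists_arc_to {l : V → Fin m} (h : IsRichLevelling E l) {v : V}
    (hv : (l v : ℕ) ≠ 0) : ∃ x, (x, v) ∈ E := by
  obtain ⟨k, hk⟩ := Nat.exists_eq_succ_of_ne_zero hv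
  let i : Fin m := ⟨k, by omega⟩
  have hcard := h.le_card v i (SimpleGraph.pathGraph_adj.2 (.inr hk.symm))
  have hpos : 0 < Fintype.card V := Fintype.card_pos_iff.2 ⟨v⟩
  obtain ⟨x, hx⟩ := card_pos.1 (show 0 < #{x ∈ level l i | Adj E v x} by omega)
  obtain ⟨hx, hvx | hxv⟩ := mem_filter.1 hx
  · have hstep : (i : ℕ) = l v + 1 := mem_level.1 hx ▸ h.isLevelling v x hvx
    exact absurd (hk ▸ hstep) (by simp [i]; omega)
  · exact ⟨x, hxv⟩

theorem IsRichLevelling.unique {l l' : V → Fin m} (h : IsRichLevelling E l)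
    (h' : IsRichLevelling E l') : l = l' := by
  suffices hlevel : ∀ k v, (l v : ℕ) = k → (l' v : ℕ) = k from
    funext fun v => Fin.ext (hlevel _ v rfl).symm
  intro k
  induction k with
  | zero =>
    intro v hv
    by_contra hv'
    obtain ⟨x, hx⟩ := h'.exists_arc_to hv'
    have hstep := h.isLevelling x v hx
    omega
  | succ k ih =>
    intro v hv
    obtain ⟨x, hx⟩ := h.exists_arc_to (v := v) (by omega)
    have hstep := h.isLevelling x v hx
    rw [h'.isLevelling x v hx, ih x (by omega)]

theorem levellingCount_eq_add :
    levellingCount V = #(richDigraphs V) + poorLevellingCount V := by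
  have hbiUnion : richDigraphs V =
      univ.biUnion fun l : V → Fin 3 => {E | IsLevelling E l ∧ IsRichLevelling E l} := by
    ext E
    simp only [mem_richDigraphs, mem_filter_univ, mem_biUnion, mem_univ, true_and]
    exact exists_congr fun l => (and_iff_right_of_imp IsRichLevelling.isLevelling).symm
  rw [hbiUnion, card_biUnion fun l _ l' _ hne => ?_, levellingCount, poorLevellingCount,
    ← sum_add_distrib]
  · refine sum_congr rfl fun l _ => ?_
    rw [← filter_filter, ← filter_filter, card_filter_add_card_filter_not]
  · refine disjoint_left.2 fun E hE hE' => hne ?_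
    exact ((mem_filter_univ E).1 hE).2.unique ((mem_filter_univ E).1 hE').2

theorem card_poorDigraphs_le {q : ℕ} (hq : q ≠ 0) (hV : 64 * (2 * q + 4) ≤ Fintype.card V) :
    #(poorDigraphs V) ≤
      #{E : Finset (V × V) | IsHasseLike E ∧ ¬ IsExpanding E q} + #(fourLevelDigraphs V) +
        poorLevellingCount V := by
  refine (card_le_card fun E hE => ?_).trans <| (card_union_le _ _).trans <|
    add_le_add (card_union_le _ _) (card_biUnion_le (s := univ)
      (t := fun l : V → Fin 3 => {E | IsLevelling E l ∧ ¬ IsRichLevelling E l}))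
  obtain ⟨hE, hpoor⟩ := mem_poorDigraphs.1 hE
  simp only [mem_union, mem_biUnion, mem_univ, true_and, mem_filter_univ, mem_fourLevelDigraphs]
  by_cases hexp : IsExpanding E q
  · rcases hexp.exists_levelling hq hV with ⟨l, hl⟩ | hl
    · exact .inr ⟨l, hl, fun hrich => hpoor (mem_richDigraphs.2 ⟨l, hrich⟩)⟩
    · exact .inl (.inr hl)
  · exact .inl (.inl ⟨hE, hexp⟩)

end Levelled

section Asymptotics

open Filter Asymptotics Topology

/-- The number of Hasse-like digraphs on `n` vertices, relative to its order of growth. -/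
noncomputable def hasseLikeRatio (n : ℕ) : ℝ := hasseLikeCount n / mainTerm n

/-- An upper bound for `hasseLikeCount` that varies as regularly as `mainTerm`. -/
noncomputable def envelope (n : ℕ) : ℝ := mainTerm n * (1 + partialSups hasseLikeRatio n)

/-- Sequences of lower order than `envelope`, by more than a factor `n`. -/
def IsNegligible (c : ℕ → ℝ) : Prop := (fun n => n * c n) =o[atTop] envelope

theorem mainTerm_pos (n : ℕ) : 0 < mainTerm n := Real.rpow_pos_of_pos two_pos _

theorem hasseLikeRatio_nonneg (n : ℕ) : 0 ≤ hasseLikeRatio n :=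
  div_nonneg (Nat.cast_nonneg _) (mainTerm_pos n).le

theorem partialSups_hasseLikeRatio_nonneg (n : ℕ) : 0 ≤ partialSups hasseLikeRatio n :=
  (hasseLikeRatio_nonneg n).trans (le_partialSups hasseLikeRatio n)

theorem mainTerm_le_envelope (n : ℕ) : mainTerm n ≤ envelope n :=
  le_mul_of_one_le_right (mainTerm_pos n).le
    (le_add_of_nonneg_right (partialSups_hasseLikeRatio_nonneg n))

theorem envelope_pos (n : ℕ) : 0 < envelope n := (mainTerm_pos n).trans_le (mainTerm_le_envelope n)

theorem two_rpow_mul_mainTerm_sub_le {k n : ℕ} (hk : k ≤ n) :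
    (2 : ℝ) ^ (k / 2 * n : ℝ) * mainTerm (n - k) ≤ 2 ^ (k ^ 2 / 4 : ℝ) * mainTerm n := by
  rw [mainTerm, mainTerm, ← Real.rpow_add two_pos, ← Real.rpow_add two_pos]
  refine Real.rpow_le_rpow_of_exponent_le one_le_two ?_
  push_cast [hk]
  nlinarith [Nat.cast_nonneg (α := ℝ) k]

theorem two_rpow_mul_hasseLikeCount_sub_le {k n : ℕ} (hk : k ≤ n) :
    (2 : ℝ) ^ (k / 2 * n : ℝ) * hasseLikeCount (n - k) ≤ 2 ^ (k ^ 2 / 4 : ℝ) * envelope n := by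
  have hratio : hasseLikeRatio (n - k) ≤ 1 + partialSups hasseLikeRatio n :=
    (le_partialSups_of_le hasseLikeRatio (n.sub_le k)).trans (le_add_of_nonneg_left zero_le_one)
  calc (2 : ℝ) ^ (k / 2 * n : ℝ) * hasseLikeCount (n - k)
      = 2 ^ (k / 2 * n : ℝ) * mainTerm (n - k) * hasseLikeRatio (n - k) := by
        rw [mul_assoc, hasseLikeRatio, mul_div_cancel₀ _ (mainTerm_pos _).ne']
    _ ≤ 2 ^ (k ^ 2 / 4 : ℝ) * mainTerm n * (1 + partialSups hasseLikeRatio n) :=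
        mul_le_mul (two_rpow_mul_mainTerm_sub_le hk) hratio (hasseLikeRatio_nonneg _)
          (mul_nonneg (by positivity) (mainTerm_pos n).le)
    _ = 2 ^ (k ^ 2 / 4 : ℝ) * envelope n := by rw [envelope, mul_assoc]

theorem IsNegligible.add {c d : ℕ → ℝ} (hc : IsNegligible c) (hd : IsNegligible d) :
    IsNegligible fun n => c n + d n := by
  simpa only [IsNegligible, mul_add] using IsLittleO.add hc hd

theorem IsNegligible.trans_isBigO {c d : ℕ → ℝ} (hd : IsNegligible d) (h : c =O[atTop] d) :
    IsNegligible c :=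
  ((isBigO_refl _ _).mul h).trans_isLittleO hd

theorem isNegligible_of_isBigO {c : ℕ → ℝ} {D : ℕ} {r : ℝ} (hr : |r| < 1)
    (h : c =O[atTop] fun n => n ^ D * r ^ n * envelope n) : IsNegligible c := by
  have hlittle : (fun n : ℕ => (n : ℝ) ^ (D + 1) * r ^ n) =o[atTop] fun _ => (1 : ℝ) :=
    (isLittleO_one_iff ℝ).2 (tendsto_pow_const_mul_const_pow_of_abs_lt_one _ hr)
  have hmul := hlittle.mul_isBigO (isBigO_refl envelope atTop)
  refine (((isBigO_refl (fun n : ℕ => (n : ℝ)) _).mul h).trans_isLittleO ?_)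
  simpa only [one_mul, pow_succ', mul_assoc] using hmul

theorem isNegligible_of_le_mul_hasseLikeCount {c M : ℕ → ℝ} {D k : ℕ} {r : ℝ} (hr₀ : 0 ≤ r)
    (hr : r < 1) (hM : M =O[atTop] fun n => n ^ D * r ^ n * 2 ^ (k / 2 * n : ℝ))
    (hc : c =O[atTop] fun n => M n * hasseLikeCount (n - k)) : IsNegligible c := by
  refine isNegligible_of_isBigO (D := D) (by rwa [abs_of_nonneg hr₀]) ((hc.trans
    (hM.mul (isBigO_refl _ _))).trans (IsBigO.of_bound (2 ^ (k ^ 2 / 4 : ℝ)) ?_))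
  filter_upwards [eventually_ge_atTop k] with n hn
  have henv := (envelope_pos n).le
  rw [Real.norm_of_nonneg (by positivity), Real.norm_of_nonneg (by positivity), mul_assoc,
    mul_left_comm (2 ^ _)]
  exact mul_le_mul_of_nonneg_left (two_rpow_mul_hasseLikeCount_sub_le hn) (by positivity)

theorem codeCount_isBigO (k : ℕ) :
    (fun n => (codeCount n k : ℝ)) =O[atTop] fun n => (n : ℝ) ^ (129 * k) := by
  refine IsBigO.of_bound ((2 ^ 128) ^ k * (2 ^ k) ^ k) (.of_forall fun n => le_of_eq ?_)
  rw [Real.norm_of_nonneg (by positivity), Real.norm_of_nonneg (by positivity), codeCount]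
  push_cast
  rw [mul_pow, mul_pow, ← pow_mul, ← pow_mul, show 129 * k = k + 128 * k by ring, pow_add]
  ring

theorem isNegligible_of_le_codeCount_mul {c : ℕ → ℕ} {M : ℕ → ℕ} {D k : ℕ} {r : ℝ} (hr₀ : 0 ≤ r)
    (hr : r < 1) (hM : (fun n => (M n : ℝ)) =O[atTop] fun n => n ^ D * r ^ n * 2 ^ (k / 2 * n : ℝ))
    (hc : ∀ᶠ n in atTop, c n ≤ codeCount n k * (M n * hasseLikeCount (n - k))) :
    IsNegligible fun n => c n := by
  refine isNegligible_of_le_mul_hasseLikeCount (D := 129 * k + D) hr₀ hr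
    (((codeCount_isBigO k).mul hM).congr_right fun n => by ring) (IsBigO.of_bound 1 ?_)
  filter_upwards [hc] with n hn
  rw [Real.norm_of_nonneg (by positivity), Real.norm_of_nonneg (by positivity), one_mul, mul_assoc]
  exact_mod_cast hn

theorem card_smallSubsets_le (V : Type*) [Fintype V] :
    (#{S : Finset V | 64 * #S ≤ Fintype.card V} : ℝ) ≤ 2 ^ ((Fintype.card V : ℝ) / 8) := by
  set n := Fintype.card V
  have hpow (x y : ℝ) (hx : 0 ≤ x) : x ^ (y * n) = (x ^ y) ^ n := by
    rw [Real.rpow_mul hx, Real.rpow_natCast]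
  have hcount := card_filter_powerset_le (univ : Finset V) (show (1 : ℝ) ≤ 64 by norm_num) (n / 64)
  have hfilter : ({S : Finset V | 64 * #S ≤ n} : Finset (Finset V)) =
      {S ∈ (univ : Finset V).powerset | (#S : ℝ) ≤ (n : ℝ) / 64} := by
    rw [powerset_univ]
    refine filter_congr fun S _ => ?_
    rw [le_div_iff₀' (by norm_num)]
    norm_cast
  have hbase : (1 + (64 : ℝ)⁻¹) ≤ 2 ^ (1 / 32 : ℝ) := by
    rw [one_div, Real.le_rpow_inv_iff_of_pos (by norm_num) (by norm_num) (by norm_num)]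
    norm_num
  rw [hfilter]
  refine hcount.trans ?_
  calc (64 : ℝ) ^ ((n : ℝ) / 64) * (1 + 64⁻¹) ^ n
      ≤ 2 ^ (6 * (n / 64) : ℝ) * (2 ^ (1 / 32 : ℝ)) ^ n := by
        rw [Real.rpow_mul two_pos.le]
        norm_num
        gcongr
        norm_num at hbase ⊢
        exact hbase
    _ = 2 ^ ((n : ℝ) / 8) := by
        rw [← hpow _ _ two_pos.le, ← Real.rpow_add two_pos]
        ring_nf

theorem isNegligible_card_not_hasLargeDegrees :
    IsNegligible fun n =>
      (#{E : Finset (Fin n × Fin n) | IsHasseLike E ∧ ¬ HasLargeDegrees E} : ℝ) := by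
  refine isNegligible_of_le_mul_hasseLikeCount (D := 1) (k := 1) (r := 2 ^ (-(1 / 4) : ℝ))
    (M := fun n => n * (#{S : Finset (Fin n) | 64 * #S ≤ n} : ℝ) ^ 2) (by positivity)
    (Real.rpow_lt_one_of_one_lt_of_neg one_lt_two (by norm_num))
    (IsBigO.of_bound 1 (.of_forall fun n => ?_)) (IsBigO.of_bound 1 (.of_forall fun n => ?_))
  · rw [Real.norm_of_nonneg (by positivity), Real.norm_of_nonneg (by positivity), one_mul, pow_one,
      mul_assoc]
    have hsmall := card_smallSubsets_le (Fin n)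
    rw [Fintype.card_fin] at hsmall
    gcongr
    refine (pow_le_pow_left₀ (Nat.cast_nonneg _) hsmall 2).trans_eq ?_
    rw [← Real.rpow_natCast, ← Real.rpow_natCast, ← Real.rpow_mul two_pos.le,
      ← Real.rpow_mul two_pos.le, ← Real.rpow_add two_pos]
    push_cast
    ring_nf
  · rw [Real.norm_of_nonneg (by positivity), Real.norm_of_nonneg (by positivity), one_mul,
      mul_assoc]
    have hcard := card_not_hasLargeDegrees_le (V := Fin n)
    rw [Fintype.card_fin] at hcard
    exact_mod_cast hcard

theorem isNegligible_card_not_largeExpansion :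
    IsNegligible fun n => (#{E : Finset (Fin n × Fin n) |
      IsHasseLike E ∧ HasLargeDegrees E ∧ ¬ LargeExpansion E 40000} : ℝ) := by
  refine isNegligible_of_le_codeCount_mul (D := 0) (k := 40000) (r := 1 / 2)
    (M := fun n => 2 ^ n * (2 ^ (9999 * n / 20000)) ^ 40000) (by norm_num) (by norm_num)
    (IsBigO.of_bound 1 (.of_forall fun n => ?_)) ?_
  · rw [Real.norm_of_nonneg (by positivity), Real.norm_of_nonneg (by positivity), one_mul, pow_zero,
      one_mul, ← pow_mul, one_div, inv_pow, ← pow_add]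
    push_cast
    rw [le_inv_mul_iff₀ (by positivity), ← pow_add, ← Real.rpow_natCast]
    refine Real.rpow_le_rpow_of_exponent_le one_le_two ?_
    have hexp : n + (n + 9999 * n / 20000 * 40000) ≤ 20000 * n := by omega
    have := Nat.cast_le (α := ℝ).2 hexp
    push_cast at this ⊢
    linarith
  · filter_upwards [eventually_ge_atTop (128 * 40000)] with n hn
    have : NeZero n := ⟨by omega⟩
    have hcard := card_not_largeExpansion_le (V := Fin n) (q := 40000) (by rwa [Fintype.card_fin])
    rwa [Fintype.card_fin] at hcard

theorem isNegligible_card_not_smallNbhdExpansion (q : ℕ) :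
    IsNegligible fun n => (#{E : Finset (Fin n × Fin n) |
      IsHasseLike E ∧ HasLargeDegrees E ∧ ¬ SmallNbhdExpansion E q} : ℝ) := by
  refine isNegligible_of_le_codeCount_mul (D := q) (k := 1) (r := 2 ^ (-(1 / 20000) : ℝ))
    (M := fun n => n.choose q * 2 ^ (9999 * n / 20000 + 1)) (by positivity)
    (Real.rpow_lt_one_of_one_lt_of_neg one_lt_two (by norm_num))
    (IsBigO.of_bound 2 (.of_forall fun n => ?_)) ?_
  · rw [Real.norm_of_nonneg (by positivity), Real.norm_of_nonneg (by positivity)]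
    push_cast
    have hchoose : ((n.choose q : ℕ) : ℝ) ≤ n ^ q := by exact_mod_cast n.choose_le_pow q
    have hexp : (2 : ℝ) ^ (9999 * n / 20000) ≤
        (2 ^ (-(1 / 20000) : ℝ)) ^ n * 2 ^ ((1 : ℕ) / 2 * n : ℝ) := by
      rw [← Real.rpow_natCast, ← Real.rpow_natCast, ← Real.rpow_mul two_pos.le,
        ← Real.rpow_add two_pos]
      refine Real.rpow_le_rpow_of_exponent_le one_le_two (Nat.cast_div_le.trans_eq ?_)
      push_cast
      ring
    calc _ ≤ (n : ℝ) ^ q * (((2 ^ (-(1 / 20000) : ℝ)) ^ n * 2 ^ ((1 : ℕ) / 2 * n : ℝ)) * 2) := by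
          rw [pow_succ]
          gcongr
      _ = _ := by
          push_cast
          ring
  · filter_upwards [eventually_ge_atTop 128] with n hn
    have hcard := card_not_smallNbhdExpansion_le (V := Fin n) q (by rwa [Fintype.card_fin])
    rwa [Fintype.card_fin] at hcard

theorem jointBound_le (n j : ℕ) :
    (jointBound n j : ℝ) ≤ 2 ^ (j ^ 2) *
      (((2 ^ j * (1 - 1 / 2 ^ j) ^ 20) ^ (1 / 20000 : ℝ)) ^ n * 2 ^ (j / 2 * n : ℝ)) := by
  have hb : (0 : ℝ) ≤ 1 - 1 / 2 ^ j :=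
    sub_nonneg.2 (div_le_one_of_le₀ (one_le_pow₀ one_le_two) (by positivity))
  rw [jointBound]
  set b : ℝ := 1 - 1 / 2 ^ j
  refine (Nat.floor_le (by positivity)).trans_eq ?_
  rw [← Real.rpow_natCast (_ ^ (_ : ℝ)) n, ← Real.rpow_mul (by positivity),
    Real.mul_rpow (by positivity) (by positivity), ← Real.rpow_natCast b,
    ← Real.rpow_natCast 2 j, ← Real.rpow_natCast 2 (j ^ 2), ← Real.rpow_mul hb,
    ← Real.rpow_mul two_pos.le, mul_right_comm, ← mul_assoc, ← Real.rpow_add two_pos,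
    ← Real.rpow_add two_pos]
  push_cast
  ring_nf

theorem isNegligible_card_not_jointExpansion (q : ℕ) {j : ℕ} (hj : j ≠ 0)
    (hsmall : (2 : ℝ) ^ j * (1 - 1 / 2 ^ j) ^ 20 < 1) :
    IsNegligible fun n => (#{E : Finset (Fin n × Fin n) |
      IsHasseLike E ∧ HasLargeDegrees E ∧ LargeExpansion E q ∧ ¬ JointExpansion E q j} : ℝ) := by
  have hb : (0 : ℝ) ≤ 1 - 1 / 2 ^ j :=
    sub_nonneg.2 (div_le_one_of_le₀ (one_le_pow₀ one_le_two) (by positivity))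
  set b : ℝ := 1 - 1 / 2 ^ j
  refine isNegligible_of_le_codeCount_mul (D := q * j) (k := j)
    (r := (2 ^ j * b ^ 20) ^ (1 / 20000 : ℝ)) (M := fun n => n.choose q ^ j * jointBound n j)
    (by positivity) (Real.rpow_lt_one (by positivity) hsmall (by norm_num))
    (IsBigO.of_bound (2 ^ (j ^ 2)) (.of_forall fun n => ?_)) ?_
  · rw [Real.norm_of_nonneg (by positivity), Real.norm_of_nonneg (by positivity)]
    push_cast
    have hchoose : ((n.choose q : ℕ) : ℝ) ≤ n ^ q := by exact_mod_cast n.choose_le_pow q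
    calc _ ≤ ((n : ℝ) ^ q) ^ j * (2 ^ (j ^ 2) *
          (((2 ^ j * b ^ 20) ^ (1 / 20000 : ℝ)) ^ n * 2 ^ (j / 2 * n : ℝ))) := by
          gcongr
          exact jointBound_le n j
      _ = _ := by
          rw [← pow_mul]
          ring
  · filter_upwards [eventually_ge_atTop (128 * j)] with n hn
    have hcard := card_not_jointExpansion_le (V := Fin n) (q := q) hj (by rwa [Fintype.card_fin])
    rwa [Fintype.card_fin] at hcard

theorem pow_mul_two_rpow_sq_le_mainTerm (n : ℕ) :
    (28 / 10 : ℝ) ^ n * 2 ^ ((n : ℝ) ^ 2 / 4) ≤ mainTerm n := by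
  have hbase : (28 / 10 : ℝ) ≤ 2 ^ (3 / 2 : ℝ) := by
    rw [← Real.rpow_inv_le_iff_of_pos (by norm_num) (by norm_num) (by norm_num),
      Real.rpow_inv_le_iff_of_pos (by norm_num) (by norm_num) (by norm_num),
      show (3 / 2 : ℝ) = 3 * 2⁻¹ by norm_num, Real.rpow_mul two_pos.le,
      Real.le_rpow_inv_iff_of_pos (by norm_num) (by norm_num) (by norm_num)]
    norm_num
  calc (28 / 10 : ℝ) ^ n * 2 ^ ((n : ℝ) ^ 2 / 4)
      ≤ (2 ^ (3 / 2 : ℝ)) ^ n * 2 ^ ((n : ℝ) ^ 2 / 4) := by gcongr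
    _ = 2 ^ ((3 / 2 : ℝ) * n + (n : ℝ) ^ 2 / 4) := by
        rw [← Real.rpow_natCast, ← Real.rpow_mul two_pos.le, ← Real.rpow_add two_pos]
    _ ≤ mainTerm n := by
        refine Real.rpow_le_rpow_of_exponent_le one_le_two ?_
        linarith

theorem isNegligible_of_le_pow_mul_two_rpow_sq {c : ℕ → ℝ} {D : ℕ}
    (hc : c =O[atTop] fun n => (n : ℝ) ^ D * (11 / 4) ^ n * 2 ^ ((n : ℝ) ^ 2 / 4)) :
    IsNegligible c := by
  refine isNegligible_of_isBigO (D := D) (r := 275 / 280) (by norm_num [abs_lt])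
    (hc.trans (IsBigO.of_bound 1 (.of_forall fun n => ?_)))
  have henv := (envelope_pos n).le
  rw [Real.norm_of_nonneg (by positivity), Real.norm_of_nonneg (by positivity), one_mul,
    show (11 / 4 : ℝ) = 275 / 280 * (28 / 10) by norm_num, mul_pow, ← mul_assoc, mul_assoc]
  gcongr
  exact (pow_mul_two_rpow_sq_le_mainTerm n).trans (mainTerm_le_envelope n)

theorem isNegligible_poorLevellingCount :
    IsNegligible fun n => (poorLevellingCount (Fin n) : ℝ) := by
  refine isNegligible_of_le_pow_mul_two_rpow_sq (D := 1)
    (IsBigO.of_bound 3 (.of_forall fun n => ?_))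
  rw [Real.norm_of_nonneg (by positivity), Real.norm_of_nonneg (by positivity)]
  have hcount := poorLevellingCount_le (V := Fin n)
  rw [Fintype.card_fin] at hcount
  linarith

theorem isNegligible_card_fourLevelDigraphs :
    IsNegligible fun n => (#(fourLevelDigraphs (Fin n)) : ℝ) := by
  refine isNegligible_of_le_pow_mul_two_rpow_sq (D := 0)
    (IsBigO.of_bound 8 (.of_forall fun n => ?_))
  rw [Real.norm_of_nonneg (by positivity), Real.norm_of_nonneg (by positivity)]
  have hcard := card_fourLevelDigraphs_le (V := Fin n)
  rw [Fintype.card_fin] at hcard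
  linarith

theorem isNegligible_card_not_isExpanding :
    IsNegligible fun n => (#{E : Finset (Fin n × Fin n) |
      IsHasseLike E ∧ ¬ IsExpanding E 40000} : ℝ) := by
  have hsum := (((isNegligible_card_not_hasLargeDegrees.add
    isNegligible_card_not_largeExpansion).add (isNegligible_card_not_smallNbhdExpansion 40000)).add
    (isNegligible_card_not_jointExpansion 40000 (j := 2) two_ne_zero (by norm_num))).add
    (isNegligible_card_not_jointExpansion 40000 (j := 3) three_ne_zero (by norm_num))
  refine hsum.trans_isBigO (IsBigO.of_bound 1 (.of_forall fun n => ?_))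
  rw [Real.norm_of_nonneg (by positivity), Real.norm_of_nonneg (by positivity), one_mul]
  norm_cast
  refine (card_le_card fun E hE => ?_).trans <| (card_union_le _ _).trans <| Nat.add_le_add_right
    ((card_union_le _ _).trans <| Nat.add_le_add_right ((card_union_le _ _).trans <|
      Nat.add_le_add_right (card_union_le _ _) _) _) _
  obtain ⟨hE, hexp⟩ := (mem_filter_univ E).1 hE
  simp only [mem_union, mem_filter_univ]
  by_contra! hgood
  obtain ⟨⟨⟨⟨hdeg, hlarge⟩, hsmall⟩, htwo⟩, hthree⟩ := hgood
  have hdeg := hdeg hE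
  have hlarge := hlarge hE hdeg
  exact hexp ⟨hE, hdeg, hlarge, hsmall hE hdeg, htwo hE hdeg hlarge, hthree hE hdeg hlarge⟩

theorem isNegligible_card_poorDigraphs :
    IsNegligible fun n => (#(poorDigraphs (Fin n)) : ℝ) := by
  refine ((isNegligible_card_not_isExpanding.add isNegligible_card_fourLevelDigraphs).add
    isNegligible_poorLevellingCount).trans_isBigO (IsBigO.of_bound 1 ?_)
  filter_upwards [eventually_ge_atTop (64 * (2 * 40000 + 4))] with n hn
  rw [Real.norm_of_nonneg (by positivity), Real.norm_of_nonneg (by positivity), one_mul]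
  have hcard := card_poorDigraphs_le (V := Fin n) (q := 40000) (by norm_num)
    (by rwa [Fintype.card_fin])
  exact_mod_cast hcard

theorem card_richDigraphs_le_mainTerm (n : ℕ) : (#(richDigraphs (Fin n)) : ℝ) ≤ mainTerm n := by
  have hcount := levellingCount_le_mainTerm (V := Fin n)
  rw [Fintype.card_fin, levellingCount_eq_add] at hcount
  exact (Nat.cast_le.2 (Nat.le_add_right _ _)).trans hcount

theorem hasseLikeCount_le (n : ℕ) :
    hasseLikeCount n ≤ #(richDigraphs (Fin n)) + #(poorDigraphs (Fin n)) := by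
  refine (card_le_card fun E hE => ?_).trans (card_union_le _ _)
  rw [mem_filter_univ] at hE
  rw [mem_union, mem_poorDigraphs]
  tauto

theorem exists_partialSups_hasseLikeRatio_le : ∃ C, ∀ n, partialSups hasseLikeRatio n ≤ C := by
  -- Poor digraphs contribute at most half of the running maximum, which closes an induction.
  have hpoor := isNegligible_card_poorDigraphs.bound (c := 1 / 2) (by norm_num)
  obtain ⟨n₀, hn₀⟩ := eventually_atTop.1 (hpoor.and (eventually_ge_atTop 1))
  have hratio (n) (hn : n₀ ≤ n) :
      hasseLikeRatio n ≤ 3 / 2 + 1 / 2 * partialSups hasseLikeRatio n := by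
    obtain ⟨hle, hone⟩ := hn₀ n hn
    have hone : (1 : ℝ) ≤ n := by exact_mod_cast hone
    rw [Real.norm_of_nonneg (by positivity), Real.norm_of_nonneg (envelope_pos n).le,
      envelope] at hle
    have hcount : (hasseLikeCount n : ℝ) ≤ #(richDigraphs (Fin n)) + #(poorDigraphs (Fin n)) := by
      exact_mod_cast hasseLikeCount_le n
    rw [hasseLikeRatio, div_le_iff₀ (mainTerm_pos n)]
    linarith [card_richDigraphs_le_mainTerm n,
      le_mul_of_one_le_left (Nat.cast_nonneg (#(poorDigraphs (Fin n)))) hone]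
  refine ⟨max (partialSups hasseLikeRatio n₀) 3, fun n => ?_⟩
  rcases le_total n n₀ with hn | hn
  · exact le_max_of_le_left ((partialSups hasseLikeRatio).monotone hn)
  · induction n, hn using Nat.le_induction with
    | base => exact le_max_left _ _
    | succ n hn ih =>
      have hstep := hratio (n + 1) (by omega)
      rw [← Order.succ_eq_add_one, partialSups_succ] at hstep ⊢
      rcases le_total (hasseLikeRatio (Order.succ n)) (partialSups hasseLikeRatio n) with h | h
      · rwa [sup_eq_left.2 h]
      · rw [sup_eq_right.2 h] at hstep ⊢
        exact le_max_of_le_right (by linarith)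

theorem IsNegligible.isLittleO_mainTerm {c : ℕ → ℝ} (hc : IsNegligible c) :
    (fun n => n * c n) =o[atTop] mainTerm := by
  obtain ⟨C, hC⟩ := exists_partialSups_hasseLikeRatio_le
  refine IsLittleO.trans_isBigO hc (IsBigO.of_bound (1 + C) (.of_forall fun n => ?_))
  rw [Real.norm_of_nonneg (envelope_pos n).le, Real.norm_of_nonneg (mainTerm_pos n).le, envelope,
    mul_comm]
  exact mul_le_mul_of_nonneg_right (add_le_add_right (hC n) 1) (mainTerm_pos n).le

theorem eventually_mainTerm_le_card_richDigraphs :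
    ∀ᶠ n : ℕ in atTop, mainTerm n ≤ 8 * (n * #(richDigraphs (Fin n))) := by
  have hpoor := isNegligible_poorLevellingCount.isLittleO_mainTerm.bound
    (c := 1 / 8) (by norm_num)
  filter_upwards [hpoor, eventually_ge_atTop 1] with n hle hone
  rw [Real.norm_of_nonneg (by positivity), Real.norm_of_nonneg (mainTerm_pos n).le] at hle
  have hone : (1 : ℝ) ≤ n := by exact_mod_cast hone
  have hmain := mainTerm_le_levellingCount (V := Fin n)
  rw [Fintype.card_fin, levellingCount_eq_add, Nat.cast_add] at hmain
  have hfactor : (2 : ℝ) * (n + 1) ≤ 4 * n := by linarith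
  have hmain := hmain.trans (mul_le_mul_of_nonneg_right hfactor (by positivity))
  linarith

theorem poorDigraphs_isLittleO_richDigraphs :
    (fun n => (#(poorDigraphs (Fin n)) : ℝ)) =o[atTop] fun n => (#(richDigraphs (Fin n)) : ℝ) := by
  have hmain : mainTerm =O[atTop] fun n => n * (#(richDigraphs (Fin n)) : ℝ) := by
    refine IsBigO.of_bound 8 (eventually_mainTerm_le_card_richDigraphs.mono fun n hn => ?_)
    rwa [Real.norm_of_nonneg (mainTerm_pos n).le, Real.norm_of_nonneg (by positivity)]
  have hmul := (isBigO_refl (fun n : ℕ => (n : ℝ)⁻¹) atTop).mul_isLittleO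
    (isNegligible_card_poorDigraphs.isLittleO_mainTerm.trans_isBigO hmain)
  have hcancel (c : ℕ → ℝ) : (fun n : ℕ => (n : ℝ)⁻¹ * (n * c n)) =ᶠ[atTop] c := by
    filter_upwards [eventually_ne_atTop 0] with n hn
    rw [inv_mul_cancel_left₀ (Nat.cast_ne_zero.2 hn)]
  exact hmul.congr' (hcancel _) (hcancel _)

end Asymptotics

section Hasse

variable {V : Type*}

/-- The Hasse diagram of a finite poset, as a set of arcs directed upwards. -/
noncomputable def coverArcs (V : Type*) [Fintype V] [PartialOrder V] : Finset (V × V) :=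
  {e | e.1 ⋖ e.2}

section PartialOrder

variable [Fintype V] [PartialOrder V]

theorem mem_coverArcs {x y : V} : (x, y) ∈ coverArcs V ↔ x ⋖ y := by simp [coverArcs]

theorem isHasseLike_coverArcs : IsHasseLike (coverArcs V) where
  asymm x y hxy hyx := (mem_coverArcs.1 hxy).lt.asymm (mem_coverArcs.1 hyx).lt
  no_triangle x y z := by
    have hcycle {a b c : V} (hab : a ⋖ b) (hbc : b ⋖ c) (hca : c ⋖ a) : False :=
      (hab.lt.trans hbc.lt).asymm hca.lt
    simp only [Adj, mem_coverArcs]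
    rintro (hxy | hyx) (hyz | hzy) (hxz | hzx)
    · exact hxz.2 hxy.lt hyz.lt
    · exact hcycle hxy hyz hzx
    · exact hxy.2 hxz.lt hzy.lt
    · exact hzy.2 hzx.lt hxy.lt
    · exact hyz.2 hyx.lt hxz.lt
    · exact hyx.2 hyz.lt hzx.lt
    · exact hcycle hzy hyx hxz
    · exact hzx.2 hzy.lt hyx.lt
  four_cycle w x u y := by
    simp only [Adj, mem_coverArcs]
    rintro hwx hxu (hwy | hyw) (hyu | huy)
    · exact ⟨hwy, hyu⟩
    · exact absurd (hxu.lt.trans huy.lt) (hwy.2 hwx.lt)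
    · exact absurd (hwx.lt.trans hxu.lt) (hyu.2 hyw.lt)
    · exact absurd (hwx.lt.trans hxu.lt) (huy.lt.trans hyw.lt).asymm

theorem le_iff_reflTransGen_coverArcs {x y : V} :
    x ≤ y ↔ Relation.ReflTransGen (fun a b => (a, b) ∈ coverArcs V) x y := by
  let : LocallyFiniteOrder V := Fintype.toLocallyFiniteOrder
  simp only [mem_coverArcs, le_iff_reflTransGen_covBy]

theorem IsLevelling.strictMono {m : ℕ} {l : V → Fin m} (h : IsLevelling (coverArcs V) l) :
    StrictMono l := by
  let : LocallyFiniteOrder V := Fintype.toLocallyFiniteOrder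
  refine (strictMono_iff_forall_covBy l).2 fun x y hxy => Fin.lt_def.2 ?_
  have hstep := h x y (mem_coverArcs.2 hxy)
  omega

end PartialOrder

section Reachability

variable {E : Finset (V × V)} {m : ℕ} {l : V → Fin m}

/-- Reachability along the arcs of `E`. -/
def Reach (E : Finset (V × V)) : V → V → Prop := Relation.ReflTransGen fun a b => (a, b) ∈ E

theorem IsLevelling.lt_of_reach (h : IsLevelling E l) {x y : V} (hxy : Reach E x y) (hne : x ≠ y) :
    l x < l y := by
  have hlift := ((Relation.reflTransGen_iff_eq_or_transGen.1 hxy).resolve_left hne.symm).lift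
    (p := (· < ·)) l fun a b hab => Fin.lt_def.2 (by have := h a b hab; omega)
  rwa [Relation.transGen_eq_self] at hlift

theorem IsLevelling.isPartialOrder_reach (h : IsLevelling E l) : IsPartialOrder V (Reach E) where
  refl _ := .refl
  trans _ _ _ := .trans
  antisymm _ _ hxy hyx :=
    by_contra fun hne => (h.lt_of_reach hxy hne).asymm (h.lt_of_reach hyx (Ne.symm hne))

theorem IsLevelling.coverArcs_reach [Fintype V] (h : IsLevelling E l) :
    @coverArcs V _ (relPO (Reach E) h.isPartialOrder_reach) = E := by
  let : PartialOrder V := relPO (Reach E) h.isPartialOrder_reach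
  have hlt {x y : V} (hxy : x < y) : l x < l y := h.lt_of_reach hxy.le hxy.ne
  have harc {x y : V} (hxy : (x, y) ∈ E) : x < y := by
    refine lt_of_le_of_ne (Relation.ReflTransGen.single hxy) ?_
    rintro rfl
    exact Nat.succ_ne_self _ (h x x hxy).symm
  ext ⟨x, y⟩
  rw [mem_coverArcs]
  refine ⟨fun hxy => ?_, fun hxy => ⟨harc hxy, fun z hxz hzy => ?_⟩⟩
  · obtain rfl | ⟨z, hxz, hzy⟩ := Relation.ReflTransGen.cases_head (hxy.le : Reach E x y)
    · exact (hxy.lt.false).elim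
    · have hzy : z ≤ y := hzy
      rwa [← hzy.eq_of_not_lt (hxy.2 (harc hxz))]
  · have hstep := h x y hxy
    have hxz := Fin.lt_def.1 (hlt hxz)
    have hzy := Fin.lt_def.1 (hlt hzy)
    omega

end Reachability

instance [Finite V] : Finite (PartialOrder V) :=
  .of_injective (fun P => P.le) fun _ _ h => PartialOrder.ext fun x y => by
    exact iff_of_eq (congrFun₂ h x y)

variable [Fintype V]

theorem coverArcs_injective :
    (fun P : PartialOrder V => @coverArcs V _ P).Injective := fun P P' h => by
  ext x y
  rw [@le_iff_reflTransGen_coverArcs V _ P, @le_iff_reflTransGen_coverArcs V _ P']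
  exact iff_of_eq (congrArg (fun E => Reach E x y) h)

theorem richDigraphs_subset_range_coverArcs :
    (richDigraphs V : Set (Finset (V × V))) ⊆
      Set.range fun P : PartialOrder V => @coverArcs V _ P := fun _ hE =>
  have ⟨_, hl⟩ := mem_richDigraphs.1 hE
  ⟨_, hl.isLevelling.coverArcs_reach⟩

theorem card_richDigraphs_le : #(richDigraphs V) ≤ Nat.card (PartialOrder V) := by
  rw [← Set.ncard_coe_finset, ← Set.ncard_range_of_injective coverArcs_injective]
  exact Set.ncard_le_ncard richDigraphs_subset_range_coverArcs

theorem card_partialOrder_le {q : PartialOrder V → Prop}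
    (hq : ∀ P : PartialOrder V, coverArcs V ∈ richDigraphs V → q P) :
    Nat.card (PartialOrder V) ≤ Nat.card {P : PartialOrder V // q P} + #(poorDigraphs V) := by
  have hcover : Set.range (fun P : PartialOrder V => @coverArcs V _ P) ⊆
      (fun P : PartialOrder V => @coverArcs V _ P) '' {P | q P} ∪ poorDigraphs V := by
    rintro _ ⟨P, rfl⟩
    by_cases hrich : coverArcs V ∈ richDigraphs V
    · exact .inl ⟨P, hq P hrich, rfl⟩
    · exact .inr (mem_poorDigraphs.2 ⟨isHasseLike_coverArcs, hrich⟩)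
  have hcard := (Set.ncard_le_ncard hcover).trans (Set.ncard_union_le _ _)
  rwa [Set.ncard_range_of_injective coverArcs_injective,
    Set.ncard_image_of_injective _ coverArcs_injective, Set.ncard_coe_finset] at hcard

/-- Partial order relations correspond to partial order structures. -/
def relPOEquiv {α : Type*} : {r : α → α → Prop // IsPartialOrder α r} ≃ PartialOrder α where
  toFun r := relPO r.1 r.2
  invFun P := ⟨P.le, inferInstance⟩
  left_inv _ := rfl
  right_inv _ := by ext; rfl

theorem card_exists_relPO {α : Type*} (q : PartialOrder α → Prop) :
    Nat.card {r : α → α → Prop // ∃ h : IsPartialOrder α r, q (relPO r h)} =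
      Nat.card {P // q P} :=
  Nat.card_congr <| (Equiv.subtypeSubtypeEquivSubtypeExists _ (q ∘ relPOEquiv)).symm.trans
    (relPOEquiv.subtypeEquivOfSubtype (p := q))

end Hasse

section AlmostAll

open Filter Asymptotics Topology

theorem tendsto_card_partialOrder_div {q : ∀ n, PartialOrder (Fin n) → Prop}
    (hq : ∀ᶠ n in atTop, ∀ P : PartialOrder (Fin n),
      coverArcs (Fin n) ∈ richDigraphs (Fin n) → q n P) :
    Tendsto (fun n => (Nat.card {P // q n P} : ℝ) / Nat.card (PartialOrder (Fin n))) atTop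
      (𝓝 1) := by
  have hpos (n : ℕ) : (Nat.card (PartialOrder (Fin n)) : ℝ) ≠ 0 := by
    have : Nonempty (PartialOrder (Fin n)) := ⟨inferInstance⟩
    exact_mod_cast Nat.card_pos.ne'
  refine (isEquivalent_iff_tendsto_one (.of_forall hpos)).1 (IsBigO.trans_isLittleO ?_
    (poorDigraphs_isLittleO_richDigraphs.trans_isBigO ?_))
  · refine IsBigO.of_bound 1 (hq.mono fun n hn => ?_)
    have hle : (Nat.card {P // q n P} : ℝ) ≤ Nat.card (PartialOrder (Fin n)) := by
      exact_mod_cast Finite.card_subtype_le (q n)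
    have hcard := Nat.cast_le (α := ℝ).2 (card_partialOrder_le hn)
    push_cast at hcard
    rw [Pi.sub_apply, Real.norm_of_nonpos (by linarith), Real.norm_of_nonneg (by positivity)]
    linarith
  · refine IsBigO.of_bound 1 (.of_forall fun n => ?_)
    rw [Real.norm_of_nonneg (by positivity), Real.norm_of_nonneg (by positivity), one_mul]
    exact_mod_cast card_richDigraphs_le

end AlmostAll

section KovariSosTuran

theorem choose_le_pow_mul_choose {n d m c : ℕ} (h : n ≤ c * (d + 1 - m)) :
    n.choose m ≤ c ^ m * d.choose m := by
  refine Nat.le_of_mul_le_mul_left (?_ : m.factorial * _ ≤ m.factorial * _) m.factorial_pos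
  calc m.factorial * n.choose m = n.descFactorial m :=
        (Nat.descFactorial_eq_factorial_mul_choose n m).symm
    _ ≤ n ^ m := Nat.descFactorial_le_pow n m
    _ ≤ (c * (d + 1 - m)) ^ m := Nat.pow_le_pow_left h m
    _ = c ^ m * (d + 1 - m) ^ m := mul_pow _ _ _
    _ ≤ c ^ m * d.descFactorial m := Nat.mul_le_mul_left _ (Nat.pow_sub_le_descFactorial d m)
    _ = m.factorial * (c ^ m * d.choose m) := by
      rw [Nat.descFactorial_eq_factorial_mul_choose, mul_left_comm]

theorem two_hundred_mul_le (m : ℕ) : 200 * m ≤ 100 * (m * 40000 ^ m) := by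
  obtain rfl | hm := eq_or_ne m 0
  · simp
  have hpow : 2 ≤ 40000 ^ m := (by norm_num : 2 ≤ 40000).trans (Nat.le_self_pow hm 40000)
  calc 200 * m = 100 * (m * 2) := by ring
    _ ≤ 100 * (m * 40000 ^ m) := by gcongr

variable {V : Type*} [Fintype V]

-- Double counting of the triples `(y, S, T)` with `S ⊆ I y` and `T ⊆ O y`.
theorem exists_subset_of_choose_sq_lt {α : Type*} {B : Finset α} {I O : α → Finset V} {d m : ℕ}
    (hI : ∀ y ∈ B, d ≤ #(I y)) (hO : ∀ y ∈ B, d ≤ #(O y))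
    (hB : (Fintype.card V).choose m ^ 2 * m < #B * d.choose m ^ 2) :
    ∃ A ⊆ B, ∃ S T : Finset V, #A = m ∧ #S = m ∧ #T = m ∧ ∀ y ∈ A, S ⊆ I y ∧ T ⊆ O y := by
  let pairs := powersetCard m (univ : Finset V) ×ˢ powersetCard m (univ : Finset V)
  let R (y : α) (p : Finset V × Finset V) : Prop := p.1 ⊆ I y ∧ p.2 ⊆ O y
  have hlower : #B * d.choose m ^ 2 ≤ ∑ y ∈ B, #(bipartiteAbove R pairs y) := by
    rw [← smul_eq_mul]
    refine card_nsmul_le_sum _ _ _ fun y hy => ?_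
    have habove : bipartiteAbove R pairs y = powersetCard m (I y) ×ˢ powersetCard m (O y) := by
      ext ⟨S, T⟩
      simp only [bipartiteAbove, pairs, R, mem_filter, mem_product, mem_powersetCard,
        subset_univ, true_and]
      tauto
    rw [habove, card_product, card_powersetCard, card_powersetCard, sq]
    exact Nat.mul_le_mul (Nat.choose_le_choose _ (hI y hy)) (Nat.choose_le_choose _ (hO y hy))
  have hsum : ∑ _p ∈ pairs, m < ∑ p ∈ pairs, #(bipartiteBelow R B p) := by
    rw [← sum_card_bipartiteAbove_eq_sum_card_bipartiteBelow]
    refine lt_of_eq_of_lt ?_ (hB.trans_le hlower)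
    rw [sum_const, card_product, card_powersetCard, card_univ, smul_eq_mul, sq]
  obtain ⟨⟨S, T⟩, hST, hlt⟩ := exists_lt_of_sum_lt hsum
  obtain ⟨A, hA, hAm⟩ := exists_subset_card_eq hlt.le
  rw [mem_product, mem_powersetCard, mem_powersetCard] at hST
  exact ⟨A, hA.trans (filter_subset _ _), S, T, hAm, hST.1.2, hST.2.2,
    fun y hy => (mem_filter.1 (hA hy)).2⟩

variable {E : Finset (V × V)} {l : V → Fin 3} {v : V}

theorem IsRichLevelling.card_le_card_level_one (h : IsRichLevelling E l) :
    Fintype.card V ≤ 100 * #(level l 1) := by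
  by_cases hl : ∀ v, l v = 1
  · have huniv : level l 1 = univ := by ext v; simp [mem_level, hl]
    rw [huniv, card_univ]
    omega
  · obtain ⟨v, hv⟩ := not_forall.1 hl
    have hadj : (SimpleGraph.pathGraph 3).Adj (l v) 1 := by
      rw [SimpleGraph.pathGraph_adj]
      omega
    exact (h.le_card v 1 hadj).trans
      (Nat.mul_le_mul_left 100 (card_le_card (filter_subset _ _)))

theorem IsRichLevelling.card_le_card_in (h : IsRichLevelling E l) (hv : l v = 1) :
    Fintype.card V ≤ 100 * #{x | (x, v) ∈ E} := by
  refine (h.le_card v 0 (by simp [SimpleGraph.pathGraph_adj, hv])).trans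
    (Nat.mul_le_mul_left 100 (card_le_card fun x hx => ?_))
  rw [mem_filter, mem_level, h.isLevelling.adj_iff] at hx
  simpa [hx.1, hv] using hx.2

theorem IsRichLevelling.card_le_card_out (h : IsRichLevelling E l) (hv : l v = 1) :
    Fintype.card V ≤ 100 * #{x | (v, x) ∈ E} := by
  refine (h.le_card v 2 (by simp [SimpleGraph.pathGraph_adj, hv])).trans
    (Nat.mul_le_mul_left 100 (card_le_card fun x hx => ?_))
  rw [mem_filter, mem_level, h.isLevelling.adj_iff] at hx
  simpa [hx.1, hv] using hx.2

theorem IsRichLevelling.exists_complete (h : IsRichLevelling E l) {m : ℕ}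
    (hm : 100 * (m * 40000 ^ m) < Fintype.card V) :
    ∃ S A T : Finset V, #S = m ∧ #A = m ∧ #T = m ∧
      (∀ s ∈ S, ∀ a ∈ A, (s, a) ∈ E) ∧ ∀ a ∈ A, ∀ t ∈ T, (a, t) ∈ E := by
  set n := Fintype.card V
  have hmn : 200 * m ≤ n := (two_hundred_mul_le m).trans hm.le
  obtain ⟨d, hd⟩ : ∃ d, d = (n + 99) / 100 := ⟨_, rfl⟩
  have hchoose : n.choose m ≤ 200 ^ m * d.choose m := choose_le_pow_mul_choose (by omega)
  have hpos : 0 < d.choose m := Nat.choose_pos (by omega)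
  have hcount : n.choose m ^ 2 * m < #(level l 1) * d.choose m ^ 2 := by
    calc n.choose m ^ 2 * m ≤ (200 ^ m * d.choose m) ^ 2 * m := by gcongr
      _ = m * 40000 ^ m * d.choose m ^ 2 := by
        rw [show 40000 = 200 ^ 2 by norm_num, ← pow_mul]; ring
      _ < #(level l 1) * d.choose m ^ 2 := by
        gcongr
        have := h.card_le_card_level_one
        omega
  obtain ⟨A, -, S, T, hA, hS, hT, hST⟩ := exists_subset_of_choose_sq_lt
    (I := fun y => {x | (x, y) ∈ E}) (O := fun y => {x | (y, x) ∈ E})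
    (fun y hy => by have := h.card_le_card_in (mem_level.1 hy); omega)
    (fun y hy => by have := h.card_le_card_out (mem_level.1 hy); omega) hcount
  exact ⟨S, A, T, hS, hA, hT, fun s hs a ha => (mem_filter.1 ((hST a ha).1 hs)).2,
    fun a ha t ht => (mem_filter.1 ((hST a ha).2 ht)).2⟩

end KovariSosTuran

section CriticalExponent

variable {P : Type*} [Fintype P] [PartialOrder P] {Q : Set P} {A T : Finset P} {α : Finset P → ℝ}

theorem mem_antichains : A ∈ antichains P ↔ IsAntichain (· ≤ ·) (A : Set P) := by
  simp [antichains]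

theorem mem_antichainsIn :
    A ∈ antichainsIn Q ↔ IsAntichain (· ≤ ·) (A : Set P) ∧ (A : Set P) ⊆ Q := by
  simp [antichainsIn, antichains]

/-- The upper shadow of a finite set of elements of a finite poset, as a `Finset`. -/
noncomputable def shadow (Q : Set P) (A : Finset P) : Finset P :=
  (upperShadow Q (A : Set P)).toFinset

theorem shadow_mem_antichainsIn (Q : Set P) (A : Finset P) : shadow Q A ∈ antichainsIn Q := by
  rw [mem_antichainsIn, shadow, Set.coe_toFinset]
  refine ⟨fun x hx y hy hne hxy => ?_, fun x hx => hx.1⟩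
  obtain ⟨s, hs, hsx⟩ := hx.2.1
  exact hy.2.2 x hx.1 (lt_of_le_of_ne hxy hne) s hs hsx

theorem card_antichainsIn_pos (Q : Set P) : 0 < #(antichainsIn Q) :=
  card_pos.2 ⟨_, shadow_mem_antichainsIn Q ∅⟩

theorem shadowWeight_eq_sum_fiber (α : Finset P → ℝ) (Q : Set P) (T : Finset P) :
    shadowWeight α Q T = ∑ A ∈ antichains P with shadow Q A = T, α A := by
  unfold shadowWeight shadow
  congr! 3
  rw [← coe_inj, Set.coe_toFinset]

theorem sum_shadowWeight (α : Finset P → ℝ) (Q : Set P) :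
    ∑ T ∈ antichainsIn Q, shadowWeight α Q T = ∑ A ∈ antichains P, α A := by
  simp only [shadowWeight_eq_sum_fiber]
  exact sum_fiberwise_of_maps_to (fun A _ => shadow_mem_antichainsIn Q A) α

theorem shadowWeight_nonneg (hα : ∀ A ∈ antichains P, 0 ≤ α A) (Q : Set P) (T : Finset P) :
    0 ≤ shadowWeight α Q T :=
  sum_nonneg fun A hA => hα A (mem_filter.1 hA).1

theorem critExp_eq_sum_negMulLog (α : Finset P → ℝ) (Q : Set P) :
    critExp α Q = (∑ T ∈ antichainsIn Q, Real.negMulLog (shadowWeight α Q T)) / Q.ncard := by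
  simp only [critExp, Real.negMulLog, neg_mul]

theorem sum_negMulLog_le_log_card {ι : Type*} {s : Finset ι} {p : ι → ℝ}
    (hp : ∀ i ∈ s, 0 ≤ p i) (hsum : ∑ i ∈ s, p i = 1) :
    ∑ i ∈ s, Real.negMulLog (p i) ≤ Real.log #s := by
  have hs : (0 : ℝ) < #s := by
    exact_mod_cast card_pos.2 (nonempty_of_sum_ne_zero (hsum ▸ one_ne_zero))
  have hJensen := Real.concaveOn_negMulLog.le_map_sum (t := s) (w := fun _ => (#s : ℝ)⁻¹)
    (p := p) (fun _ _ => by positivity) (by rw [sum_const, nsmul_eq_mul, mul_inv_cancel₀ hs.ne'])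
    hp
  simp only [smul_eq_mul, ← mul_sum, hsum, mul_one, Real.negMulLog, Real.log_inv,
    neg_mul_neg] at hJensen
  simpa only [Real.negMulLog] using le_of_mul_le_mul_left hJensen (inv_pos.2 hs)

theorem critExp_le_log_card_div (hα : IsWeighting α) (Q : Set P) :
    critExp α Q ≤ Real.log #(antichainsIn Q) / Q.ncard := by
  rw [critExp_eq_sum_negMulLog]
  gcongr
  exact sum_negMulLog_le_log_card (fun T _ => shadowWeight_nonneg hα.1 Q T)
    ((sum_shadowWeight α Q).trans hα.2.2)

theorem critStar_le_log_card_div (hQ : Q.Nonempty) :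
    critStar P ≤ Real.log #(antichainsIn Q) / Q.ncard :=
  Real.sSup_le (fun _ ⟨_, _, hα, hc⟩ => (hc Q hQ).trans (critExp_le_log_card_div hα Q))
    (by positivity)

theorem le_critStar [Nonempty P] {c : ℝ} (hc : 0 ≤ c) (hα : IsWeighting α)
    (h : ∀ Q : Set P, Q.Nonempty → c ≤ critExp α Q) : c ≤ critStar P :=
  le_csSup ⟨_, fun _ ⟨_, _, hβ, hb⟩ =>
    (hb Set.univ Set.univ_nonempty).trans (critExp_le_log_card_div hβ _)⟩ ⟨hc, α, hα, h⟩

end CriticalExponent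

section Chain

variable {P ι : Type*} [PartialOrder P] [Fintype ι] [LinearOrder ι] {B : ι → Finset P} {m : ℕ}

theorem card_biUnion_of_forall_lt (hm : ∀ i, #(B i) = m)
    (hB : ∀ i j, i < j → ∀ x ∈ B i, ∀ y ∈ B j, x < y) :
    #(univ.biUnion B) = Fintype.card ι * m := by
  have hdisj (i j : ι) (hij : i < j) : Disjoint (B i) (B j) :=
    disjoint_left.2 fun x hx hx' => lt_irrefl x (hB i j hij x hx x hx')
  rw [card_biUnion fun i _ j _ hij => hij.lt_or_gt.elim (hdisj i j) fun h => (hdisj j i h).symm]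
  simp [hm]

variable [Fintype P]

theorem antichainsIn_biUnion_subset [Nonempty ι]
    (hB : ∀ i j, i < j → ∀ x ∈ B i, ∀ y ∈ B j, x < y) :
    antichainsIn (univ.biUnion B : Set P) ⊆ univ.biUnion fun i => (B i).powerset := by
  intro A hA
  obtain ⟨hanti, hAB⟩ := mem_antichainsIn.1 hA
  have hblock : ∀ x ∈ A, ∃ i, x ∈ B i := fun x hx => by simpa using hAB hx
  simp only [mem_biUnion, mem_univ, true_and, mem_powerset]
  obtain rfl | ⟨x, hx⟩ := A.eq_empty_or_nonempty
  · exact ⟨Classical.arbitrary ι, empty_subset _⟩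
  obtain ⟨i, hi⟩ := hblock x hx
  refine ⟨i, fun y hy => ?_⟩
  obtain ⟨j, hj⟩ := hblock y hy
  obtain hij | rfl | hji := lt_trichotomy i j
  · have hxy := hB i j hij x hi y hj
    exact absurd hxy.le (hanti hx hy hxy.ne)
  · exact hj
  · have hyx := hB j i hji y hj x hi
    exact absurd hyx.le (hanti hy hx hyx.ne)

theorem critStar_le_of_chain [Nonempty ι] (hm₀ : 0 < m) (hm : ∀ i, #(B i) = m)
    (hB : ∀ i j, i < j → ∀ x ∈ B i, ∀ y ∈ B j, x < y) :
    critStar P ≤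
      Real.log 2 / Fintype.card ι + Real.log (Fintype.card ι) / (Fintype.card ι * m) := by
  have hcard : #(antichainsIn (univ.biUnion B : Set P)) ≤ Fintype.card ι * 2 ^ m := by
    refine (card_le_card (antichainsIn_biUnion_subset hB)).trans (card_biUnion_le.trans_eq ?_)
    simp [card_powerset, hm]
  have hne : (univ.biUnion B).Nonempty := by
    rw [← card_pos, card_biUnion_of_forall_lt hm hB]
    positivity
  have hpos := card_antichainsIn_pos (univ.biUnion B : Set P)
  calc critStar P
      ≤ Real.log #(antichainsIn (univ.biUnion B : Set P)) / (Fintype.card ι * m) := by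
        refine (critStar_le_log_card_div (coe_nonempty.2 hne)).trans_eq ?_
        rw [Set.ncard_coe_finset, card_biUnion_of_forall_lt hm hB, Nat.cast_mul]
    _ ≤ Real.log (Fintype.card ι * 2 ^ m) / (Fintype.card ι * m) := by
        gcongr
        exact_mod_cast hcard
    _ = Real.log 2 / Fintype.card ι + Real.log (Fintype.card ι) / (Fintype.card ι * m) := by
        rw [Real.log_mul (by positivity) (by positivity), Real.log_pow]
        field_simp
        ring

end Chain

section LevelWeighting

variable {P : Type*} [Fintype P] {m : ℕ}

/-- The uniform distribution on the subsets of the `i`-th level of `l`. -/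
noncomputable def levelWeight (l : P → Fin m) (i : Fin m) (A : Finset P) : ℝ :=
  if A ⊆ level l i then (1 / 2) ^ #(level l i) else 0

/-- The weighting witnessing the lower bound on `critStar`: choose a level uniformly at random and
then a uniformly random subset of it. -/
noncomputable def levelWeighting (l : P → Fin m) (A : Finset P) : ℝ :=
  ∑ i, (m : ℝ)⁻¹ * levelWeight l i A

theorem levelWeight_nonneg (l : P → Fin m) (i : Fin m) (A : Finset P) :
    0 ≤ levelWeight l i A := by
  unfold levelWeight
  positivity

theorem sum_card_level_filter (l : P → Fin m) (Q : Set P) :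
    ∑ i, #{x ∈ level l i | x ∈ Q} = Q.ncard := by
  rw [Set.ncard_eq_toFinset_card', card_eq_sum_card_fiberwise (f := l) (t := univ) (by simp)]
  refine sum_congr rfl fun i _ => congrArg card ?_
  ext x
  simp [mem_level, and_comm]

variable [PartialOrder P] {l : P → Fin m} {i : Fin m} {A : Finset P} {Q : Set P} {x : P}

theorem mem_antichains_of_subset_level (hl : StrictMono l) (hA : A ⊆ level l i) :
    A ∈ antichains P := by
  refine mem_antichains.2 fun x hx y hy hne hxy => ?_
  have hlt := hl (lt_of_le_of_ne hxy hne)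
  rw [mem_level.1 (hA hx), mem_level.1 (hA hy)] at hlt
  exact hlt.false

theorem sum_levelWeight (hl : StrictMono l) (i : Fin m) :
    ∑ A ∈ antichains P, levelWeight l i A = 1 := by
  have hfilter : {A ∈ antichains P | A ⊆ level l i} = (level l i).powerset := by
    ext A
    rw [mem_filter, mem_powerset, and_iff_right_of_imp (mem_antichains_of_subset_level hl)]
  simp only [levelWeight]
  rw [← sum_filter, hfilter, sum_const, card_powerset, nsmul_eq_mul, Nat.cast_pow, ← mul_pow]
  norm_num

theorem isWeighting_levelWeighting [NeZero m] (hl : StrictMono l) :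
    IsWeighting (levelWeighting l) := by
  refine ⟨fun A _ => ?_, fun A hA => ?_, ?_⟩
  · exact sum_nonneg fun i _ => mul_nonneg (by positivity) (levelWeight_nonneg l i A)
  · refine sum_eq_zero fun i _ => ?_
    rw [levelWeight, if_neg fun h => hA (mem_antichains_of_subset_level hl h), mul_zero]
  · simp only [levelWeighting]
    rw [sum_comm]
    simp [← mul_sum, sum_levelWeight hl]

theorem mem_shadow_iff_of_subset_level (hl : StrictMono l) (hA : A ⊆ level l i)
    (hx : x ∈ level l i) (hxQ : x ∈ Q) : x ∈ shadow Q A ↔ x ∈ A := by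
  have eq_of_le {s : P} (hs : s ∈ A) (hsx : s ≤ x) : s = x := by
    by_contra hne
    have hlt := hl (lt_of_le_of_ne hsx hne)
    rw [mem_level.1 (hA hs), mem_level.1 hx] at hlt
    exact hlt.false
  rw [shadow, Set.mem_toFinset]
  refine ⟨?_, fun hxA => ⟨hxQ, ⟨x, hxA, le_rfl⟩, fun z _ hzx s hs hsz => ?_⟩⟩
  · rintro ⟨-, ⟨s, hs, hsx⟩, -⟩
    exact eq_of_le hs hsx ▸ hs
  · exact hzx.not_ge (eq_of_le hs (hsz.trans hzx.le) ▸ hsz)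

-- A subset of a level is determined by its shadow in `Q` and its trace outside `Q`.
theorem card_filter_shadow_eq_le (hl : StrictMono l) (i : Fin m) (Q : Set P) (T : Finset P) :
    #{A ∈ {A ∈ antichains P | shadow Q A = T} | A ⊆ level l i} ≤
      2 ^ #{x ∈ level l i | x ∉ Q} := by
  rw [← card_powerset]
  refine card_le_card_of_injOn (fun A => {x ∈ A | x ∉ Q}) (fun A hA => ?_)
    fun A hA B hB (hAB : {x ∈ A | x ∉ Q} = {x ∈ B | x ∉ Q}) => ?_
  · exact mem_powerset.2 (filter_subset_filter _ (mem_filter.1 hA).2)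
  · simp only [coe_filter, mem_filter, Set.mem_ofPred_eq] at hA hB
    obtain ⟨⟨-, hAT⟩, hAl⟩ := hA
    obtain ⟨⟨-, hBT⟩, hBl⟩ := hB
    ext x
    by_cases hxQ : x ∈ Q
    · by_cases hx : x ∈ level l i
      · rw [← mem_shadow_iff_of_subset_level hl hAl hx hxQ,
          ← mem_shadow_iff_of_subset_level hl hBl hx hxQ, hAT, hBT]
      · exact iff_of_false (fun h => hx (hAl h)) fun h => hx (hBl h)
    · simpa [hxQ] using Finset.ext_iff.1 hAB x

theorem shadowWeight_levelWeight_le (hl : StrictMono l) (i : Fin m) (Q : Set P) (T : Finset P) :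
    shadowWeight (levelWeight l i) Q T ≤ (1 / 2) ^ #{x ∈ level l i | x ∈ Q} := by
  have hcard : (#{A ∈ {A ∈ antichains P | shadow Q A = T} | A ⊆ level l i} : ℝ) ≤
      2 ^ #{x ∈ level l i | x ∉ Q} := by
    exact_mod_cast card_filter_shadow_eq_le hl i Q T
  simp only [shadowWeight_eq_sum_fiber, levelWeight]
  rw [← sum_filter, sum_const, nsmul_eq_mul]
  calc _ ≤ (2 : ℝ) ^ #{x ∈ level l i | x ∉ Q} * (1 / 2) ^ #(level l i) := by gcongr
    _ = (2 * (1 / 2)) ^ #{x ∈ level l i | x ∉ Q} * (1 / 2) ^ #{x ∈ level l i | x ∈ Q} := by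
      rw [← card_filter_add_card_filter_not (s := level l i) (· ∈ Q), pow_add, mul_pow]
      ring
    _ = (1 / 2) ^ #{x ∈ level l i | x ∈ Q} := by norm_num

theorem shadowWeight_levelWeighting (l : P → Fin m) (Q : Set P) (T : Finset P) :
    shadowWeight (levelWeighting l) Q T =
      ∑ i, (m : ℝ)⁻¹ * shadowWeight (levelWeight l i) Q T := by
  simp only [shadowWeight, levelWeighting, mul_sum]
  exact sum_comm

theorem mul_le_negMulLog {p : ℝ} {k : ℕ} (hp : 0 ≤ p) (hpk : p ≤ (1 / 2) ^ k) :
    p * (k * Real.log 2) ≤ Real.negMulLog p := by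
  obtain rfl | hp := hp.eq_or_lt
  · simp
  have hlog := Real.log_le_log hp hpk
  rw [Real.log_pow, one_div, Real.log_inv] at hlog
  rw [Real.negMulLog, neg_mul_comm]
  gcongr
  linarith

theorem sum_mul_le_negMulLog_shadowWeight [NeZero m] (hl : StrictMono l) (Q : Set P)
    (T : Finset P) :
    ∑ i, (m : ℝ)⁻¹ *
        (shadowWeight (levelWeight l i) Q T * (#{x ∈ level l i | x ∈ Q} * Real.log 2)) ≤
      Real.negMulLog (shadowWeight (levelWeighting l) Q T) := by
  have hnonneg (i : Fin m) : 0 ≤ shadowWeight (levelWeight l i) Q T :=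
    shadowWeight_nonneg (fun A _ => levelWeight_nonneg l i A) Q T
  have hm : ∑ _i : Fin m, (m : ℝ)⁻¹ = 1 := by simp
  have hconcave := Real.concaveOn_negMulLog.le_map_sum (t := univ) (w := fun _ => (m : ℝ)⁻¹)
    (p := fun i => shadowWeight (levelWeight l i) Q T) (fun _ _ => by positivity) hm
    fun i _ => hnonneg i
  rw [shadowWeight_levelWeighting]
  refine le_trans (sum_le_sum fun i _ => ?_) hconcave
  rw [smul_eq_mul]
  gcongr
  exact mul_le_negMulLog (hnonneg i) (shadowWeight_levelWeight_le hl i Q T)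

theorem log_two_div_le_critExp [NeZero m] (hl : StrictMono l) (hQ : Q.Nonempty) :
    Real.log 2 / m ≤ critExp (levelWeighting l) Q := by
  have hQ₀ : (0 : ℝ) < Q.ncard := by exact_mod_cast (Set.ncard_pos (Set.toFinite Q)).2 hQ
  rw [critExp_eq_sum_negMulLog, le_div_iff₀ hQ₀]
  calc Real.log 2 / m * Q.ncard
      = ∑ i, (m : ℝ)⁻¹ * (1 * (#{x ∈ level l i | x ∈ Q} * Real.log 2)) := by
        rw [← sum_card_level_filter l Q, Nat.cast_sum, mul_sum]
        exact sum_congr rfl fun i _ => by ring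
    _ = ∑ i, ∑ T ∈ antichainsIn Q, (m : ℝ)⁻¹ *
          (shadowWeight (levelWeight l i) Q T * (#{x ∈ level l i | x ∈ Q} * Real.log 2)) := by
        simp only [← mul_sum, ← sum_mul, sum_shadowWeight, sum_levelWeight hl]
    _ = ∑ T ∈ antichainsIn Q, ∑ i, (m : ℝ)⁻¹ *
          (shadowWeight (levelWeight l i) Q T * (#{x ∈ level l i | x ∈ Q} * Real.log 2)) :=
        sum_comm
    _ ≤ ∑ T ∈ antichainsIn Q, Real.negMulLog (shadowWeight (levelWeighting l) Q T) :=
        sum_le_sum fun T _ => sum_mul_le_negMulLog_shadowWeight hl Q T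

theorem log_two_div_le_critStar [Nonempty P] [NeZero m] (hl : StrictMono l) :
    Real.log 2 / m ≤ critStar P :=
  le_critStar (by positivity) (isWeighting_levelWeighting hl)
    fun _ hQ => log_two_div_le_critExp hl hQ

end LevelWeighting

section BlockSize

open Filter

theorem log_three_le : Real.log 3 ≤ 3 / 2 := by
  rw [Real.log_le_iff_le_exp (by norm_num)]
  calc (3 : ℝ) ≤ 2.7 * 1.5 := by norm_num
    _ ≤ Real.exp 1 * Real.exp (1 / 2) := by
      gcongr
      · linarith [Real.exp_one_gt_d9]
      · linarith [Real.add_one_le_exp (1 / 2 : ℝ)]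
    _ = Real.exp (3 / 2) := by rw [← Real.exp_add]; norm_num

theorem mul_pow_le_exp (m : ℕ) : (m : ℝ) * 40000 ^ m ≤ Real.exp (12 * m) := by
  have hbase : (40000 : ℝ) ≤ Real.exp 11 := by
    calc (40000 : ℝ) ≤ 2.7 ^ 11 := by norm_num
      _ ≤ Real.exp 1 ^ 11 := by
        gcongr
        linarith [Real.exp_one_gt_d9]
      _ = Real.exp 11 := by rw [← Real.exp_nat_mul]; norm_num
  calc (m : ℝ) * 40000 ^ m ≤ Real.exp m * Real.exp 11 ^ m := by
        gcongr
        linarith [Real.add_one_le_exp (m : ℝ)]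
    _ = Real.exp (12 * m) := by
      rw [← Real.exp_nat_mul, ← Real.exp_add]
      congr 1
      ring

theorem mul_mul_pow_lt {n m : ℕ} (hn : 400 ≤ Real.log n) (hm : m ≤ Real.log n / 20) :
    100 * (m * 40000 ^ m) < n := by
  have hn₀ : (0 : ℝ) < n := by
    by_contra h
    rw [le_antisymm (not_lt.1 h) n.cast_nonneg, Real.log_zero] at hn
    linarith
  have hreal : (100 : ℝ) * (m * 40000 ^ m) < n := by
    calc (100 : ℝ) * (m * 40000 ^ m) ≤ 100 * Real.exp (3 / 5 * Real.log n) := by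
          gcongr
          exact (mul_pow_le_exp m).trans (Real.exp_le_exp.2 (by linarith))
      _ < Real.exp (2 / 5 * Real.log n) * Real.exp (3 / 5 * Real.log n) := by
          gcongr
          linarith [Real.add_one_le_exp (2 / 5 * Real.log n)]
      _ = n := by
          rw [← Real.exp_add, ← add_mul]
          norm_num [Real.exp_log hn₀]
  exact_mod_cast hreal

theorem eventually_exists_mul_pow_lt : ∀ᶠ n : ℕ in atTop, ∃ m : ℕ, 0 < m ∧
    100 * (m * 40000 ^ m) < n ∧ Real.log 3 / (3 * m) ≤ 20 / Real.log n := by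
  have hlog : Tendsto (fun n : ℕ => Real.log n) atTop atTop :=
    Real.tendsto_log_atTop.comp tendsto_natCast_atTop_atTop
  filter_upwards [hlog.eventually_ge_atTop 400] with n hn
  have hle : (⌊Real.log n / 20⌋₊ : ℝ) ≤ Real.log n / 20 := Nat.floor_le (by linarith)
  have hge : Real.log n / 40 ≤ ⌊Real.log n / 20⌋₊ := by
    linarith [Nat.lt_floor_add_one (Real.log n / 20)]
  have hpos : (0 : ℝ) < ⌊Real.log n / 20⌋₊ := by linarith
  refine ⟨⌊Real.log n / 20⌋₊, by exact_mod_cast hpos, mul_mul_pow_lt hn hle, ?_⟩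
  rw [div_le_div_iff₀ (by positivity) (by linarith)]
  nlinarith [log_three_le]

end BlockSize

section Bounds

open Filter

variable {P : Type*} [Fintype P] [PartialOrder P]

theorem log_two_div_three_le_critStar [Nonempty P] (h : coverArcs P ∈ richDigraphs P) :
    Real.log 2 / 3 ≤ critStar P := by
  obtain ⟨l, hl⟩ := mem_richDigraphs.1 h
  exact_mod_cast log_two_div_le_critStar hl.isLevelling.strictMono

theorem critStar_le_of_richDigraphs (h : coverArcs P ∈ richDigraphs P) {m : ℕ} (hm₀ : 0 < m)
    (hm : 100 * (m * 40000 ^ m) < Fintype.card P) :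
    critStar P ≤ Real.log 2 / 3 + Real.log 3 / (3 * m) := by
  obtain ⟨l, hl⟩ := mem_richDigraphs.1 h
  obtain ⟨S, A, T, hS, hA, hT, hSA, hAT⟩ := hl.exists_complete hm
  have hlt_SA : ∀ s ∈ S, ∀ a ∈ A, s < a := fun s hs a ha => (mem_coverArcs.1 (hSA s hs a ha)).lt
  have hlt_AT : ∀ a ∈ A, ∀ t ∈ T, a < t := fun a ha t ht => (mem_coverArcs.1 (hAT a ha t ht)).lt
  obtain ⟨a, ha⟩ : A.Nonempty := card_pos.1 (hA ▸ hm₀)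
  have hlt_ST : ∀ s ∈ S, ∀ t ∈ T, s < t :=
    fun s hs t ht => (hlt_SA s hs a ha).trans (hlt_AT a ha t ht)
  simpa using critStar_le_of_chain (B := ![S, A, T]) hm₀ (by simp [Fin.forall_fin_succ, *])
    (by simpa [Fin.forall_fin_succ] using ⟨⟨hlt_SA, hlt_ST⟩, hlt_AT⟩)

theorem eventually_critStar_bounds : ∀ᶠ N in atTop, ∀ P : PartialOrder (Fin N),
    coverArcs (Fin N) ∈ richDigraphs (Fin N) →
      Real.log 2 / 3 ≤ critStar (Fin N) ∧
        critStar (Fin N) ≤ Real.log 2 / 3 + 20 / Real.log N := by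
  filter_upwards [eventually_exists_mul_pow_lt, eventually_gt_atTop 0]
    with N ⟨m, hm₀, hm, hlog⟩ hN P hP
  have : Nonempty (Fin N) := ⟨⟨0, hN⟩⟩
  have hupper := critStar_le_of_richDigraphs hP hm₀ (by rwa [Fintype.card_fin])
  exact ⟨log_two_div_three_le_critStar hP, hupper.trans (by gcongr)⟩

end Bounds

end KleitmanRothschild

/-- Almost all posets on `N` labelled elements satisfy
`log 2 / 3 ≤ c_⋆(P) ≤ log 2 / 3 + K / log N`: there is a constant `K > 0` such that the
proportion of partial orders on `[N]` (modelled as `Fin N`) satisfying these bounds tends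
to `1` as `N → ∞`. -/
theorem stmt17 :
    ∃ K : ℝ, 0 < K ∧
      Filter.Tendsto (fun N : ℕ =>
          (Nat.card {r : Fin N → Fin N → Prop // ∃ h : IsPartialOrder (Fin N) r,
              Real.log 2 / 3 ≤ @critStar (Fin N) _ (relPO r h) ∧
                @critStar (Fin N) _ (relPO r h) ≤ Real.log 2 / 3 + K / Real.log N} : ℝ) /
            (Nat.card {r : Fin N → Fin N → Prop // IsPartialOrder (Fin N) r} : ℝ))
        Filter.atTop (nhds 1) := by
  refine ⟨20, by norm_num, ?_⟩
  simpa only [← KleitmanRothschild.card_exists_relPO,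
    Nat.card_congr KleitmanRothschild.relPOEquiv] using
    KleitmanRothschild.tendsto_card_partialOrder_div
      KleitmanRothschild.eventually_critStar_bounds
end

section
/- The poset Ramsey number R(𝒫(3), 𝒫(3)) equals 7. That is: (a) for every function c : 𝒫(7) → {1,2} there exists an injective map φ : 𝒫(3) → 𝒫(7) with φ(x) ⊆ φ(y) if and only if x ⊆ y, whose image is monochromatic under c; and (b) there exists a function c : 𝒫(6) → {1,2} such that no injective map φ : 𝒫(3) → 𝒫(6) with φ(x) ⊆ φ(y) if and only if x ⊆ y has a monochromatic image under c. -/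
/-!
Call the six-element poset formed by the two middle levels of `𝒫(3)` a crown; a cube is a crown
with a least and a greatest element added. A finite search shows that, when `𝒫(6)` is 2-coloured,
there is a crown in the colour of the full set or a crown with an upper bound in the other colour.
If `∅` and `{i}` had different colours in `𝒫(7)`, we could apply this to the interval above `{i}`:
one of the points `∅` and `{i}` has the colour of the structure found and supplies the missing least
element, so that a cube arises. Hence in a colouring without monochromatic cube all singletons have
the colour of `∅` and, dually, all complements of singletons that of the full set. If the two
colours agree there is an obvious cube, and otherwise a second, smaller search yields one of
the colour of `∅` without its least element or one of the other colour without its greatest.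
-/

namespace PosetRamsey

section Crown

variable {β γ : Type*} {r : β → β → Prop} {s : γ → γ → Prop} {S T : Set β} {f : β → γ}

/-- The standard example of a three-dimensional poset, the two middle levels of `𝒫(3)`, inside a
set: `a i` lies below `b j` exactly when `i ≠ j`. In a partial order this forces the `a i`, and
likewise the `b j`, to be pairwise incomparable. The relation `r` is arbitrary, so that the notion
applies to binary codes and to reversed orders as well. -/
def HasCrown (r : β → β → Prop) (S : Set β) : Prop :=
  ∃ a b : Fin 3 → β, (∀ i, a i ∈ S) ∧ (∀ i, b i ∈ S) ∧ ∀ i j, r (a i) (b j) ↔ i ≠ j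

/-- A crown together with an upper bound, that is, a copy of `𝒫(3)` without its least element;
for the reversed order, a copy of `𝒫(3)` without its greatest element. -/
def HasCappedCrown (r : β → β → Prop) (S : Set β) : Prop :=
  ∃ t ∈ S, HasCrown r (S ∩ {x | r x t})

/-- A crown together with a lower and an upper bound, that is, a copy of `𝒫(3)`. -/
def HasCube (r : β → β → Prop) (S : Set β) : Prop :=
  ∃ o ∈ S, HasCappedCrown r (S ∩ {x | r o x})

theorem HasCrown.mono (hST : S ⊆ T) : HasCrown r S → HasCrown r T :=
  fun ⟨a, b, ha, hb, hab⟩ => ⟨a, b, fun i => hST (ha i), fun i => hST (hb i), hab⟩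

theorem HasCrown.hasCappedCrown {t : β} (h : HasCrown r S) (hST : S ⊆ T) (ht : t ∈ T)
    (hle : ∀ x ∈ S, r x t) : HasCappedCrown r T :=
  ⟨t, ht, h.mono fun _ hx => ⟨hST hx, hle _ hx⟩⟩

theorem HasCappedCrown.mono (hST : S ⊆ T) : HasCappedCrown r S → HasCappedCrown r T :=
  fun ⟨t, ht, h⟩ => ⟨t, hST ht, h.mono (Set.inter_subset_inter_left _ hST)⟩

theorem HasCappedCrown.hasCube {o : β} (h : HasCappedCrown r S) (hST : S ⊆ T) (ho : o ∈ T)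
    (hle : ∀ x ∈ S, r o x) : HasCube r T :=
  ⟨o, ho, h.mono fun _ hx => ⟨hST hx, hle _ hx⟩⟩

theorem HasCube.mono (hST : S ⊆ T) : HasCube r S → HasCube r T :=
  fun ⟨o, ho, h⟩ => ⟨o, hST ho, h.mono (Set.inter_subset_inter_left _ hST)⟩

theorem HasCrown.flip (h : HasCrown r S) : HasCrown (flip r) S := by
  obtain ⟨a, b, ha, hb, hab⟩ := h
  exact ⟨b, a, hb, ha, fun i j => (hab j i).trans ne_comm⟩

theorem HasCube.flip (h : HasCube r S) : HasCube (flip r) S := by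
  obtain ⟨o, ho, t, ⟨htS, hot⟩, h⟩ := h
  refine ⟨t, htS, o, ⟨ho, hot⟩, h.flip.mono ?_⟩
  rintro x ⟨⟨hxS, hox⟩, hxt⟩
  exact ⟨⟨hxS, hxt⟩, hox⟩

theorem hasCrown_image_iff (hf : ∀ x y, s (f x) (f y) ↔ r x y) :
    HasCrown s (f '' S) ↔ HasCrown r S := by
  constructor
  · rintro ⟨a, b, ha, hb, hab⟩
    choose a' ha' hfa using ha
    choose b' hb' hfb using hb
    exact ⟨a', b', ha', hb', fun i j => by rw [← hf, hfa, hfb, hab]⟩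
  · rintro ⟨a, b, ha, hb, hab⟩
    exact ⟨f ∘ a, f ∘ b, fun i => Set.mem_image_of_mem f (ha i),
      fun i => Set.mem_image_of_mem f (hb i), fun i j => (hf _ _).trans (hab i j)⟩

theorem hasCappedCrown_image_iff (hf : ∀ x y, s (f x) (f y) ↔ r x y) :
    HasCappedCrown s (f '' S) ↔ HasCappedCrown r S := by
  have below (t : β) : f '' S ∩ {y | s y (f t)} = f '' (S ∩ {x | r x t}) := by
    simp only [← Set.image_inter_preimage, Set.preimage_ofPred_eq, hf]
  simp only [HasCappedCrown, Set.exists_mem_image, below, hasCrown_image_iff hf]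

theorem hasCube_image_iff (hf : ∀ x y, s (f x) (f y) ↔ r x y) :
    HasCube s (f '' S) ↔ HasCube r S := by
  have above (o : β) : f '' S ∩ {y | s (f o) y} = f '' (S ∩ {x | r o x}) := by
    simp only [← Set.image_inter_preimage, Set.preimage_ofPred_eq, hf]
  simp only [HasCube, Set.exists_mem_image, above, hasCappedCrown_image_iff hf]

theorem hasCube_of_preimage_compl {α : Type*} [BooleanAlgebra α] {S : Set α}
    (h : HasCube (· ≤ ·) (compl ⁻¹' S)) : HasCube (· ≤ ·) S := by
  have := ((hasCube_image_iff (s := flip (· ≤ ·)) fun _ _ => compl_le_compl_iff_le).2 h).flip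
  rwa [Set.image_preimage_eq S compl_surjective] at this

theorem hasCube_of_atoms_of_coatoms {α : Type*} [Fintype α] [DecidableEq α] (g : Fin 3 ↪ α)
    {S : Set (Finset α)} (hbot : ∅ ∈ S) (hatom : ∀ i, {i} ∈ S) (hcoatom : ∀ i, {i}ᶜ ∈ S)
    (htop : Finset.univ ∈ S) : HasCube (· ≤ ·) S := by
  exact ⟨∅, hbot, Finset.univ, ⟨htop, by simp⟩, fun i => {g i}, fun i => {g i}ᶜ,
    by simp [hatom], by simp [hcoatom], by simp [eq_comm]⟩

end Crown

section Embedding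

variable {α : Type*} [PartialOrder α]

/-- The map sending `∅`, `{i}`, `{i}ᶜ` and the full set to `o`, `a i`, `b i` and `t`. -/
def cubeMap (o t : α) (a b : Fin 3 → α) (x : Finset (Fin 3)) : α :=
  match decide (0 ∈ x), decide (1 ∈ x), decide (2 ∈ x) with
  | false, false, false => o
  | true, false, false => a 0
  | false, true, false => a 1
  | false, false, true => a 2
  | false, true, true => b 0
  | true, false, true => b 1
  | true, true, false => b 2
  | true, true, true => t

theorem hasCube_iff_exists_orderEmbedding {S : Set α} :
    HasCube (· ≤ ·) S ↔ ∃ φ : Finset (Fin 3) ↪o α, ∀ x, φ x ∈ S := by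
  constructor
  · rintro ⟨o, ho, t, ⟨ht, hot⟩, a, b, ha, hb, hab⟩
    have hmem (x) : cubeMap o t a b x ∈ S := by
      unfold cubeMap
      split <;> first | assumption | exact (ha _).1.1 | exact (hb _).1.1
    have hmono : Monotone (cubeMap o t a b) := by
      intro x y hxy
      have h0 := @hxy 0
      have h1 := @hxy 1
      have h2 := @hxy 2
      simp only [Set.mem_inter_iff, Set.mem_ofPred_eq] at *
      unfold cubeMap
      by_cases x0 : 0 ∈ x <;> by_cases x1 : 1 ∈ x <;> by_cases x2 : 2 ∈ x <;>
      by_cases y0 : 0 ∈ y <;> by_cases y1 : 1 ∈ y <;> by_cases y2 : 2 ∈ y <;>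
      simp_all
    have hsingle (i) : cubeMap o t a b {i} = a i := by fin_cases i <;> rfl
    have hcompl (i) : cubeMap o t a b {i}ᶜ = b i := by fin_cases i <;> rfl
    refine ⟨OrderEmbedding.ofMapLEIff _ fun x y => ⟨fun hxy i hx => ?_, @hmono x y⟩, hmem⟩
    by_contra hy
    have hxi : a i ≤ cubeMap o t a b x := hsingle i ▸ hmono (Finset.singleton_subset_iff.2 hx)
    have hyi : cubeMap o t a b y ≤ b i :=
      hcompl i ▸ hmono (Finset.subset_compl_singleton.2 hy)
    exact (hab i i).1 (hxi.trans (hxy.trans hyi)) rfl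
  · rintro ⟨φ, hφ⟩
    refine ⟨φ ∅, hφ _, φ Finset.univ, ⟨hφ _, by simp⟩, fun i => φ {i}, fun i => φ {i}ᶜ,
      by simp [hφ], by simp [hφ], fun i j => ?_⟩
    simp [eq_comm]

end Embedding

section Search

variable {β : Type*} {le : β → β → Bool} {l : List β} {x : β}

/-- Whether `x` and members of `l` form a crown with `a 0 = x`. -/
def crownFrom (le : β → β → Bool) (l : List β) (x : β) : Bool :=
  let up := l.filter (le x)
  up.any fun b₁ => up.any fun b₂ =>
    l.any fun a₁ => le a₁ b₂ && !le a₁ b₁ && l.any fun a₂ => le a₂ b₁ && !le a₂ b₂ &&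
      l.any fun b₀ => le a₁ b₀ && le a₂ b₀ && !le x b₀

/-- Whether `x` and members of `l` form a crown involving `x`. -/
def crownThrough (le : β → β → Bool) (l : List β) (x : β) : Bool :=
  crownFrom le l x || crownFrom (flip le) l x

/-- Whether `x` and members of `l` form a capped crown involving `x`. -/
def cappedThrough (le : β → β → Bool) (l : List β) (x : β) : Bool :=
  (l.any fun t => le x t && crownThrough le (l.filter (le · t)) x) ||
    (l.filter (le · x)).any (crownFrom le (l.filter (le · x)))

/-- Whether some members of `l` form a cube. -/
def cubeIn (le : β → β → Bool) (l : List β) : Bool :=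
  l.any fun o => l.any fun t =>
    let between := l.filter fun y => le o y && le y t
    between.any (crownFrom le between)

theorem crownFrom_iff :
    crownFrom le l x = true ↔ ∃ a b : Fin 3 → β, a 0 = x ∧ a 1 ∈ l ∧ a 2 ∈ l ∧
      (∀ i, b i ∈ l) ∧ ∀ i j, le (a i) (b j) ↔ i ≠ j := by
  simp only [crownFrom, List.any_eq_true, List.mem_filter, Bool.and_eq_true, Bool.not_eq_true',
    Fin.forall_fin_succ, Fin.forall_fin_zero]
  constructor
  · rintro ⟨b₁, ⟨hb₁, xb₁⟩, b₂, ⟨hb₂, xb₂⟩, a₁, ha₁, ⟨a₁b₂, a₁b₁⟩, a₂, ha₂, ⟨a₂b₁, a₂b₂⟩,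
      b₀, hb₀, ⟨a₁b₀, a₂b₀⟩, xb₀⟩
    exact ⟨![x, a₁, a₂], ![b₀, b₁, b₂], by simp_all⟩
  · rintro ⟨a, b, rfl, ha₁, ha₂, hb, hab⟩
    refine ⟨b 1, ?_, b 2, ?_, a 1, ?_, ?_, a 2, ?_, ?_, b 0, ?_⟩ <;> simp_all

theorem HasCrown.of_crownFrom (h : crownFrom le l x = true) :
    HasCrown (le · ·) {y | y ∈ x :: l} := by
  obtain ⟨a, b, rfl, ha₁, ha₂, hb, hab⟩ := crownFrom_iff.1 h
  exact ⟨a, b, by simp [Fin.forall_fin_succ, ha₁, ha₂], by simp [hb], hab⟩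

theorem HasCrown.of_crownThrough (h : crownThrough le l x = true) :
    HasCrown (le · ·) {y | y ∈ x :: l} :=
  (Bool.or_eq_true_iff.1 h).elim .of_crownFrom fun h => (HasCrown.of_crownFrom h).flip

theorem HasCappedCrown.of_cappedThrough (h : cappedThrough le l x = true) :
    HasCappedCrown (le · ·) {y | y ∈ x :: l} := by
  simp only [cappedThrough, Bool.or_eq_true, List.any_eq_true, Bool.and_eq_true,
    List.mem_filter] at h
  obtain ⟨t, ht, hxt, h⟩ | ⟨y, ⟨hy, hyx⟩, h⟩ := h
  · refine ⟨t, List.mem_cons_of_mem x ht, (HasCrown.of_crownThrough h).mono ?_⟩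
    rintro z hz
    obtain rfl | hz := List.mem_cons.1 hz
    · exact ⟨List.mem_cons_self, hxt⟩
    · exact ⟨List.mem_cons_of_mem x (List.mem_filter.1 hz).1, (List.mem_filter.1 hz).2⟩
  · refine ⟨x, List.mem_cons_self, (HasCrown.of_crownFrom h).mono ?_⟩
    rintro z hz
    obtain rfl | hz := List.mem_cons.1 hz
    · exact ⟨List.mem_cons_of_mem x hy, hyx⟩
    · exact ⟨List.mem_cons_of_mem x (List.mem_filter.1 hz).1, (List.mem_filter.1 hz).2⟩

theorem cubeIn_of_hasCube (h : HasCube (le · ·) {y | y ∈ l}) : cubeIn le l = true := by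
  obtain ⟨o, ho, t, ⟨ht, -⟩, a, b, ha, hb, hab⟩ := h
  have hbetween {y} (hy : y ∈ {y | y ∈ l} ∩ {y | le o y} ∩ {y | le y t}) :
      y ∈ l.filter fun y => le o y && le y t := by
    simpa [and_assoc] using hy
  simp only [cubeIn, List.any_eq_true]
  exact ⟨o, ho, t, ht, a 0, hbetween (ha 0), crownFrom_iff.2 ⟨a, b, rfl, hbetween (ha 1),
    hbetween (ha 2), fun i => hbetween (hb i), hab⟩⟩

/-- Depth-first search through the partial 2-colourings of `β`, each given by the lists of its two
colour classes. The first argument lists the elements to branch on, in the order in which the search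
needs them, and the last one the partial colourings still to be refuted. A class acquiring a new
element is discarded as soon as `f` (for the first class) or `g` (for the second) reports a
conflict. -/
def refute (f g : List β → β → Bool) : List β → List (List β × List β) → Bool
  | _, [] => true
  | [], _ :: _ => false
  | x :: xs, (l, m) :: ps =>
    refute f g xs ((bif f l x then [] else [(x :: l, m)]) ++
      (bif g m x then [] else [(l, x :: m)]) ++ ps)

theorem not_consistent_of_refute {f g : List β → β → Bool} {S T : Set β}
    (hf : ∀ l x, (∀ y ∈ x :: l, y ∈ S) → f l x = false)
    (hg : ∀ l x, (∀ y ∈ x :: l, y ∈ T) → g l x = false) :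
    ∀ {xs : List β} {ps : List (List β × List β)}, (∀ x ∈ xs, x ∈ S ∨ x ∈ T) →
      refute f g xs ps = true → ∀ p ∈ ps, ¬ ((∀ y ∈ p.1, y ∈ S) ∧ ∀ y ∈ p.2, y ∈ T)
  | _, [], _, _ => by simp
  | x :: xs, (l, m) :: ps, hxs, h => by
    have ih := not_consistent_of_refute hf hg (List.forall_mem_cons.1 hxs).2 h
    simp only [List.forall_mem_append] at ih
    obtain ⟨⟨ihS, ihT⟩, ihps⟩ := ih
    refine List.forall_mem_cons.2 ⟨fun ⟨hl, hm⟩ => ?_, ihps⟩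
    rcases hxs x List.mem_cons_self with hx | hx
    · have hxl : ∀ y ∈ x :: l, y ∈ S := List.forall_mem_cons.2 ⟨hx, hl⟩
      simp_all
    · have hxm : ∀ y ∈ x :: m, y ∈ T := List.forall_mem_cons.2 ⟨hx, hm⟩
      simp_all

section Image

variable {α : Type*} {r : α → α → Prop} {f : α → β} {S : Set α}

theorem crownThrough_eq_false (hf : ∀ A B, le (f A) (f B) = true ↔ r A B) (hS : ¬ HasCrown r S)
    (l : List β) (x : β) (hl : ∀ y ∈ x :: l, y ∈ f '' S) : crownThrough le l x = false :=
  Bool.eq_false_iff.2 fun h =>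
    hS ((hasCrown_image_iff hf).1 ((HasCrown.of_crownThrough h).mono hl))

theorem cappedThrough_eq_false (hf : ∀ A B, le (f A) (f B) = true ↔ r A B)
    (hS : ¬ HasCappedCrown r S) (l : List β) (x : β) (hl : ∀ y ∈ x :: l, y ∈ f '' S) :
    cappedThrough le l x = false :=
  Bool.eq_false_iff.2 fun h =>
    hS ((hasCappedCrown_image_iff hf).1 ((HasCappedCrown.of_cappedThrough h).mono hl))

theorem not_hasCube_of_cubeIn (hf : ∀ A B, le (f A) (f B) = true ↔ r A B)
    (hS : ∀ A ∈ S, f A ∈ l) (h : cubeIn le l = false) : ¬ HasCube r S := fun hcube =>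
  Bool.eq_false_iff.1 h
    (cubeIn_of_hasCube (((hasCube_image_iff hf).2 hcube).mono (Set.image_subset_iff.2 hS)))

end Image

end Search

section Code

variable {n : ℕ}

/-- The binary code of a subset of `Fin n`. -/
def code (A : Finset (Fin n)) : ℕ := Nat.ofBits fun i => decide (i ∈ A)

/-- Inclusion of binary codes. -/
def codeLE (x y : ℕ) : Bool := (x &&& y).beq x

theorem testBit_code (A : Finset (Fin n)) (i : Fin n) : (code A).testBit i = decide (i ∈ A) := by
  simp [code]

theorem codeLE_code (A B : Finset (Fin n)) : codeLE (code A) (code B) = true ↔ A ≤ B := by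
  rw [codeLE, Nat.beq_eq]
  constructor
  · intro h i hi
    simpa [testBit_code, hi] using congrArg (Nat.testBit · i) h
  · intro h
    refine Nat.eq_of_testBit_eq fun i => ?_
    by_cases hi : i < n
    · have := @h ⟨i, hi⟩
      simp_all [code]
    · simp_all [code]

theorem exists_code_eq {x : ℕ} (hx : x < 2 ^ n) : ∃ A : Finset (Fin n), code A = x :=
  ⟨Finset.univ.filter fun i => x.testBit i, by
    simp [code, Nat.ofBits_testBit, Nat.mod_eq_of_lt hx]⟩

theorem code_lt (A : Finset (Fin n)) : code A < 2 ^ n := Nat.ofBits_lt_two_pow _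

theorem code_singleton (i : Fin n) : code {i} = 2 ^ (i : ℕ) := by
  refine Nat.eq_of_testBit_eq fun j => ?_
  rw [code, Nat.testBit_ofBits, Nat.testBit_two_pow]
  split_ifs with hj
  · simp [Fin.ext_iff, eq_comm]
  · exact (decide_eq_false (by lia)).symm

theorem not_consistent_of_refute_code {f g : List ℕ → ℕ → Bool} {S : Set (Finset (Fin n))}
    {xs : List ℕ} {ps : List (List ℕ × List ℕ)}
    (hf : ∀ l x, (∀ y ∈ x :: l, y ∈ code '' S) → f l x = false)
    (hg : ∀ l x, (∀ y ∈ x :: l, y ∈ code '' Sᶜ) → g l x = false)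
    (hxs : ∀ x ∈ xs, x < 2 ^ n) (h : refute f g xs ps = true) :
    ∀ p ∈ ps, ¬ ((∀ y ∈ p.1, y ∈ code '' S) ∧ ∀ y ∈ p.2, y ∈ code '' Sᶜ) := by
  refine not_consistent_of_refute hf hg (fun x hx => ?_) h
  obtain ⟨A, rfl⟩ := exists_code_eq (hxs x hx)
  exact (em (A ∈ S)).imp (Set.mem_image_of_mem code) (Set.mem_image_of_mem code)

end Code

section Sorting

variable {n : ℕ}

theorem exists_perm_lt_iff (p : Fin (n + 1) → Prop) (j : Fin (n + 1)) :
    ∃ σ : Equiv.Perm (Fin (n + 1)), σ (Fin.last n) = j ∧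
      ∃ k ≤ n, ∀ i : Fin n, p (σ i.castSucc) ↔ i < k := by
  classical
  let key (i : Fin (n + 1)) : ℕ := if i = j then 2 else if p i then 0 else 1
  have hkey (i) : key i = 2 ↔ i = j := by simp only [key]; split_ifs <;> simp [*]
  have hle (i) : key i ≤ 2 := by simp only [key]; split_ifs <;> simp
  let σ := Tuple.sort key
  have hσ : Monotone (key ∘ σ) := Tuple.monotone_sort key
  have hlast : σ (Fin.last n) = j := by
    rw [← hkey]
    refine (hle _).antisymm ?_
    simpa [(hkey j).2 rfl] using hσ (Fin.le_last (σ.symm j))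
  have hp (i : Fin n) : p (σ i.castSucc) ↔ key (σ i.castSucc) = 0 := by
    have : σ i.castSucc ≠ j := hlast ▸ σ.injective.ne (Fin.castSucc_lt_last i).ne
    simp [key, this]
  have hlower : IsLowerSet {i : Fin n | p (σ i.castSucc)} := fun i i' hi h => by
    simp only [Set.mem_ofPred_eq, hp] at h ⊢
    exact Nat.le_zero.1 (h ▸ hσ (Fin.castSucc_le_castSucc_iff.2 hi))
  refine ⟨σ, hlast, ?_⟩
  rcases hlower.eq_univ_or_Iio with h | ⟨a, h⟩
  · exact ⟨n, le_rfl, fun i => by simpa using Set.ext_iff.1 h i⟩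
  · exact ⟨a, a.2.le, fun i => Set.ext_iff.1 h i⟩

end Sorting

section Upper

/-- The branching order refuting all `crownStart k`: the codes of the sets to branch on, one for
each inner node of the search tree, in depth-first order. It was found by computer. -/
def crownBranching : List ℕ :=
  [29, 28, 21, 30, 23, 22, 18, 6, 20, 15, 13, 7, 19, 14, 26, 27, 17, 25, 24, 19, 27, 24, 27, 25,
   10, 13, 12, 9, 24, 10, 15, 13, 13, 14, 15, 23, 15, 13, 7, 19, 27, 9, 27, 19, 25, 27, 19, 25, 13,
   25, 27, 11, 15, 30, 15, 14, 13, 25, 26, 27, 25, 26, 27, 27, 18, 25, 25, 13, 27, 11, 15, 15, 13,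
   23, 7, 21, 9, 17, 27, 5, 18, 3, 17, 11, 27, 27, 10, 25, 27, 19, 21, 23, 25, 25, 18, 21, 23, 27,
   23, 19, 27, 30, 22, 26, 6, 11, 15, 15, 26, 3, 14, 15, 7, 11, 7, 30, 15, 14, 22, 15, 7, 10, 30,
   22, 30, 15, 11, 14, 27, 26, 24, 6, 3, 17, 50, 51, 3, 44, 42, 46, 5, 51, 49, 18, 39, 23, 15, 18,
   9, 20, 28, 12, 17, 60, 52, 12, 57, 29, 10, 20, 17, 51, 3, 7, 54, 38, 23, 54, 38, 27, 58, 30, 27,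
   28, 24, 20, 55, 23, 53, 21, 32, 29, 51, 54, 52, 49, 38, 7, 6, 30, 15, 14, 34, 50, 35, 18, 7, 54,
   6, 12, 15, 18, 19, 26, 25, 25, 26, 18, 23, 10, 11, 14, 6, 7, 15, 62, 46, 38, 39, 55, 10, 29, 62,
   46, 12, 22, 52, 23, 54, 53, 61, 22, 18, 20, 14, 6, 23, 12, 13, 19, 26, 11, 18, 22, 20, 21, 18,
   18, 22, 20, 29, 6, 7, 14, 15, 6, 26, 62, 50, 58, 51, 55, 26, 6, 23, 62, 46, 10, 54, 18, 7, 50,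
   54, 22, 18, 7, 51, 58, 55, 53, 20, 14, 15, 10, 7, 18, 19, 11, 10, 19, 18, 7, 22, 14, 6, 18, 10,
   12, 29, 6, 23, 14, 28, 20, 22, 13, 7, 28, 15, 30, 17, 19, 3, 28, 13, 21, 20, 15, 22, 14, 7, 6,
   13, 20, 21, 20, 6, 21, 7, 22, 6, 44, 60, 24, 20, 10, 18, 54, 20, 12, 56, 58, 18, 46, 30, 20, 21,
   22, 59, 27, 43, 51, 35, 27, 62, 54, 30, 32, 58, 57, 61, 45, 53, 44, 12, 50, 14, 56, 44, 58, 60,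
   46, 13, 12, 14, 7, 3, 27, 24, 26, 25, 55, 3, 51, 7, 13, 12, 14, 13, 12, 14, 12, 13, 14, 14, 13,
   12, 7, 3, 26, 24, 25, 19, 7, 3, 12, 14, 13, 55, 51, 35, 39, 14, 13, 12, 3, 51, 59, 11, 12, 14,
   13, 19, 7, 3, 20, 12, 28, 24, 3, 61, 62, 46, 54, 38, 30, 45, 62, 46, 38, 30, 54, 53, 46, 62, 54,
   30, 38, 37, 30, 62, 38, 46, 54, 29, 60, 56, 57, 11, 29, 38, 30, 62, 46, 54, 5, 22, 14, 6, 13, 6,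
   22, 14, 21, 14, 6, 22, 30, 24, 25, 19, 29, 54, 38, 46, 30, 62, 5, 22, 6, 14, 21, 6, 14, 22, 13,
   6, 22, 14, 25, 24, 26, 25, 26, 24, 30, 37, 53, 55, 39, 19, 3, 27, 24, 11, 11, 62, 53, 37, 23, 7,
   39, 55, 46, 13, 37, 61, 53, 45, 29, 30, 7, 39, 55, 53, 37, 23, 14, 13, 5, 21, 12, 7, 6, 60, 54,
   38, 44, 32, 50, 34, 27, 62, 53, 23, 55, 7, 39, 37, 30, 53, 23, 55, 7, 39, 37, 23, 46, 44, 60,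
   14, 14, 13, 61, 37, 29, 45, 53, 46, 29, 45, 61, 53, 37, 13, 60, 54, 38, 44, 37, 39, 53, 6, 55,
   29, 23, 59, 42, 58, 43, 7, 42, 62, 14, 30, 46, 58, 15, 30, 19, 24, 20, 28, 3, 10, 6, 14, 10, 6,
   5, 12, 43, 41, 59, 57, 14, 19, 3, 9, 6, 43, 51, 35, 59, 22, 35, 51, 43, 59, 15, 7, 9, 14, 10,
   12, 23, 30, 22, 18, 20, 10, 28, 26, 18, 18, 19, 30, 13, 10, 3, 30, 25, 9, 61, 53, 13, 6, 61, 53,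
   37, 13, 45, 30, 14, 12, 22, 6, 28, 29, 54, 35, 10, 15, 7, 43, 47, 39, 46, 3, 39, 26, 11, 23, 18,
   10, 51, 6, 55, 58, 6, 35, 15, 39, 43, 11, 47, 30, 39, 51, 55, 35, 23, 19, 7, 62, 47, 35, 7, 39,
   15, 43, 11, 22, 14, 26, 42, 26, 38, 14, 50, 38, 10, 13, 55, 27, 25, 26, 28, 30, 23, 28, 26, 25,
   30, 27, 27, 39, 54, 7, 22, 38, 19, 6, 62, 24, 42, 58, 46, 30, 25, 22, 21, 30, 28, 21, 30, 26,
   28, 21, 15, 22, 19, 24, 27, 30, 18, 20, 17, 30, 39, 47, 45, 7, 33, 32, 36, 28, 43, 41, 45, 47,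
   11, 6, 3, 14, 27, 24, 23, 60, 11, 46, 42, 47, 14, 43, 15, 57, 15, 10, 28, 30, 61, 27, 11, 26,
   30, 14, 15, 28, 42, 43, 15, 46, 47, 14, 9, 45, 25, 56, 36, 32, 41, 44, 24, 15, 30, 27, 19, 25,
   28, 53, 18, 51, 49, 55, 22, 25, 26, 27, 6, 3, 37, 45, 53, 61, 49, 19, 17, 32, 35, 51, 3]

/-- The partial colourings of `𝒫(6)` from which to search for a crown in the first class or a capped
crown in the second. The full set, of code `63`, is in the first class. Of the singletons other than
`{5}`, the first `k` are in the first class and the rest in the second; either `{5}ᶜ`, of code `31`,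
is in the second class or all `{i}ᶜ` are in the first. Permuting the coordinates brings every
colouring with the full set in the first class into this form for some `k ≤ 5`. -/
def crownStart (k : ℕ) : List (List ℕ × List ℕ) :=
  let low := (List.range k).map (2 ^ ·)
  let high := (List.range' k (5 - k)).map (2 ^ ·)
  [(63 :: low, 31 :: high), (63 :: (List.range 6).map (63 - 2 ^ ·) ++ low, high)]

theorem refute_crownBranching : refute (crownThrough codeLE) (cappedThrough codeLE) crownBranching
    ((List.range 6).flatMap crownStart) = true := by
  decide +kernel

theorem hasCrown_or_hasCappedCrown_compl_of_sorted {S : Set (Finset (Fin 6))} {k : ℕ}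
    (huniv : Finset.univ ∈ S) (hk : k ≤ 5) (hatom : ∀ i : Fin 5, {i.castSucc} ∈ S ↔ i < k)
    (hcoatom : {Fin.last 5}ᶜ ∉ S ∨ ∀ i, {i}ᶜ ∈ S) :
    HasCrown (· ≤ ·) S ∨ HasCappedCrown (· ≤ ·) Sᶜ := by
  by_contra! h
  have hno := not_consistent_of_refute_code (crownThrough_eq_false codeLE_code h.1)
    (cappedThrough_eq_false codeLE_code h.2) (by decide +kernel) refute_crownBranching
  simp only [List.mem_flatMap, List.mem_range] at hno
  replace hno := fun p hp => hno p ⟨k, by lia, hp⟩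
  have hlow : ∀ y ∈ (List.range k).map (2 ^ ·), y ∈ code '' S := by
    simp only [List.forall_mem_map, List.mem_range]
    exact fun i hi => ⟨_, (hatom ⟨i, by lia⟩).2 hi, code_singleton _⟩
  have hhigh : ∀ y ∈ (List.range' k (5 - k)).map (2 ^ ·), y ∈ code '' Sᶜ := by
    simp only [List.forall_mem_map, List.mem_range'_1]
    exact fun i hi => ⟨_, mt (hatom ⟨i, by lia⟩).1 (by simp; lia), code_singleton _⟩
  have htop : 63 ∈ code '' S := ⟨_, huniv, by decide⟩
  have hcompl : ∀ i : Fin 6, code {i}ᶜ = 63 - 2 ^ (i : ℕ) := by decide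
  rcases hcoatom with hlast | hall
  · exact hno _ List.mem_cons_self ⟨List.forall_mem_cons.2 ⟨htop, hlow⟩,
      List.forall_mem_cons.2 ⟨⟨_, hlast, hcompl _⟩, hhigh⟩⟩
  · have hco : ∀ y ∈ (List.range 6).map (63 - 2 ^ ·), y ∈ code '' S := by
      simp only [List.forall_mem_map, List.mem_range]
      exact fun i hi => ⟨_, hall ⟨i, hi⟩, hcompl _⟩
    exact hno _ (List.mem_cons_of_mem _ List.mem_cons_self)
      ⟨List.forall_mem_cons.2 ⟨htop, List.forall_mem_append.2 ⟨hco, hlow⟩⟩, hhigh⟩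

theorem hasCrown_or_hasCappedCrown_compl {S : Set (Finset (Fin 6))} (huniv : Finset.univ ∈ S) :
    HasCrown (· ≤ ·) S ∨ HasCappedCrown (· ≤ ·) Sᶜ := by
  obtain ⟨j, hj⟩ : ∃ j, {j}ᶜ ∉ S ∨ ∀ i, {i}ᶜ ∈ S := by
    by_cases h : ∃ j, {j}ᶜ ∉ S
    · exact h.imp fun _ => Or.inl
    · exact ⟨0, .inr (by simpa using h)⟩
  obtain ⟨σ, hσ, k, hk, hatom⟩ := exists_perm_lt_iff (fun i => {i} ∈ S) j
  let e := σ.finsetCongr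
  have he (A B) : e A ≤ e B ↔ A ≤ B := Finset.map_subset_map
  have hcompl (i) : e {i}ᶜ = {σ i}ᶜ := by
    ext x
    simp [e, Equiv.symm_apply_eq]
  have := hasCrown_or_hasCappedCrown_compl_of_sorted (S := e ⁻¹' S) (k := k)
    (by simpa [e] using huniv) hk (by simpa [e] using hatom) (by
      simpa only [Set.mem_preimage, hcompl, hσ, σ.forall_congr_right (q := fun i => {i}ᶜ ∈ S)])
  rw [← hasCrown_image_iff he, ← hasCappedCrown_image_iff he, ← Set.preimage_compl] at this
  simpa only [e.image_preimage] using this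

/-- The branching order refuting the colourings of `𝒫(7)` with all singletons in the second class
and all `{i}ᶜ` in the first, in the format of `crownBranching`. -/
def coatomBranching : List ℕ :=
  [3, 15, 27, 43, 107, 99, 75, 75, 43, 51, 59, 83, 43, 107, 99, 91, 59, 51, 43, 75, 39, 23, 31, 27,
   43, 31, 27, 23, 47, 27, 59, 51, 71, 43, 23, 27, 31, 99, 91, 83, 27, 107, 83, 27, 91, 79, 23, 39,
   99, 103, 27, 99, 107, 43, 31, 39, 47, 43, 5, 15, 29, 45, 109, 101, 77, 77, 45, 53, 61, 85, 45,
   109, 101, 93, 61, 53, 45, 77, 39, 23, 31, 29, 45, 31, 29, 23, 47, 29, 61, 53, 71, 45, 23, 29,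
   31, 101, 93, 85, 29, 109, 85, 29, 93, 79, 23, 39, 101, 103, 29, 101, 109, 45, 31, 39, 47, 45, 6,
   78, 46, 31, 30, 47, 30, 62, 54, 79, 30, 102, 110, 46, 31, 47, 46, 7, 15, 23, 39]

theorem refute_coatomBranching :
    refute (cappedThrough (flip codeLE)) (cappedThrough codeLE) coatomBranching
      [((List.range 7).map (127 - 2 ^ ·), (List.range 7).map (2 ^ ·))] = true := by
  decide +kernel

theorem hasCappedCrown_flip_or_hasCappedCrown_compl {S : Set (Finset (Fin 7))}
    (hatom : ∀ i, {i} ∉ S) (hcoatom : ∀ i, {i}ᶜ ∈ S) :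
    HasCappedCrown (flip (· ≤ ·)) S ∨ HasCappedCrown (· ≤ ·) Sᶜ := by
  by_contra! h
  refine not_consistent_of_refute_code (cappedThrough_eq_false (fun A B => codeLE_code B A) h.1)
    (cappedThrough_eq_false codeLE_code h.2) (by decide +kernel) refute_coatomBranching
    _ List.mem_cons_self ?_
  have hcompl : ∀ i : Fin 7, code {i}ᶜ = 127 - 2 ^ (i : ℕ) := by decide
  simp only [List.forall_mem_map, List.mem_range]
  exact ⟨fun i hi => ⟨_, hcoatom ⟨i, hi⟩, hcompl _⟩,
    fun i hi => ⟨_, hatom ⟨i, hi⟩, code_singleton _⟩⟩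

variable {S : Set (Finset (Fin 7))}

theorem hasCube_or_hasCube_compl_of_atom {i : Fin 7} (hbot : ∅ ∈ S) (hi : {i} ∉ S) :
    HasCube (· ≤ ·) S ∨ HasCube (· ≤ ·) Sᶜ := by
  -- `f` identifies `𝒫(6)` with the interval above `{i}`, to which either `∅` or `{i}` adds a
  -- least element, and `univ` a greatest element when it has the right colour.
  let f (A : Finset (Fin 6)) : Finset (Fin 7) := insert i (A.map i.succAboveEmb)
  have hf (A B) : f A ≤ f B ↔ A ≤ B := by
    refine (Finset.insert_subset_insert_iff ?_).trans Finset.map_subset_map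
    simp
  have huniv : f Finset.univ = Finset.univ := by
    ext j
    simpa [f, eq_comm] using Fin.eq_self_or_eq_succAbove i j
  have hsub {T : Set (Finset (Fin 7))} {o} (hoi : o ≤ {i}) : f '' (f ⁻¹' T) ⊆ T ∩ {x | o ≤ x} := by
    rintro _ ⟨A, hA, rfl⟩
    exact ⟨hA, hoi.trans (by simp [f])⟩
  have hcrown {T : Set (Finset (Fin 7))} {o} (ho : o ∈ T) (hoi : o ≤ {i}) (htop : Finset.univ ∈ T)
      (h : HasCrown (· ≤ ·) (f ⁻¹' T)) : HasCube (· ≤ ·) T :=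
    ⟨o, ho, ((hasCrown_image_iff hf).2 h).hasCappedCrown (hsub hoi)
      ⟨htop, Finset.subset_univ _⟩ fun _ _ => Finset.subset_univ _⟩
  have hcapped {T : Set (Finset (Fin 7))} {o} (ho : o ∈ T) (hoi : o ≤ {i})
      (h : HasCappedCrown (· ≤ ·) (f ⁻¹' T)) : HasCube (· ≤ ·) T :=
    ⟨o, ho, ((hasCappedCrown_image_iff hf).2 h).mono (hsub hoi)⟩
  by_cases htop : Finset.univ ∈ S
  · have := hasCrown_or_hasCappedCrown_compl (S := f ⁻¹' S) (by simpa [huniv] using htop)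
    exact this.imp (hcrown hbot (by simp) htop) (hcapped hi le_rfl)
  · have := hasCrown_or_hasCappedCrown_compl (S := f ⁻¹' Sᶜ) (by simpa [huniv] using htop)
    rw [← Set.preimage_compl, compl_compl] at this
    exact this.symm.imp (hcapped hbot (by simp)) (hcrown hi le_rfl htop)

theorem singleton_mem_iff (hS : ¬ HasCube (· ≤ ·) S) (hSc : ¬ HasCube (· ≤ ·) Sᶜ) (i : Fin 7) :
    {i} ∈ S ↔ ∅ ∈ S := by
  constructor
  · contrapose
    intro hbot hi
    have := hasCube_or_hasCube_compl_of_atom (S := Sᶜ) hbot (not_not_intro hi)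
    rw [compl_compl] at this
    exact this.elim hSc hS
  · contrapose!
    exact fun hi hbot => (hasCube_or_hasCube_compl_of_atom hbot hi).elim hS hSc

theorem compl_singleton_mem_iff (hS : ¬ HasCube (· ≤ ·) S) (hSc : ¬ HasCube (· ≤ ·) Sᶜ)
    (i : Fin 7) : {i}ᶜ ∈ S ↔ Finset.univ ∈ S := by
  simpa using singleton_mem_iff (mt hasCube_of_preimage_compl hS)
    (mt (hasCube_of_preimage_compl (S := Sᶜ)) hSc) i

theorem hasCube_or_hasCube_compl_of_levels (hbot : ∅ ∉ S) (hatom : ∀ i, {i} ∉ S)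
    (hcoatom : ∀ i, {i}ᶜ ∈ S) (htop : Finset.univ ∈ S) :
    HasCube (· ≤ ·) S ∨ HasCube (· ≤ ·) Sᶜ :=
  (hasCappedCrown_flip_or_hasCappedCrown_compl hatom hcoatom).imp
    (fun h => (h.hasCube subset_rfl htop fun x _ => Finset.subset_univ x).flip)
    fun h => h.hasCube subset_rfl hbot fun x _ => Finset.empty_subset x

theorem hasCube_or_hasCube_compl (S : Set (Finset (Fin 7))) :
    HasCube (· ≤ ·) S ∨ HasCube (· ≤ ·) Sᶜ := by
  wlog hbot : ∅ ∉ S generalizing S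
  · simpa [or_comm] using this Sᶜ (by simpa using hbot)
  by_contra! h
  have hatom (i) : {i} ∉ S := mt (singleton_mem_iff h.1 h.2 i).1 hbot
  by_cases htop : Finset.univ ∈ S
  · have hcoatom (i) : {i}ᶜ ∈ S := (compl_singleton_mem_iff h.1 h.2 i).2 htop
    exact (hasCube_or_hasCube_compl_of_levels hbot hatom hcoatom htop).elim h.1 h.2
  · have hcoatom (i) : {i}ᶜ ∉ S := mt (compl_singleton_mem_iff h.1 h.2 i).1 htop
    exact h.2 (hasCube_of_atoms_of_coatoms (Fin.castLEEmb (by lia)) hbot hatom hcoatom htop)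

end Upper

section Lower

/-- A 2-colouring of `𝒫(6)` without monochromatic cube, found by computer: the colour of `A` is bit
`code A` of this number. -/
def cubeFreeColouring : ℕ := 9133548068478620958

theorem not_hasCube_cubeFreeColouring (k : Bool) :
    ¬ HasCube (· ≤ ·) {A : Finset (Fin 6) | cubeFreeColouring.testBit (code A) = k} := by
  refine not_hasCube_of_cubeIn codeLE_code
    (l := (List.range (2 ^ 6)).filter (cubeFreeColouring.testBit · == k)) (fun A hA => ?_) ?_
  · simpa [code_lt] using ⟨code_lt A, hA⟩
  · revert k
    decide +kernel

end Lower

end PosetRamsey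

/-- The poset Ramsey number `R(𝒫(3), 𝒫(3))` equals `7`:
(a) every 2-colouring of `𝒫(7)` contains a monochromatic induced copy of `𝒫(3)`
(the image of an injective map `φ : 𝒫(3) → 𝒫(7)` with `φ x ⊆ φ y ↔ x ⊆ y`), and
(b) some 2-colouring of `𝒫(6)` admits no monochromatic induced copy of `𝒫(3)`. -/
theorem stmt19 :
    (∀ c : Finset (Fin 7) → Fin 2,
      ∃ φ : Finset (Fin 3) → Finset (Fin 7),
        Function.Injective φ ∧ (∀ x y, φ x ⊆ φ y ↔ x ⊆ y) ∧ ∃ k, ∀ x, c (φ x) = k) ∧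
    (∃ c : Finset (Fin 6) → Fin 2,
      ∀ φ : Finset (Fin 3) → Finset (Fin 6),
        Function.Injective φ → (∀ x y, φ x ⊆ φ y ↔ x ⊆ y) →
          ¬ ∃ k, ∀ x, c (φ x) = k) := by
  open PosetRamsey in
  refine ⟨fun c => ?_, fun A => finTwoEquiv.symm (cubeFreeColouring.testBit (code A)),
    fun φ _ hφ ⟨k, hk⟩ => not_hasCube_cubeFreeColouring (finTwoEquiv k) ?_⟩
  · obtain ⟨k, hk⟩ : ∃ k, HasCube (· ≤ ·) {A | c A = k} := by
      refine (hasCube_or_hasCube_compl {A | c A = 0}).elim (fun h => ⟨0, h⟩) fun h => ⟨1, h.mono ?_⟩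
      exact fun A hA => Fin.eq_one_of_ne_zero _ hA
    obtain ⟨φ, hφ⟩ := hasCube_iff_exists_orderEmbedding.1 hk
    exact ⟨φ, φ.injective, fun _ _ => φ.le_iff_le, k, hφ⟩
  · refine hasCube_iff_exists_orderEmbedding.2 ⟨OrderEmbedding.ofMapLEIff φ hφ, fun x => ?_⟩
    exact (Equiv.symm_apply_eq _).1 (hk x)
end
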